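/- In the setting of the energy-stable semi-implicit scheme: let κ > 0, ρ ≥ 0, q ∈ (2,4], e₀ > 0, and let c' > 0 be the stability constant (depending only on κ, ρ, e₀, q); let τ > 0 satisfy τ c' ≤ 1/2 and let (u^k)_{k=0,…,K} be C² periodic curves ℝ/ℤ → ℝ³ with |(u⁰)'| ≡ 1 and E(u⁰) ≤ e₀ satisfying (i) (d_t u^k)'·(u^{k−1})' = 0 pointwise and (ii) the weak scheme equation (d_t u^k, w)_{H²} + κ ∫ (u^k)''·w'' = −ρ δTP(u^{k−1})[w] for all C² periodic w with w'·(u^{k−1})' = 0. Then the iterates remain close to arclength parametrization: max_{k=0,…,K} ‖ |(u^k)'|² − 1 ‖_{L^∞} ≤ 4 τ c_∞² e₀, where c_∞ is the constant in the Sobolev inequality ‖w'‖_{L^∞} ≤ c_∞ ‖w''‖_{L²} for C² periodic w. -/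

import Mathlib

open MeasureTheory Set Filter
open scoped RealInnerProductSpace ENNReal Topology

noncomputable section

/-- The distance on the circle `ℝ/ℤ` between the points represented by `x` and `y`. -/
def circDist (x y : ℝ) : ℝ := ‖((x - y : ℝ) : AddCircle (1 : ℝ))‖

/-- The representative of `z` modulo `1` lying in `(-1/2, 1/2]`. -/
def wrap (z : ℝ) : ℝ := 1 / 2 - Int.fract (1 / 2 - z)

/-- Squared wedge norm `|a ∧ b|² = |a|²|b|² - ⟨a,b⟩²`. -/
def wedgeSq {n : ℕ} (a b : EuclideanSpace ℝ (Fin n)) : ℝ :=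
  ‖a‖ ^ 2 * ‖b‖ ^ 2 - ⟪a, b⟫ ^ 2

/-- Wedge inner product `⟨a∧b, c∧d⟩ = ⟨a,c⟩⟨b,d⟩ - ⟨a,d⟩⟨b,c⟩`. -/
def wedgeInner {n : ℕ} (a b c d : EuclideanSpace ℝ (Fin n)) : ℝ :=
  ⟪a, c⟫ * ⟪b, d⟫ - ⟪a, d⟫ * ⟪b, c⟫

/-- Fundamental domain for double integrals over `(ℝ/ℤ)²`. -/
def unitSq : Set (ℝ × ℝ) := Ioc (0 : ℝ) 1 ×ˢ Ioc (0 : ℝ) 1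

/-- The tangent-point functional `TP` (extended-real-valued). -/
def TPe {n : ℕ} (q : ℝ) (u : ℝ → EuclideanSpace ℝ (Fin n)) : ℝ≥0∞ :=
  ENNReal.ofReal (1 / q) *
    ∫⁻ p in unitSq, ENNReal.ofReal
      (wedgeSq (deriv u p.2) (u p.1 - u p.2) ^ (q / 2) / ‖u p.1 - u p.2‖ ^ (2 * q))

/-- The tangent-point functional `TP` (real-valued). -/
def TPr {n : ℕ} (q : ℝ) (u : ℝ → EuclideanSpace ℝ (Fin n)) : ℝ := (TPe q u).toReal

/-- The `q`-th power of the Sobolev–Slobodeckii seminorm `[f]_{W^{s,q}}` on `ℝ/ℤ`. -/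
def sobSemPow {n : ℕ} (s q : ℝ) (f : ℝ → EuclideanSpace ℝ (Fin n)) : ℝ≥0∞ :=
  ∫⁻ p in unitSq, ENNReal.ofReal (‖f p.1 - f p.2‖ ^ q / circDist p.1 p.2 ^ (1 + s * q))

/-- The `W^{s,q}`-norm `‖f‖_{L^q} + [f]_{W^{s,q}}`. -/
def Wnorm {n : ℕ} (s q : ℝ) (f : ℝ → EuclideanSpace ℝ (Fin n)) : ℝ :=
  (∫ x in Ioc (0 : ℝ) 1, ‖f x‖ ^ q) ^ (1 / q) + (sobSemPow s q f).toReal ^ (1 / q)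

/-- The bi-Lipschitz constant `bil(u) = sup_{x ≢ y} |x-y|_{ℝ/ℤ}/|u(x)-u(y)|`. -/
def bil {n : ℕ} (u : ℝ → EuclideanSpace ℝ (Fin n)) : ℝ≥0∞ :=
  ⨆ (x : ℝ) (y : ℝ) (_ : circDist x y ≠ 0),
    ENNReal.ofReal (circDist x y) / ENNReal.ofReal ‖u x - u y‖

/-- The `L^∞`-norm of the derivative of `u`. -/
def linfD {n : ℕ} (u : ℝ → EuclideanSpace ℝ (Fin n)) : ℝ≥0∞ :=
  ⨆ x : ℝ, (‖deriv u x‖₊ : ℝ≥0∞)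

/-- A periodic curve is embedded if it is injective on the circle `ℝ/ℤ`. -/
def Embedded {n : ℕ} (u : ℝ → EuclideanSpace ℝ (Fin n)) : Prop :=
  ∀ x y : ℝ, u x = u y → ((x : AddCircle (1 : ℝ)) = (y : AddCircle (1 : ℝ)))

/-- A curve is regular if `min_{ℝ/ℤ} |u'| > 0`. -/
def Regular {n : ℕ} (u : ℝ → EuclideanSpace ℝ (Fin n)) : Prop :=
  0 < ⨅ x : ℝ, ‖deriv u x‖

/-- Orthogonal projection of `b` onto the orthogonal complement of `ℝ a`. -/
def projPerp {n : ℕ} (a b : EuclideanSpace ℝ (Fin n)) : EuclideanSpace ℝ (Fin n) :=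
  b - (⟪b, a⟫ / ‖a‖ ^ 2) • a

/-- The classical tangent-point functional (extended-real-valued). -/
def TPcle {n : ℕ} (q : ℝ) (u : ℝ → EuclideanSpace ℝ (Fin n)) : ℝ≥0∞ :=
  ENNReal.ofReal (1 / q) *
    ∫⁻ p in unitSq, ENNReal.ofReal
      (‖projPerp (deriv u p.2) (u p.1 - u p.2)‖ ^ q / ‖u p.1 - u p.2‖ ^ (2 * q) *
        (‖deriv u p.1‖ * ‖deriv u p.2‖))

/-- The integrand of the functional `M(u; v, w)`. -/
def Mintegrand {n : ℕ} (q : ℝ) (u v w : ℝ → EuclideanSpace ℝ (Fin n)) (p : ℝ × ℝ) : ℝ :=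
  wedgeSq (deriv u p.2) (u p.1 - u p.2) ^ ((q - 2) / 2) / ‖u p.1 - u p.2‖ ^ (2 * q) *
    wedgeInner (deriv u p.2) (u p.1 - u p.2) (deriv v p.2)
      (w p.1 - w p.2 - wrap (p.1 - p.2) • deriv w p.2)

/-- The functional `M(u; v, w)` appearing in the first variation of `TP`. -/
def Mfun {n : ℕ} (q : ℝ) (u v w : ℝ → EuclideanSpace ℝ (Fin n)) : ℝ :=
  ∫ p in unitSq, Mintegrand q u v w p

/-- The integrand of the functional `A(u; v, w)`. -/
def Aintegrand {n : ℕ} (q : ℝ) (u v w : ℝ → EuclideanSpace ℝ (Fin n)) (p : ℝ × ℝ) : ℝ :=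
  wedgeSq (deriv u p.2) (u p.1 - u p.2) ^ (q / 2) / ‖u p.1 - u p.2‖ ^ (2 * q + 2) *
    ⟪v p.1 - v p.2, w p.1 - w p.2⟫

/-- The functional `A(u; v, w)` appearing in the first variation of `TP`. -/
def Afun {n : ℕ} (q : ℝ) (u v w : ℝ → EuclideanSpace ℝ (Fin n)) : ℝ :=
  ∫ p in unitSq, Aintegrand q u v w p

/-- The first variation `δTP(u)[w] = M(u;u,w) + M(u;w,u) - 2A(u;u,w)`. -/
def deltaTP {n : ℕ} (q : ℝ) (u w : ℝ → EuclideanSpace ℝ (Fin n)) : ℝ :=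
  Mfun q u u w + Mfun q u w u - 2 * Afun q u u w

/-- The `H²` inner product on periodic curves. -/
def H2inner (v w : ℝ → EuclideanSpace ℝ (Fin 3)) : ℝ :=
  ∫ x in Ioc (0 : ℝ) 1,
    (⟪v x, w x⟫ + ⟪deriv v x, deriv w x⟫ + ⟪deriv (deriv v) x, deriv (deriv w) x⟫)

/-- The total energy `E(u) = (κ/2)∫|u''|² + ρ TP(u)`. -/
def energyE (κ ρ q : ℝ) (u : ℝ → EuclideanSpace ℝ (Fin 3)) : ℝ :=
  κ / 2 * (∫ x in Ioc (0 : ℝ) 1, ‖deriv (deriv u) x‖ ^ 2) + ρ * TPr q u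


/-!
Orthogonality of `v' = (d_t u^k)'` and `(u^{k-1})'` gives the Pythagorean identity
`|(u^k)'|² = |(u^{k-1})'|² + τ² |v'|²`. Summing it, `|(u^k)'|² - 1` is nonnegative and at most
`τ² c² ∑ ‖v''‖²`, and the sum is controlled by the dissipation of energy `τ/2 ∑ ‖v‖² + E ≤ e₀`.

To dissipate energy, a step needs a second-order Taylor bound for `TP` at the previous curve. On
curves with bounded bending energy and a bi-Lipschitz constant bounded below, the tangent-point
density and its expansion are dominated by the fourth power of the mean of `|u''|` over the segment
from `y` to `x`, which is integrable; this is where `q ≤ 4` enters. The bi-Lipschitz bound follows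
from the energy: near a shortest chord, which is orthogonal to the curve at its ends, the
tangent-point density is large when the chord is short, because `q > 2`.

A curve of finite energy and unit speed need not be embedded, but then it is multiply covered. In
that case the integrands of the first variation have nonintegrable poles along the diagonals
`x - y = a` for generic admissible fields, the Bochner integrals are zero, and as the left-hand side
of the scheme is linear in the test field it vanishes for every admissible field. Such a step
preserves the period and decreases the bending energy alone.
-/

/-- The ambient space of the curves. -/
abbrev E3 := EuclideanSpace ℝ (Fin 3)

/-- `C²` curves on the circle `ℝ/ℤ`, encoded as `1`-periodic functions on `ℝ`. -/
structure C2Periodic {F : Type*} [NormedAddCommGroup F] [NormedSpace ℝ F] (u : ℝ → F) : Prop where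
  smooth : ContDiff ℝ 2 u
  periodic : Function.Periodic u 1

/-- The bending energy `∫ ‖u''‖²` of a curve on `ℝ/ℤ`, without the customary factor `1/2`. -/
def bendEnergy {F : Type*} [NormedAddCommGroup F] [NormedSpace ℝ F] (u : ℝ → F) : ℝ :=
  ∫ x in Ioc (0 : ℝ) 1, ‖deriv (deriv u) x‖ ^ 2

section Periodic

variable {F : Type*} [NormedAddCommGroup F] [NormedSpace ℝ F]

lemma periodic_deriv {u : ℝ → F} {a : ℝ} (h : Function.Periodic u a) :
    Function.Periodic (deriv u) a := fun x => by
  rw [← deriv_comp_add_const, h.funext]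

lemma setLIntegral_Ioc_periodic {g : ℝ → ℝ≥0∞} (hg : Function.Periodic g 1) (a b : ℝ) :
    ∫⁻ x in Ioc a (a + 1), g x = ∫⁻ x in Ioc b (b + 1), g x := by
  refine (isAddFundamentalDomain_Ioc one_pos a).setLIntegral_eq
    (isAddFundamentalDomain_Ioc one_pos b) g ?_
  rintro ⟨_, ⟨n, rfl⟩⟩ x
  have hgn : g (x + n * 1) = g x := hg.int_mul n x
  simpa [AddSubgroup.vadd_def, add_comm] using hgn

lemma setIntegral_Ioc_comp_add_right {g : ℝ → F} (hg : Function.Periodic g 1) (a : ℝ) :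
    ∫ x in Ioc (0 : ℝ) 1, g (x + a) = ∫ x in Ioc (0 : ℝ) 1, g x := by
  rw [← intervalIntegral.integral_of_le zero_le_one, ← intervalIntegral.integral_of_le zero_le_one,
    intervalIntegral.integral_comp_add_right, add_comm 1 a, zero_add,
    hg.intervalIntegral_add_eq a 0, zero_add]

lemma setLIntegral_Ioc_add_right (g : ℝ → ℝ≥0∞) (a b y : ℝ) :
    ∫⁻ x in Ioc (a + y) (b + y), g x = ∫⁻ h in Ioc a b, g (y + h) := by
  have hpre : (fun h => y + h) ⁻¹' Ioc (a + y) (b + y) = Ioc a b := by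
    simp [preimage_const_add_Ioc]
  rw [← hpre]
  exact ((measurePreserving_add_left volume y).setLIntegral_comp_preimage_emb
    (measurableEmbedding_addLeft y) g _).symm

lemma setLIntegral_unitSq {G : ℝ × ℝ → ℝ≥0∞} (hG : Measurable G)
    (h1 : ∀ x y, G (x + 1, y) = G (x, y)) (h2 : ∀ x y, G (x, y + 1) = G (x, y)) (b c : ℝ) :
    ∫⁻ p in unitSq, G p = ∫⁻ y in Ioc b (b + 1), ∫⁻ h in Ioc c (c + 1), G (y + h, y) := by
  have inner_eq : ∀ y : ℝ,
      ∫⁻ x in Ioc (0 : ℝ) 1, G (x, y) = ∫⁻ h in Ioc c (c + 1), G (y + h, y) := fun y => by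
    have := setLIntegral_Ioc_periodic (g := fun x => G (x, y)) (fun x => h1 x y) 0 (c + y)
    rw [zero_add, add_right_comm] at this
    rw [this, setLIntegral_Ioc_add_right (fun x => G (x, y))]
  have outer_eq := setLIntegral_Ioc_periodic
    (g := fun y => ∫⁻ x in Ioc (0 : ℝ) 1, G (x, y)) (fun y => by simp only [h2]) 0 b
  rw [zero_add] at outer_eq
  rw [unitSq, Measure.volume_eq_prod, ← Measure.prod_restrict,
    lintegral_prod_symm _ hG.aemeasurable, outer_eq]
  exact lintegral_congr inner_eq

end Periodic

section Wrap

lemma wrap_mem_Ioc (z : ℝ) : wrap z ∈ Ioc (-(1 / 2) : ℝ) (1 / 2) := by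
  have := Int.fract_nonneg (1 / 2 - z)
  have := Int.fract_lt_one (1 / 2 - z)
  constructor <;> unfold wrap <;> linarith

lemma abs_wrap_le (z : ℝ) : |wrap z| ≤ 1 / 2 :=
  abs_le.2 ⟨(wrap_mem_Ioc z).1.le, (wrap_mem_Ioc z).2⟩

lemma exists_wrap_eq_add (z : ℝ) : ∃ n : ℤ, wrap z = z + n :=
  ⟨⌊1 / 2 - z⌋, by unfold wrap; rw [Int.fract]; ring⟩

lemma wrap_of_mem_Ioc {z : ℝ} (hz : z ∈ Ioc (-(1 / 2) : ℝ) (1 / 2)) : wrap z = z := by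
  rw [wrap, Int.fract_eq_self.2 ⟨by linarith [hz.2], by linarith [hz.1]⟩, sub_sub_cancel]

lemma wrap_add_one (z : ℝ) : wrap (z + 1) = wrap z := by
  rw [wrap, ← sub_sub, Int.fract_sub_one, wrap]

lemma wrap_sub_one (z : ℝ) : wrap (z - 1) = wrap z := by
  rw [← wrap_add_one, sub_add_cancel]

lemma measurable_wrap : Measurable wrap :=
  measurable_const.sub (measurable_fract.comp (measurable_const.sub measurable_id))

end Wrap

lemma sq_intervalIntegral_le {f : ℝ → ℝ} {a b : ℝ} (hab : a ≤ b)
    (hf : IntervalIntegrable f volume a b)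
    (hf2 : IntervalIntegrable (fun t => f t ^ 2) volume a b) :
    (∫ t in a..b, f t) ^ 2 ≤ (b - a) * ∫ t in a..b, f t ^ 2 := by
  rcases hab.eq_or_lt with rfl | hlt
  · simp
  have hba : 0 < b - a := sub_pos.2 hlt
  have jensen := (even_two.convexOn_pow (𝕜 := ℝ)).map_set_average_le (μ := volume) (t := Ioc a b)
    (f := f) (continuous_pow 2).continuousOn isClosed_univ (by simpa using hlt) (by simp)
    (by simp) ((intervalIntegrable_iff_integrableOn_Ioc_of_le hab).1 hf)
    ((intervalIntegrable_iff_integrableOn_Ioc_of_le hab).1 hf2)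
  rw [← uIoc_of_le hab, interval_average_eq_div, interval_average_eq_div, div_pow,
    div_le_div_iff₀ (by positivity) hba] at jensen
  nlinarith

section Curves

variable {F : Type*} [NormedAddCommGroup F] [NormedSpace ℝ F] {u v : ℝ → F}

lemma bendEnergy_nonneg (u : ℝ → F) : 0 ≤ bendEnergy u := by unfold bendEnergy; positivity

namespace C2Periodic

lemma contDiff_deriv (hu : C2Periodic u) : ContDiff ℝ 1 (deriv u) := by
  have h : ContDiff ℝ (1 + 1) u := hu.smooth
  exact (contDiff_succ_iff_deriv.1 h).2.2

lemma hasDerivAt (hu : C2Periodic u) (x : ℝ) : HasDerivAt u (deriv u x) x :=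
  (hu.smooth.differentiable (by norm_num) x).hasDerivAt

lemma hasDerivAt_deriv (hu : C2Periodic u) (x : ℝ) :
    HasDerivAt (deriv u) (deriv (deriv u) x) x :=
  (hu.contDiff_deriv.differentiable (by norm_num) x).hasDerivAt

lemma continuous (hu : C2Periodic u) : Continuous u := hu.smooth.continuous

lemma continuous_deriv (hu : C2Periodic u) : Continuous (deriv u) := hu.contDiff_deriv.continuous

lemma continuous_deriv_deriv (hu : C2Periodic u) : Continuous (deriv (deriv u)) :=
  hu.contDiff_deriv.continuous_deriv (by norm_num)

lemma intervalIntegrable_norm_deriv_deriv (hu : C2Periodic u) (a b : ℝ) :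
    IntervalIntegrable (fun t => ‖deriv (deriv u) t‖) volume a b :=
  hu.continuous_deriv_deriv.norm.intervalIntegrable a b

lemma intervalIntegrable_norm_deriv_deriv_sq (hu : C2Periodic u) (a b : ℝ) :
    IntervalIntegrable (fun t => ‖deriv (deriv u) t‖ ^ 2) volume a b :=
  (hu.continuous_deriv_deriv.norm.pow 2).intervalIntegrable a b

lemma periodic_deriv (hu : C2Periodic u) : Function.Periodic (deriv u) 1 :=
  _root_.periodic_deriv hu.periodic

lemma periodic_deriv_deriv (hu : C2Periodic u) : Function.Periodic (deriv (deriv u)) 1 :=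
  _root_.periodic_deriv hu.periodic_deriv

lemma add (hu : C2Periodic u) (hv : C2Periodic v) : C2Periodic (fun t => u t + v t) :=
  ⟨hu.smooth.add hv.smooth, hu.periodic.add hv.periodic⟩

lemma sub (hu : C2Periodic u) (hv : C2Periodic v) : C2Periodic (fun t => u t - v t) :=
  ⟨hu.smooth.sub hv.smooth, hu.periodic.sub hv.periodic⟩

lemma smul (hu : C2Periodic u) (c : ℝ) : C2Periodic (fun t => c • u t) :=
  ⟨hu.smooth.const_smul c, hu.periodic.smul c⟩

lemma shift (hu : C2Periodic u) (a : ℝ) : C2Periodic (fun t => u (t + a)) :=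
  ⟨hu.smooth.comp (contDiff_id.add contDiff_const), hu.periodic.add_const a⟩

lemma deriv_add (hu : C2Periodic u) (hv : C2Periodic v) :
    deriv (fun t => u t + v t) = fun t => deriv u t + deriv v t :=
  funext fun x => ((hu.hasDerivAt x).add (hv.hasDerivAt x)).deriv

lemma deriv_deriv_add (hu : C2Periodic u) (hv : C2Periodic v) :
    deriv (deriv (fun t => u t + v t)) = fun t => deriv (deriv u) t + deriv (deriv v) t := by
  rw [hu.deriv_add hv]
  exact funext fun x => ((hu.hasDerivAt_deriv x).add (hv.hasDerivAt_deriv x)).deriv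

lemma deriv_sub (hu : C2Periodic u) (hv : C2Periodic v) :
    deriv (fun t => u t - v t) = fun t => deriv u t - deriv v t :=
  funext fun x => ((hu.hasDerivAt x).sub (hv.hasDerivAt x)).deriv

lemma deriv_deriv_sub (hu : C2Periodic u) (hv : C2Periodic v) :
    deriv (deriv (fun t => u t - v t)) = fun t => deriv (deriv u) t - deriv (deriv v) t := by
  rw [hu.deriv_sub hv]
  exact funext fun x => ((hu.hasDerivAt_deriv x).sub (hv.hasDerivAt_deriv x)).deriv

lemma deriv_smul (hu : C2Periodic u) (c : ℝ) :
    deriv (fun t => c • u t) = fun t => c • deriv u t :=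
  funext fun x => ((hu.hasDerivAt x).const_smul c).deriv

lemma deriv_deriv_smul (hu : C2Periodic u) (c : ℝ) :
    deriv (deriv (fun t => c • u t)) = fun t => c • deriv (deriv u) t := by
  rw [hu.deriv_smul c]
  exact funext fun x => ((hu.hasDerivAt_deriv x).const_smul c).deriv

lemma sub_eq_wrap (hu : C2Periodic u) (x y : ℝ) : u x - u y = u (y + wrap (x - y)) - u y := by
  obtain ⟨n, hn⟩ := exists_wrap_eq_add (x - y)
  rw [hn, show y + (x - y + n) = x + n * 1 by ring, hu.periodic.int_mul n x]

lemma intervalIntegral_norm_deriv_deriv_sq (hu : C2Periodic u) (a : ℝ) :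
    ∫ t in a..(a + 1), ‖deriv (deriv u) t‖ ^ 2 = bendEnergy u := by
  have hp : Function.Periodic (fun t => ‖deriv (deriv u) t‖ ^ 2) 1 := fun x => by
    simp only [hu.periodic_deriv_deriv x]
  rw [hp.intervalIntegral_add_eq a 0, zero_add, intervalIntegral.integral_of_le zero_le_one,
    bendEnergy]

lemma sq_integral_norm_deriv_deriv_le (hu : C2Periodic u) {a b : ℝ} (hab : a ≤ b)
    (hb : b ≤ a + 1) :
    (∫ t in a..b, ‖deriv (deriv u) t‖) ^ 2 ≤ (b - a) * bendEnergy u := by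
  refine (sq_intervalIntegral_le hab (hu.intervalIntegrable_norm_deriv_deriv a b)
    (hu.intervalIntegrable_norm_deriv_deriv_sq a b)).trans
    (mul_le_mul_of_nonneg_left ?_ (sub_nonneg.2 hab))
  rw [← hu.intervalIntegral_norm_deriv_deriv_sq a]
  exact intervalIntegral.integral_mono_interval le_rfl hab hb
    (Eventually.of_forall fun t => sq_nonneg _) (hu.intervalIntegrable_norm_deriv_deriv_sq _ _)

lemma abs_integral_norm_deriv_deriv_le (hu : C2Periodic u) {x y : ℝ} (h : |x - y| ≤ 1) :
    |∫ t in y..x, ‖deriv (deriv u) t‖| ≤ √(|x - y| * bendEnergy u) := by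
  refine Real.abs_le_sqrt ?_
  rcases le_total y x with hxy | hxy
  · rw [abs_of_nonneg (sub_nonneg.2 hxy)] at h ⊢
    exact hu.sq_integral_norm_deriv_deriv_le hxy (by linarith)
  · rw [abs_of_nonpos (sub_nonpos.2 hxy)] at h ⊢
    rw [intervalIntegral.integral_symm, neg_sq, neg_sub]
    exact hu.sq_integral_norm_deriv_deriv_le hxy (by linarith)

lemma norm_sub_le (hu : C2Periodic u) {M : ℝ} (hM : ∀ x, ‖deriv u x‖ ≤ M) (x y : ℝ) :
    ‖u x - u y‖ ≤ M * |x - y| := by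
  simpa using convex_univ.norm_image_sub_le_of_norm_deriv_le
    (fun t _ => (hu.hasDerivAt t).differentiableAt) (fun t _ => hM t) (mem_univ y) (mem_univ x)

variable [CompleteSpace F]

lemma norm_deriv_sub_le (hu : C2Periodic u) (x y : ℝ) :
    ‖deriv u x - deriv u y‖ ≤ |∫ t in y..x, ‖deriv (deriv u) t‖| := by
  rw [← intervalIntegral.integral_eq_sub_of_hasDerivAt (fun x _ => hu.hasDerivAt_deriv x)
    (hu.continuous_deriv_deriv.intervalIntegrable _ _)]
  exact intervalIntegral.norm_integral_le_abs_integral_norm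

lemma norm_deriv_sub_le_of_mem (hu : C2Periodic u) {x y t : ℝ} (ht : t ∈ uIcc y x) :
    ‖deriv u t - deriv u y‖ ≤ |∫ s in y..x, ‖deriv (deriv u) s‖| :=
  (hu.norm_deriv_sub_le t y).trans <| intervalIntegral.abs_integral_mono_interval
    (uIoc_subset_uIoc_of_uIcc_subset_uIcc (uIcc_subset_uIcc_left ht))
    (Eventually.of_forall fun _ => norm_nonneg _) (hu.intervalIntegrable_norm_deriv_deriv _ _)

lemma norm_deriv_sub_le_sqrt (hu : C2Periodic u) {x y : ℝ} (h : |x - y| ≤ 1) :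
    ‖deriv u x - deriv u y‖ ≤ √(|x - y| * bendEnergy u) :=
  (hu.norm_deriv_sub_le x y).trans (hu.abs_integral_norm_deriv_deriv_le h)

lemma norm_taylor_remainder_le (hu : C2Periodic u) (y h : ℝ) :
    ‖u (y + h) - u y - h • deriv u y‖ ≤ |h| * |∫ t in y..(y + h), ‖deriv (deriv u) t‖| := by
  have remainder_eq :
      u (y + h) - u y - h • deriv u y = ∫ t in y..(y + h), (deriv u t - deriv u y) := by
    rw [intervalIntegral.integral_sub (hu.continuous_deriv.intervalIntegrable _ _) (by simp),
      intervalIntegral.integral_eq_sub_of_hasDerivAt (fun x _ => hu.hasDerivAt x)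
        (hu.continuous_deriv.intervalIntegrable _ _), intervalIntegral.integral_const,
      add_sub_cancel_left]
  have := intervalIntegral.norm_integral_le_of_norm_le_const (a := y) (b := y + h)
    (f := fun t => deriv u t - deriv u y)
    fun t ht => hu.norm_deriv_sub_le_of_mem (uIoc_subset_uIcc ht)
  rwa [add_sub_cancel_left, mul_comm, ← remainder_eq] at this

lemma norm_deriv_sq_le (hu : C2Periodic u) (x : ℝ) : ‖deriv u x‖ ^ 2 ≤ bendEnergy u := by
  have norm_le : ‖deriv u x‖ ≤ |∫ t in x..(x + 1), ‖deriv (deriv u) t‖| := by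
    simpa [hu.periodic x] using hu.norm_taylor_remainder_le x 1
  calc ‖deriv u x‖ ^ 2 ≤ |∫ t in x..(x + 1), ‖deriv (deriv u) t‖| ^ 2 := by gcongr
    _ ≤ (x + 1 - x) * bendEnergy u := by
      rw [sq_abs]
      exact hu.sq_integral_norm_deriv_deriv_le (by linarith) le_rfl
    _ = bendEnergy u := by rw [add_sub_cancel_left, one_mul]

end C2Periodic

end Curves

lemma sq_lintegral_mul_le {α : Type*} [MeasurableSpace α] (μ : Measure α) {f g : α → ℝ≥0∞}
    (hf : AEMeasurable f μ) (hg : AEMeasurable g μ) :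
    (∫⁻ t, f t * g t ∂μ) ^ 2 ≤ (∫⁻ t, f t ^ 2 ∂μ) * ∫⁻ t, g t ^ 2 ∂μ := by
  have sq_rpow_half (x : ℝ≥0∞) : (x ^ (1 / 2 : ℝ)) ^ 2 = x := by
    rw [← ENNReal.rpow_mul_natCast]; norm_num
  have holder := ENNReal.lintegral_mul_le_Lp_mul_Lq μ Real.HolderConjugate.two_two hf hg
  refine (pow_le_pow_left' holder 2).trans_eq ?_
  simp only [mul_pow, sq_rpow_half, ENNReal.rpow_ofNat]

section SegmentMean

lemma volume_restrict_unitSq :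
    (volume : Measure (ℝ × ℝ)).restrict unitSq =
      (volume.restrict (Ioc 0 1)).prod (volume.restrict (Ioc 0 1)) := by
  rw [unitSq, Measure.volume_eq_prod, Measure.prod_restrict]

lemma integral_abs_rpow_neg_half : ∫ t in (0 : ℝ)..1, |t| ^ (-(1 / 2) : ℝ) = 2 := by
  have h : ∫ t in (0 : ℝ)..1, |t| ^ (-(1 / 2) : ℝ) = ∫ t in (0 : ℝ)..1, t ^ (-(1 / 2) : ℝ) :=
    intervalIntegral.integral_congr fun t ht => by
      rw [uIcc_of_le zero_le_one] at ht
      simp only [abs_of_nonneg ht.1]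
  rw [h, integral_rpow (Or.inl (by norm_num))]
  norm_num

lemma lintegral_Ioc_abs_rpow_neg_half :
    ∫⁻ t in Ioc (-1 : ℝ) 1, ENNReal.ofReal (|t| ^ (-(1 / 2) : ℝ)) = 4 := by
  have right : IntervalIntegrable (fun t : ℝ => |t| ^ (-(1 / 2) : ℝ)) volume 0 1 :=
    intervalIntegral.intervalIntegrable_of_integral_ne_zero
      (integral_abs_rpow_neg_half.trans_ne two_ne_zero)
  have left : IntervalIntegrable (fun t : ℝ => |t| ^ (-(1 / 2) : ℝ)) volume (-1) 0 := by
    simpa using ((IntervalIntegrable.iff_comp_neg).1 right).symm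
  have left_eq : ∫ t in (-1 : ℝ)..0, |t| ^ (-(1 / 2) : ℝ) = 2 := by
    have := intervalIntegral.integral_comp_neg (a := 0) (b := 1) fun t : ℝ => |t| ^ (-(1 / 2) : ℝ)
    simp only [abs_neg, neg_zero] at this
    rw [← this, integral_abs_rpow_neg_half]
  rw [← ofReal_integral_eq_lintegral_ofReal
      ((intervalIntegrable_iff_integrableOn_Ioc_of_le (by norm_num)).1 (left.trans right))
      (Eventually.of_forall fun t => by positivity),
    ← intervalIntegral.integral_of_le (by norm_num),
    ← intervalIntegral.integral_add_adjacent_intervals left right, left_eq,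
    integral_abs_rpow_neg_half]
  norm_num

lemma lintegral_abs_sub_rpow_neg_half_le :
    ∫⁻ r in unitSq, ENNReal.ofReal (|r.1 - r.2| ^ (-(1 / 2) : ℝ)) ≤ 4 := by
  rw [volume_restrict_unitSq, lintegral_prod_symm _ (by fun_prop)]
  have inner_le (s : ℝ) (hs : s ∈ Ioc (0 : ℝ) 1) :
      ∫⁻ t in Ioc (0 : ℝ) 1, ENNReal.ofReal (|t - s| ^ (-(1 / 2) : ℝ)) ≤ 4 := by
    refine (lintegral_mono_set (Ioc_subset_Ioc (by linarith [hs.2] : -1 + s ≤ 0)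
      (by linarith [hs.1] : 1 ≤ 1 + s))).trans_eq ?_
    rw [setLIntegral_Ioc_add_right, ← lintegral_Ioc_abs_rpow_neg_half]
    simp only [add_sub_cancel_left]
  refine (setLIntegral_mono' measurableSet_Ioc inner_le).trans ?_
  simp

lemma lintegral_comp_mul_left {g : ℝ → ℝ≥0∞} (hg : Measurable g) {c : ℝ} (hc : c ≠ 0) :
    ∫⁻ h, g (c * h) = ENNReal.ofReal |c|⁻¹ * ∫⁻ t, g t := by
  rw [← lintegral_map hg (measurable_const_mul c), Real.map_volume_mul_left hc, abs_inv,
    lintegral_smul_measure, smul_eq_mul]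

lemma lintegral_mul_comp_segment {g : ℝ → ℝ≥0∞} (hg : Measurable g) {s t : ℝ} (hst : s ≠ t) :
    ∫⁻ p : ℝ × ℝ, g (p.1 + s * p.2) * g (p.1 + t * p.2) =
      ENNReal.ofReal |s - t|⁻¹ * (∫⁻ x, g x) ^ 2 := by
  have translate (h : ℝ) : ∫⁻ y, g (y + s * h) * g (y + t * h) =
      ∫⁻ y, g y * g (y + (t - s) * h) := by
    rw [← lintegral_add_right_eq_self (fun y => g y * g (y + (t - s) * h)) (s * h)]
    simp only [add_assoc, ← add_mul, add_sub_cancel]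
  have dilate (y : ℝ) : ∫⁻ h, g y * g (y + (t - s) * h) =
      g y * (ENNReal.ofReal |s - t|⁻¹ * ∫⁻ x, g x) := by
    rw [lintegral_const_mul _ (by fun_prop),
      lintegral_comp_mul_left (g := fun x => g (y + x)) (by fun_prop) (sub_ne_zero.2 hst.symm),
      lintegral_add_left_eq_self g y, abs_sub_comm]
  rw [Measure.volume_eq_prod, lintegral_prod_symm _ (by fun_prop)]
  simp only [translate]
  rw [lintegral_lintegral_swap (by fun_prop)]
  simp only [dilate]
  rw [lintegral_mul_const _ hg]
  ring

lemma ae_fst_ne_snd : ∀ᵐ r ∂volume.restrict unitSq, r.1 ≠ r.2 := by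
  rw [volume_restrict_unitSq]
  refine (Measure.ae_prod_iff_ae_ae (measurableSet_eq_fun measurable_fst measurable_snd).compl).2
    (Eventually.of_forall fun s => ?_)
  exact ae_restrict_of_ae (by simp [ae_iff])

lemma lintegral_segment_pow_four_le {f : ℝ → ℝ≥0∞} (hf : Measurable f) (y h : ℝ) :
    (∫⁻ s in Ioc (0 : ℝ) 1, f (y + s * h)) ^ 4 ≤
      4 * ∫⁻ r in unitSq, ENNReal.ofReal (|r.1 - r.2| ^ (1 / 2 : ℝ)) *
        (f (y + r.1 * h) ^ 2 * f (y + r.2 * h) ^ 2) := by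
  have sq_ofReal_rpow (x : ℝ) (p : ℝ) :
      ENNReal.ofReal (|x| ^ p) ^ 2 = ENNReal.ofReal (|x| ^ (p * 2)) := by
    rw [← ENNReal.ofReal_pow (by positivity), ← Real.rpow_mul_natCast (abs_nonneg x)]
    norm_num
  have sq_eq : (∫⁻ s in Ioc (0 : ℝ) 1, f (y + s * h)) ^ 2 =
      ∫⁻ r in unitSq, ENNReal.ofReal (|r.1 - r.2| ^ (-(1 / 4) : ℝ)) *
        (ENNReal.ofReal (|r.1 - r.2| ^ (1 / 4 : ℝ)) * (f (y + r.1 * h) * f (y + r.2 * h))) := by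
    rw [sq, ← lintegral_prod_mul (by fun_prop) (by fun_prop), ← volume_restrict_unitSq]
    refine lintegral_congr_ae (ae_fst_ne_snd.mono fun r hr => ?_)
    have : 0 < |r.1 - r.2| := abs_pos.2 (sub_ne_zero.2 hr)
    simp only
    rw [← mul_assoc, ← ENNReal.ofReal_mul (by positivity), ← Real.rpow_add this]
    norm_num
  calc (∫⁻ s in Ioc (0 : ℝ) 1, f (y + s * h)) ^ 4 =
        ((∫⁻ s in Ioc (0 : ℝ) 1, f (y + s * h)) ^ 2) ^ 2 := by ring
    _ ≤ (∫⁻ r in unitSq, ENNReal.ofReal (|r.1 - r.2| ^ (-(1 / 4) : ℝ)) ^ 2) * _ := by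
      rw [sq_eq]
      exact sq_lintegral_mul_le _ (by fun_prop) (by fun_prop)
    _ ≤ _ := by
      simp only [mul_pow, sq_ofReal_rpow]
      norm_num
      gcongr
      simpa using lintegral_abs_sub_rpow_neg_half_le

-- Cauchy–Schwarz with the weight `|s - t| ^ (1/2)` on pairs of points of a segment.
theorem lintegral_lintegral_segment_pow_four_le {f : ℝ → ℝ≥0∞} (hf : Measurable f) :
    ∫⁻ p : ℝ × ℝ, (∫⁻ s in Ioc (0 : ℝ) 1, f (p.1 + s * p.2)) ^ 4 ≤
      16 * (∫⁻ x, f x ^ 2) ^ 2 := by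
  have inner_eq (r : ℝ × ℝ) (hr : r.1 ≠ r.2) :
      ∫⁻ p : ℝ × ℝ, ENNReal.ofReal (|r.1 - r.2| ^ (1 / 2 : ℝ)) *
        (f (p.1 + r.1 * p.2) ^ 2 * f (p.1 + r.2 * p.2) ^ 2) =
      ENNReal.ofReal (|r.1 - r.2| ^ (-(1 / 2) : ℝ)) * (∫⁻ x, f x ^ 2) ^ 2 := by
    have hpos : 0 < |r.1 - r.2| := abs_pos.2 (sub_ne_zero.2 hr)
    rw [lintegral_const_mul _ (by fun_prop),
      lintegral_mul_comp_segment (g := fun x => f x ^ 2) (by fun_prop) hr, ← mul_assoc,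
      ← ENNReal.ofReal_mul (by positivity), ← Real.rpow_neg_one, ← Real.rpow_add hpos]
    norm_num
  calc _ ≤ ∫⁻ p : ℝ × ℝ, 4 * ∫⁻ r in unitSq, ENNReal.ofReal (|r.1 - r.2| ^ (1 / 2 : ℝ)) *
        (f (p.1 + r.1 * p.2) ^ 2 * f (p.1 + r.2 * p.2) ^ 2) :=
        lintegral_mono fun p => lintegral_segment_pow_four_le hf p.1 p.2
    _ = 4 * ∫⁻ r in unitSq, ENNReal.ofReal (|r.1 - r.2| ^ (-(1 / 2) : ℝ)) *
        (∫⁻ x, f x ^ 2) ^ 2 := by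
        rw [lintegral_const_mul' _ _ (by simp), lintegral_lintegral_swap (by fun_prop)]
        exact congrArg _ (lintegral_congr_ae (ae_fst_ne_snd.mono inner_eq))
    _ ≤ 4 * (4 * (∫⁻ x, f x ^ 2) ^ 2) := by
        rw [lintegral_mul_const _ (by fun_prop)]
        gcongr
        exact lintegral_abs_sub_rpow_neg_half_le
    _ = _ := by rw [← mul_assoc]; norm_num

end SegmentMean

section CurvatureMean

variable {F : Type*} [NormedAddCommGroup F] [NormedSpace ℝ F] {u : ℝ → F}

/-- The mean of `‖u''‖` over the segment from `y` to `y + h`. -/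
def curvatureMean (u : ℝ → F) (y h : ℝ) : ℝ :=
  ∫ s in (0 : ℝ)..1, ‖deriv (deriv u) (y + s * h)‖

lemma curvatureMean_nonneg (u : ℝ → F) (y h : ℝ) : 0 ≤ curvatureMean u y h :=
  intervalIntegral.integral_nonneg zero_le_one fun _ _ => norm_nonneg _

lemma abs_intervalIntegral_norm_deriv_deriv (u : ℝ → F) (y h : ℝ) :
    |∫ t in y..(y + h), ‖deriv (deriv u) t‖| = |h| * curvatureMean u y h := by
  rw [← abs_of_nonneg (curvatureMean_nonneg u y h), ← abs_mul, curvatureMean]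
  simp only [mul_comm _ h]
  rw [intervalIntegral.mul_integral_comp_add_mul (f := fun t => ‖deriv (deriv u) t‖), mul_zero,
    mul_one, add_zero]

namespace C2Periodic

lemma norm_taylor_remainder_le_curvatureMean [CompleteSpace F] (hu : C2Periodic u) (y h : ℝ) :
    ‖u (y + h) - u y - h • deriv u y‖ ≤ h ^ 2 * curvatureMean u y h := by
  have := hu.norm_taylor_remainder_le y h
  rwa [abs_intervalIntegral_norm_deriv_deriv, ← mul_assoc, abs_mul_abs_self, ← sq] at this

lemma curvatureMean_add_one (hu : C2Periodic u) (y h : ℝ) :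
    curvatureMean u (y + 1) h = curvatureMean u y h := by
  simp only [curvatureMean, add_right_comm y 1, hu.periodic_deriv_deriv _]

lemma continuous_curvatureMean (hu : C2Periodic u) :
    Continuous fun p : ℝ × ℝ => curvatureMean u p.1 p.2 := by
  refine intervalIntegral.continuous_parametric_intervalIntegral_of_continuous' ?_ 0 1
  have := hu.continuous_deriv_deriv
  simp only [Function.uncurry_def]
  fun_prop

lemma measurable_curvatureMean_wrap (hu : C2Periodic u) :
    Measurable fun p : ℝ × ℝ => curvatureMean u p.2 (wrap (p.1 - p.2)) :=
  hu.continuous_curvatureMean.measurable.comp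
    (measurable_snd.prodMk (measurable_wrap.comp (measurable_fst.sub measurable_snd)))

lemma lintegral_enorm_deriv_deriv_sq (hu : C2Periodic u) :
    ∫⁻ t in Ioc (-1 : ℝ) 2, ‖deriv (deriv u) t‖ₑ ^ 2 = ENNReal.ofReal (3 * bendEnergy u) := by
  have period (a : ℝ) : ∫⁻ t in Ioc a (a + 1), ‖deriv (deriv u) t‖ₑ ^ 2 =
      ENNReal.ofReal (bendEnergy u) := by
    rw [← hu.intervalIntegral_norm_deriv_deriv_sq a, intervalIntegral.integral_of_le (by linarith),
      ofReal_integral_eq_lintegral_ofReal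
        (hu.intervalIntegrable_norm_deriv_deriv_sq a (a + 1)).1
        (Eventually.of_forall fun t => sq_nonneg _)]
    simp only [ENNReal.ofReal_pow (norm_nonneg _), ofReal_norm]
  have period_neg := period (-1)
  have period_zero := period 0
  have period_one := period 1
  norm_num at period_neg period_zero period_one
  rw [← Ioc_union_Ioc_eq_Ioc (a := -1) (b := 0) (by norm_num) (by norm_num),
    lintegral_union measurableSet_Ioc (Ioc_disjoint_Ioc_of_le le_rfl),
    ← Ioc_union_Ioc_eq_Ioc (a := 0) (b := 1) (by norm_num) (by norm_num),
    lintegral_union measurableSet_Ioc (Ioc_disjoint_Ioc_of_le le_rfl), period_neg, period_zero,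
    period_one, ENNReal.ofReal_mul (by norm_num), ENNReal.ofReal_ofNat]
  ring

lemma ofReal_curvatureMean_eq (hu : C2Periodic u) (y h : ℝ) :
    ENNReal.ofReal (curvatureMean u y h) =
      ∫⁻ s in Ioc (0 : ℝ) 1, ‖deriv (deriv u) (y + s * h)‖ₑ := by
  have := hu.continuous_deriv_deriv
  rw [curvatureMean, intervalIntegral.integral_of_le zero_le_one]
  exact ofReal_integral_norm_eq_lintegral_enorm
    (f := fun s => deriv (deriv u) (y + s * h)) (by fun_prop : Continuous _).integrableOn_Ioc

lemma ofReal_curvatureMean_eq_indicator (hu : C2Periodic u) {y h : ℝ} (hy : y ∈ Ioc (0 : ℝ) 1)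
    (hh : |h| ≤ 1 / 2) :
    ENNReal.ofReal (curvatureMean u y h) = ∫⁻ s in Ioc (0 : ℝ) 1,
      (Ioc (-1 : ℝ) 2).indicator (fun t => ‖deriv (deriv u) t‖ₑ) (y + s * h) := by
  rw [hu.ofReal_curvatureMean_eq]
  refine setLIntegral_congr_fun measurableSet_Ioc fun s hs => ?_
  have : y + s * h ∈ Ioc (-1 : ℝ) 2 := by
    constructor <;> nlinarith [hs.1, hs.2, hy.1, hy.2, (abs_le.1 hh).1, (abs_le.1 hh).2]
  simp only [indicator_of_mem this]

lemma lintegral_curvatureMean_pow_four_le (hu : C2Periodic u) :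
    ∫⁻ p in unitSq, ENNReal.ofReal (curvatureMean u p.2 (wrap (p.1 - p.2)) ^ 4) ≤
      ENNReal.ofReal (144 * bendEnergy u ^ 2) := by
  set f : ℝ → ℝ≥0∞ := (Ioc (-1 : ℝ) 2).indicator fun t => ‖deriv (deriv u) t‖ₑ with hf
  have measurable_f : Measurable f :=
    hu.continuous_deriv_deriv.enorm.measurable.indicator measurableSet_Ioc
  have integrand_eq (y : ℝ) (hy : y ∈ Ioc (0 : ℝ) (0 + 1)) (h : ℝ)
      (hh : h ∈ Ioc (-(1 / 2) : ℝ) (-(1 / 2) + 1)) :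
      ENNReal.ofReal (curvatureMean u y (wrap (y + h - y)) ^ 4) =
        (∫⁻ s in Ioc (0 : ℝ) 1, f (y + s * h)) ^ 4 := by
    rw [add_sub_cancel_left, wrap_of_mem_Ioc ⟨hh.1, by linarith [hh.2]⟩,
      ENNReal.ofReal_pow (curvatureMean_nonneg u y h), hu.ofReal_curvatureMean_eq_indicator
        ⟨hy.1, by linarith [hy.2]⟩ (abs_le.2 ⟨hh.1.le, by linarith [hh.2]⟩)]
  calc _ = ∫⁻ y in Ioc (0 : ℝ) (0 + 1), ∫⁻ h in Ioc (-(1 / 2) : ℝ) (-(1 / 2) + 1),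
        (∫⁻ s in Ioc (0 : ℝ) 1, f (y + s * h)) ^ 4 := by
        rw [setLIntegral_unitSq (hu.measurable_curvatureMean_wrap.pow_const 4).ennreal_ofReal
          (fun x y => by rw [add_sub_right_comm, wrap_add_one])
          (fun x y => by rw [← sub_sub, wrap_sub_one, hu.curvatureMean_add_one]) 0 (-(1 / 2))]
        exact setLIntegral_congr_fun measurableSet_Ioc fun y hy =>
          setLIntegral_congr_fun measurableSet_Ioc fun h hh => integrand_eq y hy h hh
    _ ≤ ∫⁻ p : ℝ × ℝ, (∫⁻ s in Ioc (0 : ℝ) 1, f (p.1 + s * p.2)) ^ 4 := by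
        rw [Measure.volume_eq_prod, lintegral_prod _ (by fun_prop)]
        exact (setLIntegral_le_lintegral _ _).trans
          (lintegral_mono fun y => setLIntegral_le_lintegral _ _)
    _ ≤ 16 * (∫⁻ t, f t ^ 2) ^ 2 := lintegral_lintegral_segment_pow_four_le measurable_f
    _ = 16 * ENNReal.ofReal (3 * bendEnergy u) ^ 2 := by
        rw [← hu.lintegral_enorm_deriv_deriv_sq, ← lintegral_indicator measurableSet_Ioc]
        congr! 4 with t
        by_cases ht : t ∈ Ioc (-1 : ℝ) 2 <;> simp [hf, ht]
    _ = _ := by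
        have := bendEnergy_nonneg u
        rw [← ENNReal.ofReal_pow (by positivity), ← ENNReal.ofReal_ofNat 16,
          ← ENNReal.ofReal_mul (by norm_num)]
        ring_nf

end C2Periodic

end CurvatureMean

section PowerTaylor

variable {F : Type*} [NormedAddCommGroup F] [InnerProductSpace ℝ F]

lemma rpow_sub_rpow_le {p x y : ℝ} (hp : 1 ≤ p) (hx : 0 ≤ x) (hy : 0 ≤ y) :
    x ^ p - y ^ p ≤ p * x ^ (p - 1) * (x - y) := by
  rcases hx.eq_or_lt with rfl | hx
  · rcases hp.eq_or_lt with rfl | hp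
    · simp
    · rw [Real.zero_rpow (by linarith), Real.zero_rpow (by linarith)]
      linarith [Real.rpow_nonneg hy p]
  · have bernoulli := one_add_mul_self_le_rpow_one_add (s := y / x - 1)
      (by linarith [div_nonneg hy hx.le]) hp
    rw [add_sub_cancel, Real.div_rpow hy hx.le, le_div_iff₀ (by positivity)] at bernoulli
    have rpow_eq : x ^ p = x ^ (p - 1) * x := by rw [← Real.rpow_add_one hx.ne']; ring_nf
    have : (1 + p * (y / x - 1)) * x ^ p = x ^ p - p * x ^ (p - 1) * (x - y) := by
      rw [rpow_eq]; field_simp; ring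
    linarith

lemma rpow_sub_one_sub_mul_le {q x y M : ℝ} (hq : 2 ≤ q) (hx : 0 ≤ x) (hy : 0 ≤ y) (hxM : x ≤ M)
    (hyM : y ≤ M) :
    (y ^ (q - 1) - x ^ (q - 1)) * (y - x) ≤ (q - 1) * M ^ (q - 2) * (y - x) ^ 2 := by
  wlog hxy : x ≤ y generalizing x y
  · have := this hy hx hyM hxM (le_of_not_ge hxy)
    linarith
  have convex := rpow_sub_rpow_le (p := q - 1) (by linarith) hy hx
  rw [show q - 1 - 1 = q - 2 by ring] at convex
  calc _ ≤ ((q - 1) * y ^ (q - 2) * (y - x)) * (y - x) :=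
        mul_le_mul_of_nonneg_right convex (sub_nonneg.2 hxy)
    _ = (q - 1) * y ^ (q - 2) * (y - x) ^ 2 := by ring
    _ ≤ _ := by
        gcongr
        linarith

lemma rpow_taylor_le {q x y M : ℝ} (hq : 2 ≤ q) (hx : 0 ≤ x) (hy : 0 ≤ y) (hxM : x ≤ M)
    (hyM : y ≤ M) :
    y ^ q ≤ x ^ q + q * x ^ (q - 1) * (y - x) + q * (q - 1) * M ^ (q - 2) * (y - x) ^ 2 := by
  have first_order := rpow_sub_rpow_le (p := q) (by linarith) hy hx
  have second_order := mul_le_mul_of_nonneg_left (rpow_sub_one_sub_mul_le hq hx hy hxM hyM)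
    (by linarith : 0 ≤ q)
  linarith

lemma norm_rpow_taylor_le {z w : F} {q M : ℝ} (hq : 2 ≤ q) (hz : ‖z‖ ≤ M) (hw : ‖w‖ ≤ M) :
    ‖w‖ ^ q ≤ ‖z‖ ^ q + q * ‖z‖ ^ (q - 2) * ⟪z, w - z⟫ + q * q * M ^ (q - 2) * ‖w - z‖ ^ 2 := by
  have scalar := rpow_taylor_le hq (norm_nonneg z) (norm_nonneg w) hz hw
  have rpow_eq : ‖z‖ ^ (q - 1) = ‖z‖ ^ (q - 2) * ‖z‖ := by
    rw [← Real.rpow_add_one' (norm_nonneg _) (by linarith)]; ring_nf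
  have radial : ‖z‖ * (‖w‖ - ‖z‖) ≤ ⟪z, w - z⟫ + ‖w - z‖ ^ 2 / 2 := by
    rw [norm_sub_sq_real, inner_sub_right, real_inner_self_eq_norm_sq, real_inner_comm]
    linarith [sq_nonneg (‖w‖ - ‖z‖)]
  have norm_sub_sq_le : (‖w‖ - ‖z‖) ^ 2 ≤ ‖w - z‖ ^ 2 :=
    sq_le_sq.2 ((abs_norm_sub_norm_le w z).trans (le_abs_self _))
  have M_nonneg : 0 ≤ M := (norm_nonneg z).trans hz
  rw [rpow_eq] at scalar
  calc ‖w‖ ^ q ≤ ‖z‖ ^ q + q * ‖z‖ ^ (q - 2) * (‖z‖ * (‖w‖ - ‖z‖)) +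
        q * (q - 1) * M ^ (q - 2) * (‖w‖ - ‖z‖) ^ 2 := by linarith
    _ ≤ ‖z‖ ^ q + q * ‖z‖ ^ (q - 2) * (⟪z, w - z⟫ + ‖w - z‖ ^ 2 / 2) +
        q * (q - 1) * M ^ (q - 2) * ‖w - z‖ ^ 2 := by
        have : 0 ≤ q * (q - 1) := mul_nonneg (by linarith) (by linarith)
        gcongr
    _ = ‖z‖ ^ q + q * ‖z‖ ^ (q - 2) * ⟪z, w - z⟫ + q * ‖z‖ ^ (q - 2) * (‖w - z‖ ^ 2 / 2) +
        q * (q - 1) * M ^ (q - 2) * ‖w - z‖ ^ 2 := by ring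
    _ ≤ ‖z‖ ^ q + q * ‖z‖ ^ (q - 2) * ⟪z, w - z⟫ + q * M ^ (q - 2) * (‖w - z‖ ^ 2 / 2) +
        q * (q - 1) * M ^ (q - 2) * ‖w - z‖ ^ 2 := by
        gcongr
    _ ≤ _ := by
        have : 0 ≤ q * M ^ (q - 2) * ‖w - z‖ ^ 2 := by positivity
        linarith

lemma rpow_sub_two_le_sq {x M q : ℝ} (hq : 2 ≤ q) (hq4 : q ≤ 4) (hM : 1 ≤ M) (hx : 0 ≤ x)
    (hxM : x ≤ M) : x ^ (q - 2) ≤ M ^ 2 :=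
  calc x ^ (q - 2) ≤ M ^ (q - 2) := Real.rpow_le_rpow hx hxM (by linarith)
    _ ≤ M ^ (2 : ℝ) := Real.rpow_le_rpow_of_exponent_le hM (by linarith)
    _ = M ^ 2 := Real.rpow_two M

end PowerTaylor

section QuotientTaylor

variable {F G : Type*} [NormedAddCommGroup F] [NormedAddCommGroup G]

/-- Bounds on a quotient `w₀ / ‖b‖²` and its perturbation `(w₀ + d₁ + d₂) / ‖b + β‖²`: the inverse
square denominators are of order `L`, the numerators of order `s`, and `β`, `d₁`, `d₂` are
perturbations of order `N`, `N` and `N²`. -/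
structure QuotientPerturbation (b β : F) (w₀ d₁ d₂ : G) (L N s : ℝ) : Prop where
  one_le_bound : 1 ≤ L
  size_nonneg : 0 ≤ N
  size_le_one : N ≤ 1
  one_le_scale : 1 ≤ s
  base_ne_zero : b ≠ 0
  add_ne_zero : b + β ≠ 0
  norm_base_le : ‖b‖ ≤ 2
  norm_perturbation_le : ‖β‖ ≤ N
  inv_norm_base_sq_le : (‖b‖ ^ 2)⁻¹ ≤ L
  inv_norm_add_sq_le : (‖b + β‖ ^ 2)⁻¹ ≤ 4 * L
  norm_numerator_le : ‖w₀‖ ≤ 2 * s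
  norm_first_le : ‖d₁‖ ≤ 2 * N * s
  norm_second_le : ‖d₂‖ ≤ N ^ 2 * s

namespace QuotientPerturbation

variable {b β : F} {w₀ d₁ d₂ : G} {L N s : ℝ}

lemma inv_norm_sq_sub_eq [InnerProductSpace ℝ F]
    (h : QuotientPerturbation b β w₀ d₁ d₂ L N s) :
    (‖b + β‖ ^ 2)⁻¹ - (‖b‖ ^ 2)⁻¹ =
      -((2 * ⟪b, β⟫ + ‖β‖ ^ 2) * ((‖b‖ ^ 2)⁻¹ * (‖b + β‖ ^ 2)⁻¹)) := by
  have base_pos : 0 < ‖b‖ := norm_pos_iff.2 h.base_ne_zero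
  have add_pos : 0 < ‖b + β‖ := norm_pos_iff.2 h.add_ne_zero
  rw [show 2 * ⟪b, β⟫ + ‖β‖ ^ 2 = ‖b + β‖ ^ 2 - ‖b‖ ^ 2 by rw [norm_add_sq_real]; ring]
  field_simp
  ring

lemma abs_norm_sq_sub_le [InnerProductSpace ℝ F]
    (h : QuotientPerturbation b β w₀ d₁ d₂ L N s) :
    |2 * ⟪b, β⟫ + ‖β‖ ^ 2| ≤ 5 * N := by
  have inner_le : |⟪b, β⟫| ≤ 2 * N := (abs_real_inner_le_norm b β).trans
    (mul_le_mul h.norm_base_le h.norm_perturbation_le (norm_nonneg _) zero_le_two)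
  have sq_le : ‖β‖ ^ 2 ≤ N := by
    nlinarith [h.norm_perturbation_le, h.size_le_one, norm_nonneg β]
  rw [abs_le] at inner_le ⊢
  constructor <;> linarith [sq_nonneg ‖β‖, h.size_nonneg]

lemma abs_inv_norm_sq_sub_le [InnerProductSpace ℝ F]
    (h : QuotientPerturbation b β w₀ d₁ d₂ L N s) :
    |(‖b + β‖ ^ 2)⁻¹ - (‖b‖ ^ 2)⁻¹| ≤ 20 * N * L ^ 2 := by
  have := h.one_le_bound
  rw [h.inv_norm_sq_sub_eq, abs_neg, abs_mul,
    abs_of_nonneg (by positivity : 0 ≤ (‖b‖ ^ 2)⁻¹ * (‖b + β‖ ^ 2)⁻¹)]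
  calc _ ≤ 5 * N * (L * (4 * L)) := by
        gcongr
        exacts [by linarith [h.size_nonneg], h.abs_norm_sq_sub_le, h.inv_norm_base_sq_le,
          h.inv_norm_add_sq_le]
    _ = _ := by ring

lemma abs_inv_norm_sq_taylor_le [InnerProductSpace ℝ F]
    (h : QuotientPerturbation b β w₀ d₁ d₂ L N s) :
    |(‖b + β‖ ^ 2)⁻¹ - (‖b‖ ^ 2)⁻¹ + 2 * ⟪b, β⟫ / ‖b‖ ^ 4| ≤ 101 * N ^ 2 * L ^ 3 := by
  have sub_eq := h.inv_norm_sq_sub_eq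
  have abs_r_le := h.abs_norm_sq_sub_le
  have x_le := h.inv_norm_base_sq_le
  have y_le := h.inv_norm_add_sq_le
  have one_le_L := h.one_le_bound
  have := h.size_nonneg
  rw [div_eq_mul_inv, show (‖b‖ ^ 4)⁻¹ = (‖b‖ ^ 2)⁻¹ ^ 2 by rw [inv_pow]; ring]
  set x := (‖b‖ ^ 2)⁻¹
  set y := (‖b + β‖ ^ 2)⁻¹
  set r := 2 * ⟪b, β⟫ + ‖β‖ ^ 2 with hr
  have expand : y - x + 2 * ⟪b, β⟫ * x ^ 2 = r ^ 2 * (x ^ 2 * y) - ‖β‖ ^ 2 * x ^ 2 := by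
    rw [show 2 * ⟪b, β⟫ = r - ‖β‖ ^ 2 by rw [hr]; ring]
    linear_combination (1 - r * x) * sub_eq
  have : 0 ≤ x := by positivity
  have : 0 ≤ y := by positivity
  have quadratic_le : r ^ 2 * (x ^ 2 * y) ≤ 100 * N ^ 2 * L ^ 3 :=
    calc r ^ 2 * (x ^ 2 * y) ≤ (5 * N) ^ 2 * (L ^ 2 * (4 * L)) := by
          gcongr ?_ * (?_ ^ 2 * ?_)
          exact sq_le_sq.2 (abs_r_le.trans (le_abs_self _))
      _ = _ := by ring
  have linear_le : ‖β‖ ^ 2 * x ^ 2 ≤ N ^ 2 * L ^ 3 :=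
    calc ‖β‖ ^ 2 * x ^ 2 ≤ N ^ 2 * L ^ 2 := by
          gcongr; exact h.norm_perturbation_le
      _ ≤ N ^ 2 * L ^ 3 := by gcongr; norm_num
  have : 0 ≤ N ^ 2 * L ^ 3 := by positivity
  rw [expand, abs_le]
  constructor <;> linarith [show 0 ≤ r ^ 2 * (x ^ 2 * y) by positivity,
    show 0 ≤ ‖β‖ ^ 2 * x ^ 2 by positivity]

lemma norm_quotient_le [NormedSpace ℝ G]
    (h : QuotientPerturbation b β w₀ d₁ d₂ L N s) :
    ‖(‖b‖ ^ 2)⁻¹ • w₀‖ ≤ 20 * s * L := by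
  have := h.one_le_bound
  have := h.one_le_scale
  rw [norm_smul, Real.norm_of_nonneg (by positivity)]
  calc _ ≤ L * (2 * s) := by
        gcongr
        exacts [h.inv_norm_base_sq_le, h.norm_numerator_le]
    _ ≤ _ := by nlinarith [show 0 ≤ s * L by positivity]

lemma norm_perturbed_quotient_le [NormedSpace ℝ G]
    (h : QuotientPerturbation b β w₀ d₁ d₂ L N s) :
    ‖(‖b + β‖ ^ 2)⁻¹ • (w₀ + d₁ + d₂)‖ ≤ 20 * s * L := by
  have := h.one_le_bound
  have := h.one_le_scale
  have := h.size_nonneg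
  have first_le : 2 * N * s ≤ 2 * 1 * s := by gcongr; exact h.size_le_one
  have second_le : N ^ 2 * s ≤ 1 ^ 2 * s := by gcongr; exact h.size_le_one
  have numerator_le : ‖w₀ + d₁ + d₂‖ ≤ 5 * s := by
    refine norm_add₃_le.trans ?_
    linarith [h.norm_numerator_le, h.norm_first_le, h.norm_second_le]
  rw [norm_smul, Real.norm_of_nonneg (by positivity)]
  calc _ ≤ 4 * L * (5 * s) := by gcongr; exact h.inv_norm_add_sq_le
    _ = _ := by ring

lemma norm_quotient_sub_le [InnerProductSpace ℝ F] [NormedSpace ℝ G]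
    (h : QuotientPerturbation b β w₀ d₁ d₂ L N s) :
    ‖(‖b + β‖ ^ 2)⁻¹ • (w₀ + d₁ + d₂) - (‖b‖ ^ 2)⁻¹ • w₀‖ ≤ 60 * N * s * L ^ 2 := by
  have one_le_L := h.one_le_bound
  have := h.one_le_scale
  have N_nonneg := h.size_nonneg
  have numerator_le : ‖d₁ + d₂‖ ≤ 3 * N * s := by
    have : N ^ 2 * s ≤ N * s := by gcongr; nlinarith [h.size_le_one]
    linarith [norm_add_le d₁ d₂, h.norm_first_le, h.norm_second_le]
  rw [show (‖b + β‖ ^ 2)⁻¹ • (w₀ + d₁ + d₂) - (‖b‖ ^ 2)⁻¹ • w₀ =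
    (‖b + β‖ ^ 2)⁻¹ • (d₁ + d₂) + ((‖b + β‖ ^ 2)⁻¹ - (‖b‖ ^ 2)⁻¹) • w₀ by module]
  refine (norm_add_le _ _).trans ?_
  rw [norm_smul, norm_smul, Real.norm_of_nonneg (by positivity), Real.norm_eq_abs]
  calc _ ≤ 4 * L * (3 * N * s) + 20 * N * L ^ 2 * (2 * s) := by
        gcongr
        exacts [h.inv_norm_add_sq_le, h.abs_inv_norm_sq_sub_le, h.norm_numerator_le]
    _ = 12 * (N * s) * L + 40 * (N * s) * L ^ 2 := by ring
    _ ≤ 12 * (N * s) * L ^ 2 + 40 * (N * s) * L ^ 2 := by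
        gcongr
        exact le_self_pow₀ one_le_L two_ne_zero
    _ ≤ _ := by linarith [show 0 ≤ N * s * L ^ 2 by positivity]

lemma norm_quotient_taylor_le [InnerProductSpace ℝ F] [NormedSpace ℝ G]
    (h : QuotientPerturbation b β w₀ d₁ d₂ L N s) :
    ‖(‖b + β‖ ^ 2)⁻¹ • (w₀ + d₁ + d₂) - (‖b‖ ^ 2)⁻¹ • w₀ -
      ((‖b‖ ^ 2)⁻¹ • d₁ - (2 * ⟪b, β⟫ / ‖b‖ ^ 4) • w₀)‖ ≤ 300 * N ^ 2 * s * L ^ 3 := by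
  have one_le_L := h.one_le_bound
  have := h.one_le_scale
  have N_nonneg := h.size_nonneg
  rw [show (‖b + β‖ ^ 2)⁻¹ • (w₀ + d₁ + d₂) - (‖b‖ ^ 2)⁻¹ • w₀ -
      ((‖b‖ ^ 2)⁻¹ • d₁ - (2 * ⟪b, β⟫ / ‖b‖ ^ 4) • w₀) =
    (‖b + β‖ ^ 2)⁻¹ • d₂ + ((‖b + β‖ ^ 2)⁻¹ - (‖b‖ ^ 2)⁻¹) • d₁ +
      ((‖b + β‖ ^ 2)⁻¹ - (‖b‖ ^ 2)⁻¹ + 2 * ⟪b, β⟫ / ‖b‖ ^ 4) • w₀ by module]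
  refine norm_add₃_le.trans ?_
  rw [norm_smul, norm_smul, norm_smul, Real.norm_of_nonneg (by positivity), Real.norm_eq_abs,
    Real.norm_eq_abs]
  calc _ ≤ 4 * L * (N ^ 2 * s) + 20 * N * L ^ 2 * (2 * N * s) + 101 * N ^ 2 * L ^ 3 * (2 * s) := by
        gcongr
        exacts [h.inv_norm_add_sq_le, h.norm_second_le, h.abs_inv_norm_sq_sub_le, h.norm_first_le,
          h.abs_inv_norm_sq_taylor_le, h.norm_numerator_le]
    _ = 4 * (N ^ 2 * s) * L + 40 * (N ^ 2 * s) * L ^ 2 + 202 * (N ^ 2 * s) * L ^ 3 := by ring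
    _ ≤ 4 * (N ^ 2 * s) * L ^ 3 + 40 * (N ^ 2 * s) * L ^ 3 + 202 * (N ^ 2 * s) * L ^ 3 := by
        gcongr
        exacts [le_self_pow₀ one_le_L three_ne_zero, by norm_num]
    _ ≤ _ := by linarith [show 0 ≤ N ^ 2 * s * L ^ 3 by positivity]

lemma inner_sub_le [InnerProductSpace ℝ F] [InnerProductSpace ℝ G]
    (h : QuotientPerturbation b β w₀ d₁ d₂ L N s) :
    ⟪(‖b‖ ^ 2)⁻¹ • w₀, (‖b + β‖ ^ 2)⁻¹ • (w₀ + d₁ + d₂) - (‖b‖ ^ 2)⁻¹ • w₀⟫ ≤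
      ⟪(‖b‖ ^ 2)⁻¹ • w₀, (‖b‖ ^ 2)⁻¹ • d₁ - (2 * ⟪b, β⟫ / ‖b‖ ^ 4) • w₀⟫ +
        20 * s * L * (300 * N ^ 2 * s * L ^ 3) := by
  have := h.one_le_bound
  have := h.one_le_scale
  rw [← sub_le_iff_le_add', ← inner_sub_right]
  refine (real_inner_le_norm _ _).trans ?_
  gcongr
  exacts [h.norm_quotient_le, h.norm_quotient_taylor_le]

theorem norm_rpow_le [InnerProductSpace ℝ F] [InnerProductSpace ℝ G] {q : ℝ}
    (h : QuotientPerturbation b β w₀ d₁ d₂ L N s) (hq : 2 ≤ q) (hq4 : q ≤ 4) :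
    ‖(‖b + β‖ ^ 2)⁻¹ • (w₀ + d₁ + d₂)‖ ^ q ≤ ‖(‖b‖ ^ 2)⁻¹ • w₀‖ ^ q +
      q * ‖(‖b‖ ^ 2)⁻¹ • w₀‖ ^ (q - 2) *
        ⟪(‖b‖ ^ 2)⁻¹ • w₀, (‖b‖ ^ 2)⁻¹ • d₁ - (2 * ⟪b, β⟫ / ‖b‖ ^ 4) • w₀⟫ +
      10 ^ 8 * L ^ 6 * N ^ 2 * s ^ 4 := by
  have taylor := norm_rpow_taylor_le hq h.norm_quotient_le h.norm_perturbed_quotient_le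
  have inner_le := h.inner_sub_le
  have norm_le := h.norm_quotient_le
  have sub_le := h.norm_quotient_sub_le
  have one_le_L := h.one_le_bound
  have one_le_s := h.one_le_scale
  have := h.size_nonneg
  set z := (‖b‖ ^ 2)⁻¹ • w₀
  set w := (‖b + β‖ ^ 2)⁻¹ • (w₀ + d₁ + d₂)
  set lin := (‖b‖ ^ 2)⁻¹ • d₁ - (2 * ⟪b, β⟫ / ‖b‖ ^ 4) • w₀
  have one_le_M : 1 ≤ 20 * s * L := by nlinarith
  calc ‖w‖ ^ q ≤ ‖z‖ ^ q + q * ‖z‖ ^ (q - 2) *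
          (⟪z, lin⟫ + 20 * s * L * (300 * N ^ 2 * s * L ^ 3)) +
        q * q * (20 * s * L) ^ (q - 2) * (60 * N * s * L ^ 2) ^ 2 := by
        refine taylor.trans ?_
        gcongr
    _ = ‖z‖ ^ q + q * ‖z‖ ^ (q - 2) * ⟪z, lin⟫ +
        (q * ‖z‖ ^ (q - 2) * (20 * s * L * (300 * N ^ 2 * s * L ^ 3)) +
          q * q * (20 * s * L) ^ (q - 2) * (60 * N * s * L ^ 2) ^ 2) := by ring
    _ ≤ ‖z‖ ^ q + q * ‖z‖ ^ (q - 2) * ⟪z, lin⟫ +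
        (4 * (20 * s * L) ^ 2 * (20 * s * L * (300 * N ^ 2 * s * L ^ 3)) +
          4 * 4 * (20 * s * L) ^ 2 * (60 * N * s * L ^ 2) ^ 2) := by
        gcongr
        exacts [rpow_sub_two_le_sq hq hq4 one_le_M (norm_nonneg z) norm_le,
          rpow_sub_two_le_sq hq hq4 one_le_M (by positivity) le_rfl]
    _ ≤ _ := by
        have : 0 ≤ L ^ 6 * N ^ 2 * s ^ 4 := by positivity
        linarith

end QuotientPerturbation

end QuotientTaylor

section Wedge

/-- The wedge product `a ∧ b` of vectors of `ℝ³`, represented by their cross product. -/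
def wedge (a b : E3) : E3 :=
  WithLp.toLp 2 (crossProduct a.ofLp b.ofLp)

lemma inner_wedge (a b c d : E3) : ⟪wedge a b, wedge c d⟫ = wedgeInner a b c d := by
  simp only [wedge, wedgeInner, EuclideanSpace.inner_eq_star_dotProduct, star_trivial]
  rw [cross_dot_cross, dotProduct_comm, mul_comm]
  ring_nf

lemma norm_wedge_sq (a b : E3) : ‖wedge a b‖ ^ 2 = wedgeSq a b := by
  rw [← real_inner_self_eq_norm_sq, inner_wedge, wedgeInner, wedgeSq, real_inner_self_eq_norm_sq,
    real_inner_self_eq_norm_sq, real_inner_comm b a, sq ⟪b, a⟫]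

lemma norm_wedge_le (a b : E3) : ‖wedge a b‖ ≤ ‖a‖ * ‖b‖ := by
  refine le_of_sq_le_sq ?_ (by positivity)
  rw [norm_wedge_sq, wedgeSq, mul_pow]
  exact sub_le_self _ (sq_nonneg _)

lemma wedge_add_left (a b c : E3) : wedge (a + b) c = wedge a c + wedge b c := by
  simp [wedge]

lemma wedge_add_right (a b c : E3) : wedge a (b + c) = wedge a b + wedge a c := by
  simp [wedge]

lemma wedge_sub_left (a b c : E3) : wedge (a - b) c = wedge a c - wedge b c := by
  simp [wedge]

lemma wedge_sub_right (a b c : E3) : wedge a (b - c) = wedge a b - wedge a c := by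
  simp [wedge]

lemma wedge_smul_left (r : ℝ) (a b : E3) : wedge (r • a) b = r • wedge a b := by
  simp [wedge]

lemma wedge_smul_right (r : ℝ) (a b : E3) : wedge a (r • b) = r • wedge a b := by
  simp [wedge]

lemma wedge_self (a : E3) : wedge a a = 0 := by
  simp [wedge]

lemma wedge_sub_smul_self (c : ℝ) (a b : E3) : wedge a (b - c • a) = wedge a b := by
  rw [wedge_sub_right, wedge_smul_right, wedge_self, smul_zero, sub_zero]

end Wedge

section Integrands

/-- The integrand of `q TP(u)`. -/
def tpDensity (q : ℝ) (u : ℝ → E3) (p : ℝ × ℝ) : ℝ :=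
  wedgeSq (deriv u p.2) (u p.1 - u p.2) ^ (q / 2) / ‖u p.1 - u p.2‖ ^ (2 * q)

/-- The tangent-point quotient `u'(y) ∧ (u(x) - u(y)) / |u(x) - u(y)|²` at `p = (x, y)`; the
integrand of `q TP(u)` is the `q`-th power of its norm. -/
def tpQuotient (u : ℝ → E3) (p : ℝ × ℝ) : E3 :=
  (‖u p.1 - u p.2‖ ^ 2)⁻¹ • wedge (deriv u p.2) (u p.1 - u p.2)

variable {q : ℝ} (u v w φ : ℝ → E3) (p : ℝ × ℝ)

lemma wedgeSq_rpow_half (a b : E3) (r : ℝ) : wedgeSq a b ^ (r / 2) = ‖wedge a b‖ ^ r := by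
  rw [← norm_wedge_sq, ← Real.rpow_natCast_mul (norm_nonneg _)]
  congr 1; push_cast; ring

lemma rpow_two_mul {x : ℝ} (hx : 0 ≤ x) (r : ℝ) : x ^ (2 * r) = (x ^ 2) ^ r := by
  rw [Real.rpow_mul hx]; norm_cast

lemma tpDensity_eq : tpDensity q u p = ‖tpQuotient u p‖ ^ q := by
  unfold tpDensity tpQuotient
  rw [wedgeSq_rpow_half, norm_smul, Real.norm_of_nonneg (by positivity),
    Real.mul_rpow (by positivity) (norm_nonneg _), Real.inv_rpow (by positivity),
    rpow_two_mul (norm_nonneg _), div_eq_inv_mul]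

lemma tpDensity_nonneg : 0 ≤ tpDensity q u p := by
  unfold tpDensity
  rw [wedgeSq_rpow_half]; positivity

lemma norm_tpQuotient_rpow_mul_inner (hq : 2 < q) (D : E3) :
    ‖tpQuotient u p‖ ^ (q - 2) * ⟪tpQuotient u p, (‖u p.1 - u p.2‖ ^ 2)⁻¹ • D⟫ =
      wedgeSq (deriv u p.2) (u p.1 - u p.2) ^ ((q - 2) / 2) / ‖u p.1 - u p.2‖ ^ (2 * q) *
        ⟪wedge (deriv u p.2) (u p.1 - u p.2), D⟫ := by
  unfold tpQuotient
  rw [wedgeSq_rpow_half, norm_smul, Real.norm_of_nonneg (by positivity),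
    Real.mul_rpow (by positivity) (norm_nonneg _), real_inner_smul_left, real_inner_smul_right,
    rpow_two_mul (norm_nonneg _)]
  rcases (norm_nonneg (u p.1 - u p.2)).eq_or_lt with h | h
  · rw [← h]
    simp [Real.zero_rpow (show q ≠ 0 by linarith)]
  · have hsplit (d : ℝ) (hd : 0 < d) : d ^ q = d ^ (q - 2) * d ^ 2 := by
      rw [← Real.rpow_add_natCast hd.ne', Nat.cast_ofNat, sub_add_cancel]
    rw [hsplit _ (by positivity : 0 < ‖u p.1 - u p.2‖ ^ 2), Real.inv_rpow (by positivity)]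
    field_simp

lemma Mintegrand_eq (hq : 2 < q) : Mintegrand q u v w p =
    ‖tpQuotient u p‖ ^ (q - 2) * ⟪tpQuotient u p, (‖u p.1 - u p.2‖ ^ 2)⁻¹ •
      wedge (deriv v p.2) (w p.1 - w p.2 - wrap (p.1 - p.2) • deriv w p.2)⟫ := by
  rw [norm_tpQuotient_rpow_mul_inner u p hq, inner_wedge]; rfl

lemma Aintegrand_eq (hq : 2 < q) : Aintegrand q u v w p =
    ‖tpQuotient u p‖ ^ (q - 2) * ⟪tpQuotient u p,
      (⟪v p.1 - v p.2, w p.1 - w p.2⟫ / ‖u p.1 - u p.2‖ ^ 4) •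
        wedge (deriv u p.2) (u p.1 - u p.2)⟫ := by
  have hsplit (x : ℝ) (hx : 0 ≤ x) (a : ℝ) (ha : 2 < a) : x ^ a = x ^ (a - 2) * x ^ 2 := by
    rw [← Real.rpow_add_natCast' hx] <;> push_cast <;> [congr 1; skip] <;> linarith
  have hnorm := norm_nonneg (u p.1 - u p.2)
  have hfactor (c : ℝ) : c / ‖u p.1 - u p.2‖ ^ 4 =
      (‖u p.1 - u p.2‖ ^ 2)⁻¹ * (c / ‖u p.1 - u p.2‖ ^ 2) := by
    rw [inv_mul_eq_div, div_div, ← pow_add]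
  rw [hfactor, mul_smul, norm_tpQuotient_rpow_mul_inner u p hq, real_inner_smul_right,
    real_inner_self_eq_norm_sq, Aintegrand, wedgeSq_rpow_half, wedgeSq_rpow_half,
    hsplit _ (norm_nonneg _) q hq, hsplit _ hnorm (2 * q + 2) (by linarith), add_sub_cancel_right,
    mul_div_mul_comm]
  ring

/-- The integrand of `δTP(u)[φ]`. -/
def deltaTPDensity (q : ℝ) (u φ : ℝ → E3) (p : ℝ × ℝ) : ℝ :=
  Mintegrand q u u φ p + Mintegrand q u φ u p - 2 * Aintegrand q u u φ p

lemma measurable_wedgeSq {f g : ℝ × ℝ → E3} (hf : Measurable f) (hg : Measurable g) :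
    Measurable fun p => wedgeSq (f p) (g p) := by
  unfold wedgeSq; fun_prop

lemma measurable_wedgeInner {f g f' g' : ℝ × ℝ → E3} (hf : Measurable f) (hg : Measurable g)
    (hf' : Measurable f') (hg' : Measurable g') :
    Measurable fun p => wedgeInner (f p) (g p) (f' p) (g' p) := by
  unfold wedgeInner; fun_prop

variable {u v w φ p}

lemma C2Periodic.measurable_diff (hu : C2Periodic u) :
    Measurable fun p : ℝ × ℝ => u p.1 - u p.2 :=
  ((hu.continuous.comp continuous_fst).sub (hu.continuous.comp continuous_snd)).measurable

lemma C2Periodic.measurable_deriv_snd (hu : C2Periodic u) :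
    Measurable fun p : ℝ × ℝ => deriv u p.2 :=
  (hu.continuous_deriv.comp continuous_snd).measurable

lemma C2Periodic.measurable_tpDensity (hu : C2Periodic u) : Measurable (tpDensity q u) := by
  unfold tpDensity
  exact ((measurable_wedgeSq hu.measurable_deriv_snd hu.measurable_diff).pow_const _).div
    (hu.measurable_diff.norm.pow_const _)

lemma measurable_Mintegrand (hu : C2Periodic u) (hv : C2Periodic v) (hw : C2Periodic w) :
    Measurable (Mintegrand q u v w) := by
  unfold Mintegrand
  refine (((measurable_wedgeSq hu.measurable_deriv_snd hu.measurable_diff).pow_const _).div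
    (hu.measurable_diff.norm.pow_const _)).mul (measurable_wedgeInner hu.measurable_deriv_snd
      hu.measurable_diff hv.measurable_deriv_snd ?_)
  exact hw.measurable_diff.sub
    ((measurable_wrap.comp (measurable_fst.sub measurable_snd)).smul hw.measurable_deriv_snd)

lemma measurable_Aintegrand (hu : C2Periodic u) (hv : C2Periodic v) (hw : C2Periodic w) :
    Measurable (Aintegrand q u v w) := by
  unfold Aintegrand
  exact (((measurable_wedgeSq hu.measurable_deriv_snd hu.measurable_diff).pow_const _).div
    (hu.measurable_diff.norm.pow_const _)).mul (hv.measurable_diff.inner hw.measurable_diff)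

end Integrands

section DividedDifferences

variable {F : Type*} [NormedAddCommGroup F] [InnerProductSpace ℝ F]
variable {u v w : ℝ → F} {p : ℝ × ℝ} {M : ℝ}

/-- The difference quotient `(u(x) - u(y)) / (x - y)` at `p = (x, y)`, with `x - y` reduced to
`(-1/2, 1/2]`; it is `0` on the diagonal. -/
def diffQuotient (u : ℝ → F) (p : ℝ × ℝ) : F :=
  (wrap (p.1 - p.2))⁻¹ • (u p.1 - u p.2)

/-- The Taylor quotient `(u(x) - u(y) - (x - y) u'(y)) / (x - y)²` at `p = (x, y)`, with `x - y`
reduced to `(-1/2, 1/2]`; it is `0` on the diagonal. -/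
def taylorQuotient (u : ℝ → F) (p : ℝ × ℝ) : F :=
  (wrap (p.1 - p.2) ^ 2)⁻¹ • (u p.1 - u p.2 - wrap (p.1 - p.2) • deriv u p.2)

lemma C2Periodic.norm_diff_le_wrap (hu : C2Periodic u) (hM : ∀ x, ‖deriv u x‖ ≤ M) (p : ℝ × ℝ) :
    ‖u p.1 - u p.2‖ ≤ M * |wrap (p.1 - p.2)| := by
  rw [hu.sub_eq_wrap]
  exact (hu.norm_sub_le hM _ _).trans (by rw [add_sub_cancel_left])

lemma C2Periodic.diff_eq_zero (hu : C2Periodic u) (hp : wrap (p.1 - p.2) = 0) :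
    u p.1 - u p.2 = 0 := by
  rw [hu.sub_eq_wrap, hp, add_zero, sub_self]

lemma C2Periodic.norm_diffQuotient_le (hu : C2Periodic u) (hM : ∀ x, ‖deriv u x‖ ≤ M)
    (p : ℝ × ℝ) : ‖diffQuotient u p‖ ≤ M := by
  rw [diffQuotient, norm_smul, norm_inv, Real.norm_eq_abs, inv_mul_eq_div]
  exact div_le_of_le_mul₀ (abs_nonneg _) ((norm_nonneg _).trans (hM 0)) (hu.norm_diff_le_wrap hM p)

lemma C2Periodic.smul_taylorQuotient (hu : C2Periodic u) (p : ℝ × ℝ) :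
    wrap (p.1 - p.2) ^ 2 • taylorQuotient u p =
      u p.1 - u p.2 - wrap (p.1 - p.2) • deriv u p.2 := by
  rcases eq_or_ne (wrap (p.1 - p.2)) 0 with hp | hp
  · simp [hp, hu.diff_eq_zero hp]
  · rw [taylorQuotient, smul_inv_smul₀ (pow_ne_zero 2 hp)]

lemma C2Periodic.norm_taylorQuotient_le [CompleteSpace F] (hu : C2Periodic u) (p : ℝ × ℝ) :
    ‖taylorQuotient u p‖ ≤ curvatureMean u p.2 (wrap (p.1 - p.2)) := by
  rw [taylorQuotient, norm_smul, Real.norm_of_nonneg (by positivity), inv_mul_eq_div,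
    hu.sub_eq_wrap]
  exact div_le_of_le_mul₀ (sq_nonneg _) (curvatureMean_nonneg _ _ _)
    ((hu.norm_taylor_remainder_le_curvatureMean _ _).trans_eq (mul_comm _ _))

lemma diffQuotient_add_smul (N : ℝ) :
    diffQuotient (fun t => u t + N • v t) p = diffQuotient u p + N • diffQuotient v p := by
  simp only [diffQuotient]; module

lemma C2Periodic.deriv_add_smul (hu : C2Periodic u) (hv : C2Periodic v) (N x : ℝ) :
    deriv (fun t => u t + N • v t) x = deriv u x + N • deriv v x := by
  rw [hu.deriv_add (hv.smul N), hv.deriv_smul]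

lemma C2Periodic.taylorQuotient_add_smul (hu : C2Periodic u) (hv : C2Periodic v) (N : ℝ) :
    taylorQuotient (fun t => u t + N • v t) p = taylorQuotient u p + N • taylorQuotient v p := by
  simp only [taylorQuotient, hu.deriv_add_smul hv]; module

lemma inv_norm_diff_sq_smul {G : Type*} [AddCommGroup G] [Module ℝ G] (u : ℝ → F) (p : ℝ × ℝ)
    (x : G) : (‖u p.1 - u p.2‖ ^ 2)⁻¹ • wrap (p.1 - p.2) ^ 2 • x =
      (‖diffQuotient u p‖ ^ 2)⁻¹ • x := by
  rw [smul_smul, diffQuotient, norm_smul, norm_inv, Real.norm_eq_abs, mul_pow, inv_pow, sq_abs,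
    mul_inv, inv_inv, mul_comm]

lemma inner_diff_div_smul {G : Type*} [AddCommGroup G] [Module ℝ G] (u v w : ℝ → F) (p : ℝ × ℝ)
    (x : G) : (⟪v p.1 - v p.2, w p.1 - w p.2⟫ / ‖u p.1 - u p.2‖ ^ 4) • wrap (p.1 - p.2) ^ 2 • x =
      (⟪diffQuotient v p, diffQuotient w p⟫ / ‖diffQuotient u p‖ ^ 4) • x := by
  rw [smul_smul]
  congr 1
  simp only [diffQuotient, norm_smul, norm_inv, real_inner_smul_left, real_inner_smul_right,
    Real.norm_eq_abs, mul_pow, inv_pow, (by decide : Even 4).pow_abs]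
  rcases eq_or_ne (wrap (p.1 - p.2)) 0 with hp | hp
  · simp [hp]
  · field_simp

end DividedDifferences

section QuotientForms

variable {q : ℝ} {u v w φ : ℝ → E3}

lemma C2Periodic.wedge_deriv_diff (hu : C2Periodic u) (p : ℝ × ℝ) :
    wedge (deriv u p.2) (u p.1 - u p.2) =
      wrap (p.1 - p.2) ^ 2 • wedge (deriv u p.2) (taylorQuotient u p) := by
  rw [← wedge_smul_right, hu.smul_taylorQuotient, wedge_sub_smul_self]

lemma C2Periodic.tpQuotient_eq (hu : C2Periodic u) (p : ℝ × ℝ) :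
    tpQuotient u p =
      (‖diffQuotient u p‖ ^ 2)⁻¹ • wedge (deriv u p.2) (taylorQuotient u p) := by
  rw [tpQuotient, hu.wedge_deriv_diff, inv_norm_diff_sq_smul]

lemma C2Periodic.Mintegrand_eq_quotient (hw : C2Periodic w) (hq : 2 < q) (p : ℝ × ℝ) :
    Mintegrand q u v w p = ‖tpQuotient u p‖ ^ (q - 2) *
      ⟪tpQuotient u p, (‖diffQuotient u p‖ ^ 2)⁻¹ • wedge (deriv v p.2) (taylorQuotient w p)⟫ := by
  rw [Mintegrand_eq u v w p hq, ← hw.smul_taylorQuotient, wedge_smul_right, inv_norm_diff_sq_smul]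

lemma C2Periodic.Aintegrand_eq_quotient (hu : C2Periodic u) (hq : 2 < q) (p : ℝ × ℝ) :
    Aintegrand q u v w p = ‖tpQuotient u p‖ ^ (q - 2) *
      ⟪tpQuotient u p, (⟪diffQuotient v p, diffQuotient w p⟫ / ‖diffQuotient u p‖ ^ 4) •
        wedge (deriv u p.2) (taylorQuotient u p)⟫ := by
  rw [Aintegrand_eq u v w p hq, hu.wedge_deriv_diff, inner_diff_div_smul]

lemma C2Periodic.deltaTPDensity_eq (hu : C2Periodic u) (hφ : C2Periodic φ) (hq : 2 < q)
    (p : ℝ × ℝ) : deltaTPDensity q u φ p = ‖tpQuotient u p‖ ^ (q - 2) *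
      ⟪tpQuotient u p, (‖diffQuotient u p‖ ^ 2)⁻¹ •
          (wedge (deriv φ p.2) (taylorQuotient u p) + wedge (deriv u p.2) (taylorQuotient φ p)) -
        (2 * ⟪diffQuotient u p, diffQuotient φ p⟫ / ‖diffQuotient u p‖ ^ 4) •
          wedge (deriv u p.2) (taylorQuotient u p)⟫ := by
  rw [deltaTPDensity, hφ.Mintegrand_eq_quotient hq, hu.Mintegrand_eq_quotient hq,
    hu.Aintegrand_eq_quotient hq, smul_add, mul_div_assoc, mul_smul, inner_sub_right,
    inner_add_right, real_inner_smul_right _ _ 2]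
  ring

end QuotientForms

section RemainderBound

variable {F : Type*} [NormedAddCommGroup F] [NormedSpace ℝ F]
variable {u ψ : ℝ → F} {Λ : ℝ}

/-- The function `1 + m_u + m_ψ`, with `m` the curvature mean over the segment from `y` to `x`; its
fourth power dominates every integrand of the expansion of `TP` at `u` in direction `ψ`. -/
def remainderBound (u ψ : ℝ → F) (p : ℝ × ℝ) : ℝ :=
  1 + curvatureMean u p.2 (wrap (p.1 - p.2)) + curvatureMean ψ p.2 (wrap (p.1 - p.2))

/-- A bound for the integral of the fourth power of `remainderBound u ψ` when `bendEnergy u ≤ Λ`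
and `bendEnergy ψ ≤ 1`. -/
def remainderMoment (Λ : ℝ) : ℝ :=
  27 * (1 + 144 * Λ ^ 2 + 144)

lemma remainderMoment_pos (Λ : ℝ) : 0 < remainderMoment Λ := by
  unfold remainderMoment; positivity

lemma one_add_curvatureMean_le_remainderBound (u ψ : ℝ → F) (p : ℝ × ℝ) :
    1 + curvatureMean u p.2 (wrap (p.1 - p.2)) ≤ remainderBound u ψ p :=
  le_add_of_nonneg_right (curvatureMean_nonneg _ _ _)

lemma one_le_remainderBound (u ψ : ℝ → F) (p : ℝ × ℝ) : 1 ≤ remainderBound u ψ p :=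
  (le_add_of_nonneg_right (curvatureMean_nonneg _ _ _)).trans
    (one_add_curvatureMean_le_remainderBound u ψ p)

lemma remainderBound_nonneg (u ψ : ℝ → F) (p : ℝ × ℝ) : 0 ≤ remainderBound u ψ p :=
  zero_le_one.trans (one_le_remainderBound u ψ p)

lemma one_add_add_pow_four_le (a b : ℝ) : (1 + a + b) ^ 4 ≤ 27 * (1 + a ^ 4 + b ^ 4) := by
  have hsq (x y : ℝ) : (1 + x + y) ^ 2 ≤ 3 * (1 + x ^ 2 + y ^ 2) := by
    linarith [sq_nonneg (1 - x), sq_nonneg (1 - y), sq_nonneg (x - y)]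
  calc (1 + a + b) ^ 4 = ((1 + a + b) ^ 2) ^ 2 := by ring
    _ ≤ (3 * (1 + a ^ 2 + b ^ 2)) ^ 2 := pow_le_pow_left₀ (sq_nonneg _) (hsq a b) 2
    _ = 9 * (1 + a ^ 2 + b ^ 2) ^ 2 := by ring
    _ ≤ 9 * (3 * (1 + (a ^ 2) ^ 2 + (b ^ 2) ^ 2)) := by gcongr; exact hsq _ _
    _ = 27 * (1 + a ^ 4 + b ^ 4) := by ring

lemma volume_unitSq : volume unitSq = 1 := by
  rw [unitSq, Measure.volume_eq_prod, Measure.prod_prod]; simp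

lemma measurable_remainderBound (hu : C2Periodic u) (hψ : C2Periodic ψ) :
    Measurable (remainderBound u ψ) :=
  (measurable_const.add hu.measurable_curvatureMean_wrap).add hψ.measurable_curvatureMean_wrap

lemma ofReal_remainderBound_pow_four_le (u ψ : ℝ → F) (p : ℝ × ℝ) :
    ENNReal.ofReal (remainderBound u ψ p ^ 4) ≤ 27 * (1 +
      ENNReal.ofReal (curvatureMean u p.2 (wrap (p.1 - p.2)) ^ 4) +
      ENNReal.ofReal (curvatureMean ψ p.2 (wrap (p.1 - p.2)) ^ 4)) := by
  rw [← ENNReal.ofReal_one, ← ENNReal.ofReal_add (by positivity) (by positivity),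
    ← ENNReal.ofReal_add (by positivity) (by positivity), ← ENNReal.ofReal_ofNat 27,
    ← ENNReal.ofReal_mul (by positivity)]
  exact ENNReal.ofReal_le_ofReal (one_add_add_pow_four_le _ _)

variable (hu : C2Periodic u) (hΛ : bendEnergy u ≤ Λ) (hψ : C2Periodic ψ) (hψ1 : bendEnergy ψ ≤ 1)
include hu hΛ hψ hψ1

lemma lintegral_remainderBound_pow_four_le :
    ∫⁻ p in unitSq, ENNReal.ofReal (remainderBound u ψ p ^ 4) ≤
      ENNReal.ofReal (remainderMoment Λ) := by
  have hu_meas := (hu.measurable_curvatureMean_wrap.pow_const 4).ennreal_ofReal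
  have hψ_meas := (hψ.measurable_curvatureMean_wrap.pow_const 4).ennreal_ofReal
  have hu_sq : bendEnergy u ^ 2 ≤ Λ ^ 2 := pow_le_pow_left₀ (bendEnergy_nonneg u) hΛ 2
  have hψ_sq : bendEnergy ψ ^ 2 ≤ 1 := pow_le_one₀ (bendEnergy_nonneg ψ) hψ1
  refine (lintegral_mono (ofReal_remainderBound_pow_four_le u ψ)).trans ?_
  rw [lintegral_const_mul _ (by fun_prop), lintegral_add_left (by fun_prop),
    lintegral_add_left (by fun_prop), setLIntegral_const, volume_unitSq, one_mul]
  calc _ ≤ 27 * (1 + ENNReal.ofReal (144 * Λ ^ 2) + ENNReal.ofReal 144) := by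
        gcongr
        · exact hu.lintegral_curvatureMean_pow_four_le.trans
            (ENNReal.ofReal_le_ofReal (by linarith))
        · exact hψ.lintegral_curvatureMean_pow_four_le.trans
            (ENNReal.ofReal_le_ofReal (by linarith))
    _ = ENNReal.ofReal (remainderMoment Λ) := by
        rw [← ENNReal.ofReal_one, ← ENNReal.ofReal_add (by positivity) (by positivity),
          ← ENNReal.ofReal_add (by positivity) (by positivity), ← ENNReal.ofReal_ofNat 27,
          ← ENNReal.ofReal_mul (by positivity), remainderMoment]

lemma integrableOn_remainderBound_pow_four :
    IntegrableOn (fun p => remainderBound u ψ p ^ 4) unitSq := by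
  refine ⟨((measurable_remainderBound hu hψ).pow_const 4).aestronglyMeasurable, ?_⟩
  rw [hasFiniteIntegral_iff_ofReal (.of_forall fun p => pow_nonneg (remainderBound_nonneg u ψ p) 4)]
  exact (lintegral_remainderBound_pow_four_le hu hΛ hψ hψ1).trans_lt ENNReal.ofReal_lt_top

lemma integral_remainderBound_pow_four_le :
    ∫ p in unitSq, remainderBound u ψ p ^ 4 ≤ remainderMoment Λ := by
  rw [integral_eq_lintegral_of_nonneg_ae
    (.of_forall fun p => pow_nonneg (remainderBound_nonneg u ψ p) 4)
    ((measurable_remainderBound hu hψ).pow_const 4).aestronglyMeasurable]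
  exact ENNReal.toReal_le_of_le_ofReal (remainderMoment_pos Λ).le
    (lintegral_remainderBound_pow_four_le hu hΛ hψ hψ1)

end RemainderBound

section TaylorTP

/-- Periodic curves with speed at most `2`, bending energy at most `Λ` and bi-Lipschitz separation
constant at least `ℓ`. -/
structure Tame (u : ℝ → E3) (Λ ℓ : ℝ) : Prop where
  c2Periodic : C2Periodic u
  speed_le : ∀ x, ‖deriv u x‖ ≤ 2
  bendEnergy_le : bendEnergy u ≤ Λ
  sep_pos : 0 < ℓ
  sep_le_one : ℓ ≤ 1
  sep : ∀ x y, ℓ * |wrap (x - y)| ≤ ‖u x - u y‖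

lemma abs_rpow_mul_inner_le {F : Type*} [NormedAddCommGroup F] [InnerProductSpace ℝ F]
    {z D : F} {q M B : ℝ} (hq : 2 ≤ q) (hq4 : q ≤ 4) (hM : 1 ≤ M)
    (hz : ‖z‖ ≤ M) (hD : ‖D‖ ≤ B) : |‖z‖ ^ (q - 2) * ⟪z, D⟫| ≤ M ^ 3 * B := by
  have : 0 ≤ B := (norm_nonneg _).trans hD
  rw [abs_mul, abs_of_nonneg (by positivity)]
  calc ‖z‖ ^ (q - 2) * |⟪z, D⟫| ≤ M ^ 2 * (M * B) := by
        gcongr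
        · exact rpow_sub_two_le_sq hq hq4 hM (norm_nonneg _) hz
        · exact (abs_real_inner_le_norm _ _).trans (by gcongr)
    _ = M ^ 3 * B := by ring

lemma C2Periodic.norm_deriv_le_one {F : Type*} [NormedAddCommGroup F] [NormedSpace ℝ F]
    [CompleteSpace F] {ψ : ℝ → F} (hψ : C2Periodic ψ) (hψ1 : bendEnergy ψ ≤ 1) (x : ℝ) :
    ‖deriv ψ x‖ ≤ 1 :=
  (sq_le_one_iff₀ (norm_nonneg _)).1 ((hψ.norm_deriv_sq_le x).trans hψ1)

lemma TPe_eq_ofReal_integral {u : ℝ → E3} {q : ℝ} (hq : 0 ≤ q)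
    (h : IntegrableOn (tpDensity q u) unitSq) :
    TPe q u = ENNReal.ofReal (1 / q * ∫ p in unitSq, tpDensity q u p) := by
  rw [ENNReal.ofReal_mul (by positivity), ofReal_integral_eq_lintegral_ofReal h
    (.of_forall fun p => tpDensity_nonneg u p)]
  rfl

lemma TPr_eq_integral {u : ℝ → E3} {q : ℝ} (hq : 0 ≤ q)
    (h : IntegrableOn (tpDensity q u) unitSq) :
    TPr q u = 1 / q * ∫ p in unitSq, tpDensity q u p := by
  have : 0 ≤ ∫ p in unitSq, tpDensity q u p := integral_nonneg fun p => tpDensity_nonneg u p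
  rw [TPr, TPe_eq_ofReal_integral hq h, ENNReal.toReal_ofReal (by positivity)]

namespace Tame

variable {u ψ : ℝ → E3} {Λ ℓ q N : ℝ}

lemma le_norm_diffQuotient (hu : Tame u Λ ℓ) {p : ℝ × ℝ} (hp : wrap (p.1 - p.2) ≠ 0) :
    ℓ ≤ ‖diffQuotient u p‖ := by
  rw [diffQuotient, norm_smul, norm_inv, Real.norm_eq_abs, le_inv_mul_iff₀ (abs_pos.2 hp), mul_comm]
  exact hu.sep p.1 p.2

lemma inv_norm_diffQuotient_sq_le (hu : Tame u Λ ℓ) (p : ℝ × ℝ) :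
    (‖diffQuotient u p‖ ^ 2)⁻¹ ≤ (ℓ ^ 2)⁻¹ := by
  have := hu.sep_pos
  rcases eq_or_ne (wrap (p.1 - p.2)) 0 with hp | hp
  · simp only [diffQuotient, hp, inv_zero, zero_smul, norm_zero, ne_eq, OfNat.ofNat_ne_zero,
      not_false_eq_true, zero_pow]
    positivity
  · gcongr
    exact hu.le_norm_diffQuotient hp

lemma norm_taylorQuotient_le_remainderBound (hu : Tame u Λ ℓ) (ψ : ℝ → E3) (p : ℝ × ℝ) :
    ‖taylorQuotient u p‖ ≤ remainderBound u ψ p := by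
  linarith [hu.c2Periodic.norm_taylorQuotient_le p,
    one_add_curvatureMean_le_remainderBound u ψ p]

lemma _root_.C2Periodic.norm_taylorQuotient_le_remainderBound (hψ : C2Periodic ψ) (u : ℝ → E3)
    (p : ℝ × ℝ) : ‖taylorQuotient ψ p‖ ≤ remainderBound u ψ p := by
  have := curvatureMean_nonneg u p.2 (wrap (p.1 - p.2))
  have := hψ.norm_taylorQuotient_le p
  unfold remainderBound; linarith

lemma norm_wedge_div_le (hu : Tame u Λ ℓ) {X Y : E3} {s : ℝ} (hX : ‖X‖ ≤ 2) (hY : ‖Y‖ ≤ s)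
    (p : ℝ × ℝ) : ‖(‖diffQuotient u p‖ ^ 2)⁻¹ • wedge X Y‖ ≤ 2 * s / ℓ ^ 2 := by
  rw [norm_smul, Real.norm_of_nonneg (by positivity), div_eq_inv_mul]
  exact mul_le_mul (hu.inv_norm_diffQuotient_sq_le p)
    ((norm_wedge_le X Y).trans (mul_le_mul hX hY (norm_nonneg _) zero_le_two)) (norm_nonneg _)
    (by positivity)

lemma norm_tpQuotient_le (hu : Tame u Λ ℓ) (ψ : ℝ → E3) (p : ℝ × ℝ) :
    ‖tpQuotient u p‖ ≤ 2 * remainderBound u ψ p / ℓ ^ 2 := by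
  rw [hu.c2Periodic.tpQuotient_eq]
  exact hu.norm_wedge_div_le (hu.speed_le _) (hu.norm_taylorQuotient_le_remainderBound ψ p) p

lemma one_le_two_mul_remainderBound_div (hu : Tame u Λ ℓ) (ψ : ℝ → E3) (p : ℝ × ℝ) :
    1 ≤ 2 * remainderBound u ψ p / ℓ ^ 2 := by
  rw [one_le_div (pow_pos hu.sep_pos 2)]
  linarith [one_le_remainderBound u ψ p, pow_le_one₀ (n := 2) hu.sep_pos.le hu.sep_le_one]

lemma abs_inner_diffQuotient_div_le (hu : Tame u Λ ℓ) (hψ : C2Periodic ψ)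
    (hψ1 : bendEnergy ψ ≤ 1) (p : ℝ × ℝ) :
    |⟪diffQuotient u p, diffQuotient ψ p⟫ / ‖diffQuotient u p‖ ^ 2| ≤ 2 / ℓ ^ 2 := by
  have inner_le : |⟪diffQuotient u p, diffQuotient ψ p⟫| ≤ 2 := by
    calc |⟪diffQuotient u p, diffQuotient ψ p⟫| ≤ ‖diffQuotient u p‖ * ‖diffQuotient ψ p‖ :=
          abs_real_inner_le_norm _ _
      _ ≤ 2 * 1 := mul_le_mul (hu.c2Periodic.norm_diffQuotient_le hu.speed_le p)
          (hψ.norm_diffQuotient_le (hψ.norm_deriv_le_one hψ1) p) (norm_nonneg _) zero_le_two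
      _ = 2 := mul_one 2
  rw [abs_div, abs_of_nonneg (sq_nonneg ‖diffQuotient u p‖), div_eq_mul_inv, div_eq_mul_inv]
  exact mul_le_mul inner_le (hu.inv_norm_diffQuotient_sq_le p) (by positivity) zero_le_two

section Integrability

variable (hu : Tame u Λ ℓ) (hq : 2 < q) (hq4 : q ≤ 4)
include hu hq hq4

lemma integrableOn_tpDensity : IntegrableOn (tpDensity q u) unitSq := by
  have zero_periodic : C2Periodic (fun _ : ℝ => (0 : E3)) := ⟨contDiff_const, fun _ => rfl⟩
  have bendEnergy_zero : bendEnergy (fun _ : ℝ => (0 : E3)) ≤ 1 := by simp [bendEnergy]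
  refine ((integrableOn_remainderBound_pow_four hu.c2Periodic hu.bendEnergy_le zero_periodic
    bendEnergy_zero).const_mul ((2 / ℓ ^ 2) ^ 4)).mono'
      hu.c2Periodic.measurable_tpDensity.aestronglyMeasurable (.of_forall fun p => ?_)
  rw [Real.norm_of_nonneg (tpDensity_nonneg _ _), tpDensity_eq]
  set M := 2 * remainderBound u (fun _ => 0) p / ℓ ^ 2 with hM
  calc ‖tpQuotient u p‖ ^ q ≤ M ^ q :=
        Real.rpow_le_rpow (norm_nonneg _) (hu.norm_tpQuotient_le _ p) (by linarith)
    _ ≤ M ^ (4 : ℝ) :=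
        Real.rpow_le_rpow_of_exponent_le (hu.one_le_two_mul_remainderBound_div _ p) hq4
    _ = M ^ 4 := by norm_cast
    _ = (2 / ℓ ^ 2) ^ 4 * remainderBound u (fun _ => 0) p ^ 4 := by rw [hM]; ring

lemma abs_Mintegrand_le {v w : ℝ → E3} (hw : C2Periodic w) {p : ℝ × ℝ} (hv : ‖deriv v p.2‖ ≤ 2)
    (hwψ : ‖taylorQuotient w p‖ ≤ remainderBound u ψ p) :
    |Mintegrand q u v w p| ≤ 16 / ℓ ^ 8 * remainderBound u ψ p ^ 4 := by
  rw [hw.Mintegrand_eq_quotient hq]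
  refine (abs_rpow_mul_inner_le hq.le hq4 (hu.one_le_two_mul_remainderBound_div ψ p)
    (hu.norm_tpQuotient_le ψ p) (hu.norm_wedge_div_le hv hwψ p)).trans_eq ?_
  ring

variable (hψ : C2Periodic ψ) (hψ1 : bendEnergy ψ ≤ 1)
include hψ hψ1

lemma abs_Aintegrand_le (p : ℝ × ℝ) :
    |Aintegrand q u u ψ p| ≤ 32 / ℓ ^ 10 * remainderBound u ψ p ^ 4 := by
  have hfactor : (⟪diffQuotient u p, diffQuotient ψ p⟫ / ‖diffQuotient u p‖ ^ 4) •
      wedge (deriv u p.2) (taylorQuotient u p) =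
      (⟪diffQuotient u p, diffQuotient ψ p⟫ / ‖diffQuotient u p‖ ^ 2) • tpQuotient u p := by
    rw [hu.c2Periodic.tpQuotient_eq, smul_smul, ← div_eq_mul_inv, div_div, ← pow_add]
  rw [hu.c2Periodic.Aintegrand_eq_quotient hq, hfactor]
  have norm_le : ‖(⟪diffQuotient u p, diffQuotient ψ p⟫ / ‖diffQuotient u p‖ ^ 2) •
      tpQuotient u p‖ ≤ 2 / ℓ ^ 2 * (2 * remainderBound u ψ p / ℓ ^ 2) := by
    rw [norm_smul, Real.norm_eq_abs]
    exact mul_le_mul (hu.abs_inner_diffQuotient_div_le hψ hψ1 p) (hu.norm_tpQuotient_le ψ p)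
      (norm_nonneg _) (by positivity)
  refine (abs_rpow_mul_inner_le hq.le hq4 (hu.one_le_two_mul_remainderBound_div ψ p)
    (hu.norm_tpQuotient_le ψ p) norm_le).trans_eq ?_
  ring

lemma integrableOn_Mintegrand_right : IntegrableOn (Mintegrand q u u ψ) unitSq :=
  ((integrableOn_remainderBound_pow_four hu.c2Periodic hu.bendEnergy_le hψ hψ1).const_mul _).mono'
    (measurable_Mintegrand hu.c2Periodic hu.c2Periodic hψ).aestronglyMeasurable
    (.of_forall fun p => hu.abs_Mintegrand_le hq hq4 hψ (hu.speed_le _)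
      (hψ.norm_taylorQuotient_le_remainderBound u p))

lemma integrableOn_Mintegrand_left : IntegrableOn (Mintegrand q u ψ u) unitSq :=
  ((integrableOn_remainderBound_pow_four hu.c2Periodic hu.bendEnergy_le hψ hψ1).const_mul _).mono'
    (measurable_Mintegrand hu.c2Periodic hψ hu.c2Periodic).aestronglyMeasurable
    (.of_forall fun p => hu.abs_Mintegrand_le hq hq4 hu.c2Periodic
      ((hψ.norm_deriv_le_one hψ1 _).trans one_le_two)
      (hu.norm_taylorQuotient_le_remainderBound ψ p))

lemma integrableOn_Aintegrand : IntegrableOn (Aintegrand q u u ψ) unitSq :=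
  ((integrableOn_remainderBound_pow_four hu.c2Periodic hu.bendEnergy_le hψ hψ1).const_mul _).mono'
    (measurable_Aintegrand hu.c2Periodic hu.c2Periodic hψ).aestronglyMeasurable
    (.of_forall fun p => hu.abs_Aintegrand_le hq hq4 hψ hψ1 p)

lemma integrableOn_deltaTPDensity : IntegrableOn (deltaTPDensity q u ψ) unitSq :=
  ((hu.integrableOn_Mintegrand_right hq hq4 hψ hψ1).add
    (hu.integrableOn_Mintegrand_left hq hq4 hψ hψ1)).sub
      ((hu.integrableOn_Aintegrand hq hq4 hψ hψ1).const_mul 2)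

lemma integrableOn_tpDensity_majorant (N : ℝ) :
    IntegrableOn (fun p => tpDensity q u p + N * (q * deltaTPDensity q u ψ p) +
      10 ^ 8 / ℓ ^ 12 * N ^ 2 * remainderBound u ψ p ^ 4) unitSq :=
  ((hu.integrableOn_tpDensity hq hq4).add
    (((hu.integrableOn_deltaTPDensity hq hq4 hψ hψ1).const_mul q).const_mul N)).add
      ((integrableOn_remainderBound_pow_four hu.c2Periodic hu.bendEnergy_le hψ hψ1).const_mul _)

lemma integral_deltaTPDensity : ∫ p in unitSq, deltaTPDensity q u ψ p = deltaTP q u ψ := by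
  have right := hu.integrableOn_Mintegrand_right hq hq4 hψ hψ1
  have left := hu.integrableOn_Mintegrand_left hq hq4 hψ hψ1
  unfold deltaTPDensity deltaTP Mfun Afun
  rw [← integral_const_mul, ← integral_add right left]
  exact integral_sub (right.add left) ((hu.integrableOn_Aintegrand hq hq4 hψ hψ1).const_mul 2)

lemma abs_deltaTPDensity_le (p : ℝ × ℝ) :
    |deltaTPDensity q u ψ p| ≤ 96 / ℓ ^ 10 * remainderBound u ψ p ^ 4 := by
  have weaken : 16 / ℓ ^ 8 * remainderBound u ψ p ^ 4 ≤
      16 / ℓ ^ 10 * remainderBound u ψ p ^ 4 := by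
    have := hu.sep_pos
    gcongr ?_ * _
    exact div_le_div_of_nonneg_left (by norm_num) (by positivity)
      (pow_le_pow_of_le_one hu.sep_pos.le hu.sep_le_one (by norm_num))
  have right := (hu.abs_Mintegrand_le hq hq4 hψ (hu.speed_le _)
    (hψ.norm_taylorQuotient_le_remainderBound u p)).trans weaken
  have left := (hu.abs_Mintegrand_le hq hq4 hu.c2Periodic
    ((hψ.norm_deriv_le_one hψ1 _).trans one_le_two)
    (hu.norm_taylorQuotient_le_remainderBound ψ p)).trans weaken
  have middle := hu.abs_Aintegrand_le hq hq4 hψ hψ1 p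
  calc |deltaTPDensity q u ψ p|
      ≤ |Mintegrand q u u ψ p| + |Mintegrand q u ψ u p| + |2 * Aintegrand q u u ψ p| :=
        (abs_sub _ _).trans (add_le_add_left (abs_add_le _ _) _)
    _ = |Mintegrand q u u ψ p| + |Mintegrand q u ψ u p| + 2 * |Aintegrand q u u ψ p| := by
        rw [abs_mul, abs_two]
    _ ≤ 16 / ℓ ^ 10 * remainderBound u ψ p ^ 4 + 16 / ℓ ^ 10 * remainderBound u ψ p ^ 4 +
          2 * (32 / ℓ ^ 10 * remainderBound u ψ p ^ 4) := by gcongr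
    _ = 96 / ℓ ^ 10 * remainderBound u ψ p ^ 4 := by ring

lemma abs_deltaTP_le : |deltaTP q u ψ| ≤ 96 / ℓ ^ 10 * remainderMoment Λ := by
  have dominating := integrableOn_remainderBound_pow_four hu.c2Periodic hu.bendEnergy_le hψ hψ1
  have := hu.sep_pos
  rw [← hu.integral_deltaTPDensity hq hq4 hψ hψ1, ← Real.norm_eq_abs]
  calc ‖∫ p in unitSq, deltaTPDensity q u ψ p‖
      ≤ ∫ p in unitSq, 96 / ℓ ^ 10 * remainderBound u ψ p ^ 4 :=
        norm_integral_le_of_norm_le (dominating.const_mul _)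
          (.of_forall fun p => hu.abs_deltaTPDensity_le hq hq4 hψ hψ1 p)
    _ = 96 / ℓ ^ 10 * ∫ p in unitSq, remainderBound u ψ p ^ 4 := integral_const_mul _ _
    _ ≤ 96 / ℓ ^ 10 * remainderMoment Λ := by
        gcongr
        exact integral_remainderBound_pow_four_le hu.c2Periodic hu.bendEnergy_le hψ hψ1

end Integrability

section Expansion

lemma _root_.C2Periodic.tpQuotient_add_smul (hu : C2Periodic u) (hψ : C2Periodic ψ) (N : ℝ)
    (p : ℝ × ℝ) : tpQuotient (fun t => u t + N • ψ t) p =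
      (‖diffQuotient u p + N • diffQuotient ψ p‖ ^ 2)⁻¹ •
        (wedge (deriv u p.2) (taylorQuotient u p) +
          N • (wedge (deriv ψ p.2) (taylorQuotient u p) +
            wedge (deriv u p.2) (taylorQuotient ψ p)) +
          N ^ 2 • wedge (deriv ψ p.2) (taylorQuotient ψ p)) := by
  rw [(hu.add (hψ.smul N)).tpQuotient_eq, diffQuotient_add_smul, hu.deriv_add_smul hψ,
    hu.taylorQuotient_add_smul hψ]
  simp only [wedge_add_left, wedge_add_right, wedge_smul_left, wedge_smul_right]
  module

variable (hu : Tame u Λ ℓ) (hψ : C2Periodic ψ) (hψ1 : bendEnergy ψ ≤ 1) (hN : 0 ≤ N)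
  (hNℓ : N ≤ ℓ / 2)
include hu hψ hψ1 hN hNℓ

lemma quotientPerturbation {p : ℝ × ℝ} (hp : wrap (p.1 - p.2) ≠ 0) :
    QuotientPerturbation (diffQuotient u p) (N • diffQuotient ψ p)
      (wedge (deriv u p.2) (taylorQuotient u p))
      (N • (wedge (deriv ψ p.2) (taylorQuotient u p) +
        wedge (deriv u p.2) (taylorQuotient ψ p)))
      (N ^ 2 • wedge (deriv ψ p.2) (taylorQuotient ψ p))
      (ℓ ^ 2)⁻¹ N (remainderBound u ψ p) := by
  have ℓ_pos := hu.sep_pos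
  have speed_u := hu.speed_le p.2
  have speed_ψ := hψ.norm_deriv_le_one hψ1
  have taylor_u := hu.norm_taylorQuotient_le_remainderBound ψ p
  have taylor_ψ := hψ.norm_taylorQuotient_le_remainderBound u p
  have base_ge := hu.le_norm_diffQuotient hp
  have perturbation_le : ‖N • diffQuotient ψ p‖ ≤ N := by
    rw [norm_smul, Real.norm_of_nonneg hN]
    exact mul_le_of_le_one_right hN (hψ.norm_diffQuotient_le speed_ψ p)
  have add_ge : ℓ / 2 ≤ ‖diffQuotient u p + N • diffQuotient ψ p‖ := by
    linarith [norm_sub_le_norm_add (diffQuotient u p) (N • diffQuotient ψ p)]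
  have wedge_le {X Y : E3} {c d : ℝ} (hX : ‖X‖ ≤ c) (hY : ‖Y‖ ≤ d) : ‖wedge X Y‖ ≤ c * d :=
    (norm_wedge_le X Y).trans
      (mul_le_mul hX hY (norm_nonneg _) ((norm_nonneg X).trans hX))
  refine ⟨(one_le_inv₀ (by positivity)).2 (pow_le_one₀ ℓ_pos.le hu.sep_le_one), hN,
    by linarith [hu.sep_le_one], one_le_remainderBound u ψ p, norm_pos_iff.1 (by linarith),
    norm_pos_iff.1 (by linarith), hu.c2Periodic.norm_diffQuotient_le hu.speed_le p,
    perturbation_le, hu.inv_norm_diffQuotient_sq_le p, ?_, wedge_le speed_u taylor_u, ?_, ?_⟩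
  · calc (‖diffQuotient u p + N • diffQuotient ψ p‖ ^ 2)⁻¹ ≤ ((ℓ / 2) ^ 2)⁻¹ := by gcongr
      _ = 4 * (ℓ ^ 2)⁻¹ := by rw [div_pow, inv_div]; ring
  · rw [norm_smul, Real.norm_of_nonneg hN, mul_comm 2 N, mul_assoc]
    gcongr
    have mean_sum_le : ‖taylorQuotient u p‖ + 2 * ‖taylorQuotient ψ p‖ ≤
        2 * remainderBound u ψ p := by
      have := curvatureMean_nonneg u p.2 (wrap (p.1 - p.2))
      have := hu.c2Periodic.norm_taylorQuotient_le p
      have := hψ.norm_taylorQuotient_le p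
      unfold remainderBound
      linarith
    refine le_trans ?_ mean_sum_le
    exact (norm_add_le _ _).trans (add_le_add ((wedge_le (speed_ψ _) le_rfl).trans_eq (one_mul _))
      (wedge_le speed_u le_rfl))
  · rw [norm_smul, Real.norm_of_nonneg (by positivity)]
    gcongr
    exact (wedge_le (speed_ψ _) taylor_ψ).trans_eq (one_mul _)

variable (hq : 2 < q) (hq4 : q ≤ 4)
include hq hq4

lemma tpDensity_add_le (p : ℝ × ℝ) : tpDensity q (fun t => u t + N • ψ t) p ≤
    tpDensity q u p + N * (q * deltaTPDensity q u ψ p) +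
      10 ^ 8 / ℓ ^ 12 * N ^ 2 * remainderBound u ψ p ^ 4 := by
  rw [tpDensity_eq, tpDensity_eq, hu.c2Periodic.deltaTPDensity_eq hψ hq]
  rcases eq_or_ne (wrap (p.1 - p.2)) 0 with hp | hp
  · have tpQuotient_eq_zero {v : ℝ → E3} (hv : C2Periodic v) : tpQuotient v p = 0 := by
      rw [tpQuotient, hv.diff_eq_zero hp, norm_zero, zero_pow two_ne_zero, inv_zero, zero_smul]
    have : 0 ≤ 10 ^ 8 / ℓ ^ 12 * N ^ 2 * remainderBound u ψ p ^ 4 := by positivity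
    rw [tpQuotient_eq_zero hu.c2Periodic, tpQuotient_eq_zero (hu.c2Periodic.add (hψ.smul N)),
      inner_zero_left]
    linarith
  · have expansion := (hu.quotientPerturbation hψ hψ1 hN hNℓ hp).norm_rpow_le hq.le hq4
    rw [← hu.c2Periodic.tpQuotient_eq, ← hu.c2Periodic.tpQuotient_add_smul hψ] at expansion
    refine expansion.trans_eq ?_
    have linear_in_N : (‖diffQuotient u p‖ ^ 2)⁻¹ • N • (wedge (deriv ψ p.2) (taylorQuotient u p) +
          wedge (deriv u p.2) (taylorQuotient ψ p)) -
        (2 * ⟪diffQuotient u p, N • diffQuotient ψ p⟫ / ‖diffQuotient u p‖ ^ 4) •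
          wedge (deriv u p.2) (taylorQuotient u p) =
        N • ((‖diffQuotient u p‖ ^ 2)⁻¹ • (wedge (deriv ψ p.2) (taylorQuotient u p) +
          wedge (deriv u p.2) (taylorQuotient ψ p)) -
        (2 * ⟪diffQuotient u p, diffQuotient ψ p⟫ / ‖diffQuotient u p‖ ^ 4) •
          wedge (deriv u p.2) (taylorQuotient u p)) := by
      rw [real_inner_smul_right]; module
    rw [linear_in_N, real_inner_smul_right]
    ring

lemma integrableOn_tpDensity_add :
    IntegrableOn (tpDensity q fun t => u t + N • ψ t) unitSq := by
  refine (hu.integrableOn_tpDensity_majorant hq hq4 hψ hψ1 N).mono'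
    (hu.c2Periodic.add (hψ.smul N)).measurable_tpDensity.aestronglyMeasurable
    (.of_forall fun p => ?_)
  rw [Real.norm_of_nonneg (tpDensity_nonneg _ _)]
  exact hu.tpDensity_add_le hψ hψ1 hN hNℓ hq hq4 p

lemma integral_tpDensity_add_le :
    ∫ p in unitSq, tpDensity q (fun t => u t + N • ψ t) p ≤
      (∫ p in unitSq, tpDensity q u p) + N * (q * deltaTP q u ψ) +
        10 ^ 8 / ℓ ^ 12 * N ^ 2 * remainderMoment Λ := by
  have density := hu.integrableOn_tpDensity hq hq4
  have variation :=
    ((hu.integrableOn_deltaTPDensity hq hq4 hψ hψ1).const_mul q).const_mul N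
  have remainder := (integrableOn_remainderBound_pow_four hu.c2Periodic hu.bendEnergy_le hψ
    hψ1).const_mul (10 ^ 8 / ℓ ^ 12 * N ^ 2)
  have := hu.sep_pos
  calc _ ≤ ∫ p in unitSq, (tpDensity q u p + N * (q * deltaTPDensity q u ψ p) +
          10 ^ 8 / ℓ ^ 12 * N ^ 2 * remainderBound u ψ p ^ 4) :=
        integral_mono (hu.integrableOn_tpDensity_add hψ hψ1 hN hNℓ hq hq4)
          (hu.integrableOn_tpDensity_majorant hq hq4 hψ hψ1 N)
          (hu.tpDensity_add_le hψ hψ1 hN hNℓ hq hq4)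
    _ = (∫ p in unitSq, tpDensity q u p) + N * (q * deltaTP q u ψ) +
          10 ^ 8 / ℓ ^ 12 * N ^ 2 * ∫ p in unitSq, remainderBound u ψ p ^ 4 := by
        rw [integral_add (f := fun p => tpDensity q u p + N * (q * deltaTPDensity q u ψ p))
          (density.add variation) remainder, integral_add density variation, integral_const_mul,
          integral_const_mul, integral_const_mul, hu.integral_deltaTPDensity hq hq4 hψ hψ1]
    _ ≤ _ := by
        gcongr
        exact integral_remainderBound_pow_four_le hu.c2Periodic hu.bendEnergy_le hψ hψ1

lemma TPe_add_ne_top : TPe q (fun t => u t + N • ψ t) ≠ ⊤ := by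
  rw [TPe_eq_ofReal_integral (by linarith) (hu.integrableOn_tpDensity_add hψ hψ1 hN hNℓ hq hq4)]
  exact ENNReal.ofReal_ne_top

lemma TPr_add_le : TPr q (fun t => u t + N • ψ t) ≤
    TPr q u + N * deltaTP q u ψ + 10 ^ 8 / ℓ ^ 12 * remainderMoment Λ * N ^ 2 := by
  have := hu.sep_pos
  have := remainderMoment_pos Λ
  rw [TPr_eq_integral (by linarith) (hu.integrableOn_tpDensity_add hψ hψ1 hN hNℓ hq hq4),
    TPr_eq_integral (by linarith) (hu.integrableOn_tpDensity hq hq4)]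
  have inv_q_le : 1 / q ≤ 1 := by rw [div_le_one (by linarith)]; linarith
  calc 1 / q * ∫ p in unitSq, tpDensity q (fun t => u t + N • ψ t) p
      ≤ 1 / q * ((∫ p in unitSq, tpDensity q u p) + N * (q * deltaTP q u ψ) +
          10 ^ 8 / ℓ ^ 12 * N ^ 2 * remainderMoment Λ) := by
        gcongr
        exact hu.integral_tpDensity_add_le hψ hψ1 hN hNℓ hq hq4
    _ = 1 / q * (∫ p in unitSq, tpDensity q u p) + N * deltaTP q u ψ +
          1 / q * (10 ^ 8 / ℓ ^ 12 * N ^ 2 * remainderMoment Λ) := by field_simp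
    _ ≤ 1 / q * (∫ p in unitSq, tpDensity q u p) + N * deltaTP q u ψ +
          1 * (10 ^ 8 / ℓ ^ 12 * N ^ 2 * remainderMoment Λ) := by gcongr
    _ = _ := by ring

end Expansion

end Tame

end TaylorTP

section Geometry

lemma periodic_fract_add {α : Type*} {f : ℝ → α} (hf : Function.Periodic f 1) (y t : ℝ) :
    f (Int.fract y + t) = f (y + t) := by
  rw [show Int.fract y + t = y + t - ⌊y⌋ * 1 by rw [Int.fract]; ring, hf.sub_int_mul_eq]

lemma exists_shortest_chord {F : Type*} [NormedAddCommGroup F] {u : ℝ → F} (hu : Continuous u)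
    (hper : Function.Periodic u 1) {δ : ℝ} (hδ : δ ≤ 1 / 2) :
    ∃ y₀, ∃ s₀ ∈ Icc δ (1 - δ), ∀ y, ∀ s ∈ Icc δ (1 - δ),
      ‖u (y₀ + s₀) - u y₀‖ ≤ ‖u (y + s) - u y‖ := by
  obtain ⟨⟨y₀, s₀⟩, ⟨-, hs₀⟩, hmin⟩ :=
    (isCompact_Icc.prod isCompact_Icc).exists_isMinOn (s := Icc (0 : ℝ) 1 ×ˢ Icc δ (1 - δ))
      ⟨(0, δ), ⟨by simp, by simp; linarith⟩⟩ (f := fun p : ℝ × ℝ => ‖u (p.1 + p.2) - u p.1‖)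
      (Continuous.continuousOn (by fun_prop))
  refine ⟨y₀, s₀, hs₀, fun y s hs => ?_⟩
  have hle := hmin (show (Int.fract y, s) ∈ Icc (0 : ℝ) 1 ×ˢ Icc δ (1 - δ) from
    ⟨⟨Int.fract_nonneg y, (Int.fract_lt_one y).le⟩, hs⟩)
  have hfract := periodic_fract_add hper y 0
  simp only [add_zero] at hfract
  simpa [periodic_fract_add hper, hfract] using hle

lemma inner_deriv_eq_zero_of_isLocalMin {F : Type*} [NormedAddCommGroup F] [InnerProductSpace ℝ F]
    {u : ℝ → F} {c : F} {y₀ : ℝ} (hu : DifferentiableAt ℝ u y₀)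
    (hmin : IsLocalMin (fun y => ‖c - u y‖) y₀) : ⟪deriv u y₀, c - u y₀⟫ = 0 := by
  have hmin_sq : IsLocalMin (fun y => ‖c - u y‖ ^ 2) y₀ := by
    filter_upwards [hmin] with y hy
    gcongr
  have hzero := hmin_sq.hasDerivAt_eq_zero (hu.hasDerivAt.const_sub c).norm_sq
  rw [inner_neg_right, real_inner_comm] at hzero
  linarith

/-- Regular periodic curves with speed in `[1, 2]` and bending energy at most `Λ`. -/
structure BoundedBending {F : Type*} [NormedAddCommGroup F] [NormedSpace ℝ F] (u : ℝ → F)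
    (Λ : ℝ) : Prop where
  c2Periodic : C2Periodic u
  one_le_speed : ∀ x, 1 ≤ ‖deriv u x‖
  speed_le : ∀ x, ‖deriv u x‖ ≤ 2
  bendEnergy_le : bendEnergy u ≤ Λ

/-- A distance of parameters below which curves of bending energy at most `Λ` and speed at least `1`
are bi-Lipschitz. -/
def locScale (Λ : ℝ) : ℝ := 1 / (4 * (Λ + 1))

section LocScale

variable {Λ : ℝ}

lemma locScale_pos (hΛ : 0 ≤ Λ) : 0 < locScale Λ := by unfold locScale; positivity

lemma locScale_le (hΛ : 0 ≤ Λ) : locScale Λ ≤ 1 / 4 := by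
  rw [locScale, div_le_div_iff₀ (by positivity) (by norm_num)]; linarith

lemma locScale_mul_le (hΛ : 0 ≤ Λ) : locScale Λ * Λ ≤ 1 / 4 := by
  rw [locScale, div_mul_eq_mul_div, div_le_div_iff₀ (by positivity) (by norm_num)]; linarith

end LocScale

namespace BoundedBending

section NormedSpace

variable {F : Type*} [NormedAddCommGroup F] [NormedSpace ℝ F] {u : ℝ → F} {Λ x y : ℝ}

lemma nonneg (hu : BoundedBending u Λ) : 0 ≤ Λ := (bendEnergy_nonneg u).trans hu.bendEnergy_le

lemma norm_sub_le (hu : BoundedBending u Λ) (x y : ℝ) : ‖u x - u y‖ ≤ 2 * |x - y| :=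
  hu.c2Periodic.norm_sub_le hu.speed_le x y

variable [CompleteSpace F]

lemma norm_taylor_remainder_le (hu : BoundedBending u Λ) (h : |x - y| ≤ 1) :
    ‖u x - u y - (x - y) • deriv u y‖ ≤ |x - y| * √(|x - y| * Λ) := by
  have hle := hu.c2Periodic.norm_taylor_remainder_le y (x - y)
  rw [add_sub_cancel] at hle
  refine hle.trans ?_
  gcongr
  refine (hu.c2Periodic.abs_integral_norm_deriv_deriv_le h).trans ?_
  gcongr
  exact hu.bendEnergy_le

lemma mul_one_sub_sqrt_le (hu : BoundedBending u Λ) (h : |x - y| ≤ 1) :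
    |x - y| * (1 - √(|x - y| * Λ)) ≤ ‖u x - u y‖ := by
  have hrem := hu.norm_taylor_remainder_le h
  have htri := norm_le_insert (u x - u y) ((x - y) • deriv u y)
  rw [norm_smul, Real.norm_eq_abs] at htri
  nlinarith [hu.one_le_speed y, abs_nonneg (x - y)]

lemma half_le_norm_sub (hu : BoundedBending u Λ) (h : |x - y| ≤ locScale Λ) :
    |x - y| / 2 ≤ ‖u x - u y‖ := by
  have hΛ := hu.nonneg
  refine le_trans ?_ (hu.mul_one_sub_sqrt_le (h.trans ((locScale_le hΛ).trans (by norm_num))))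
  have hsqrt : √(|x - y| * Λ) ≤ 1 / 2 := by
    rw [Real.sqrt_le_left (by norm_num)]
    nlinarith [mul_le_mul_of_nonneg_right h hΛ, locScale_mul_le hΛ]
  nlinarith [abs_nonneg (x - y)]

lemma eq_of_apply_eq (hu : BoundedBending u Λ) (h : |x - y| ≤ locScale Λ) (he : u x = u y) :
    x = y := by
  have hle := hu.half_le_norm_sub h
  rw [he, sub_self, norm_zero] at hle
  exact sub_eq_zero.1 (abs_eq_zero.1 (le_antisymm (by linarith) (abs_nonneg _)))

end NormedSpace

end BoundedBending

section OrthogonalChord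

lemma norm_le_norm_wedge {a d : E3} (ha : 1 ≤ ‖a‖) (h : ⟪a, d⟫ = 0) : ‖d‖ ≤ ‖wedge a d‖ := by
  refine le_of_sq_le_sq ?_ (norm_nonneg _)
  rw [norm_wedge_sq, wedgeSq, h]
  nlinarith [one_le_pow₀ ha (n := 2), sq_nonneg ‖d‖]

lemma half_le_norm_wedge {a a₀ d d₀ : E3} (ha : ‖a‖ ≤ 2) (ha₀ : 1 ≤ ‖a₀‖) (horth : ⟪a₀, d₀⟫ = 0)
    (hda : ‖a - a₀‖ ≤ 1 / 4) (hdd : ‖d - d₀‖ ≤ ‖d₀‖ / 8) : ‖d₀‖ / 2 ≤ ‖wedge a d‖ := by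
  have hsplit : wedge a₀ d₀ = wedge a d - wedge a (d - d₀) - wedge (a - a₀) d₀ := by
    simp only [wedge_sub_right, wedge_sub_left]; abel
  have htri : ‖wedge a₀ d₀‖ ≤ ‖wedge a d‖ + ‖wedge a (d - d₀)‖ + ‖wedge (a - a₀) d₀‖ := by
    rw [hsplit]
    exact (norm_sub_le _ _).trans (by gcongr; exact norm_sub_le _ _)
  have hchord : ‖wedge a (d - d₀)‖ ≤ 2 * (‖d₀‖ / 8) := (norm_wedge_le _ _).trans (by gcongr)
  have htangent : ‖wedge (a - a₀) d₀‖ ≤ 1 / 4 * ‖d₀‖ := (norm_wedge_le _ _).trans (by gcongr)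
  linarith [norm_le_norm_wedge ha₀ horth]

/-- The tangent-point energy forced by a chord of length `h` that is orthogonal to the curve at one
of its ends. -/
def chordEnergy (q h : ℝ) : ℝ := 1 / q * ((4 * h)⁻¹ ^ q * (h / 32) ^ 2)

lemma chordEnergy_pos {q h : ℝ} (hq : 0 < q) (hh : 0 < h) : 0 < chordEnergy q h := by
  unfold chordEnergy; positivity

lemma chordEnergy_eq_mul_rpow (q : ℝ) {h : ℝ} (hh : 0 < h) :
    chordEnergy q h = 1 / q * (4⁻¹ ^ q * 32⁻¹ ^ 2) * h ^ (-(q - 2)) := by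
  rw [chordEnergy, mul_inv, Real.mul_rpow (by positivity) (by positivity), Real.inv_rpow hh.le,
    Real.rpow_neg hh.le, Real.rpow_sub hh, Real.rpow_two]
  have : 0 < h ^ q := Real.rpow_pos_of_pos hh _
  field_simp

lemma tendsto_chordEnergy_atTop {q : ℝ} (hq : 2 < q) :
    Tendsto (chordEnergy q) (𝓝[>] 0) atTop := by
  have hcoeff : 0 < 1 / q * ((4 : ℝ)⁻¹ ^ q * 32⁻¹ ^ 2) := by positivity
  refine ((tendsto_rpow_neg_nhdsGT_zero (y := -(q - 2))
    (by linarith)).const_mul_atTop hcoeff).congr' ?_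
  filter_upwards [self_mem_nhdsWithin] with h hh using (chordEnergy_eq_mul_rpow q hh).symm

/-- A length below which an orthogonal chord costs more tangent-point energy than `B`, for curves of
bending energy at most `Λ`. -/
structure ChordScale (q Λ B h : ℝ) : Prop where
  pos : 0 < h
  le_one : h ≤ 1
  mul_le : h * Λ ≤ 2
  lt_chordEnergy : ∀ s, 0 < s → s < h → B < chordEnergy q s

lemma exists_chordScale {q : ℝ} (hq : 2 < q) {Λ : ℝ} (hΛ : 0 ≤ Λ) (B : ℝ) :
    ∃ h, ChordScale q Λ B h := by
  obtain ⟨ε, hε : 0 < ε, hlt⟩ := mem_nhdsGT_iff_exists_Ioo_subset.1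
    ((tendsto_chordEnergy_atTop hq).eventually (eventually_gt_atTop B))
  refine ⟨min ε (min 1 (2 / (Λ + 1))), by positivity, (min_le_right _ _).trans (min_le_left _ _),
    ?_, fun s hs hsh => hlt ⟨hs, hsh.trans_le (min_le_left _ _)⟩⟩
  calc min ε (min 1 (2 / (Λ + 1))) * Λ ≤ 2 / (Λ + 1) * (Λ + 1) := by
        gcongr
        · exact (min_le_right _ _).trans (min_le_right _ _)
        · linarith
    _ = 2 := by field_simp

namespace BoundedBending

variable {u : ℝ → E3} {Λ q : ℝ} {x₀ y₀ : ℝ}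

lemma norm_chord_sub_le (hu : BoundedBending u Λ) {x y r : ℝ} (hx : |x - x₀| ≤ r)
    (hy : |y - y₀| ≤ r) : ‖(u x - u y) - (u x₀ - u y₀)‖ ≤ 4 * r :=
  calc ‖(u x - u y) - (u x₀ - u y₀)‖ ≤ ‖u x - u x₀‖ + ‖u y - u y₀‖ := by
        rw [sub_sub_sub_comm]; exact _root_.norm_sub_le _ _
    _ ≤ 4 * r := by linarith [hu.norm_sub_le x x₀, hu.norm_sub_le y y₀]

lemma norm_deriv_sub_le (hu : BoundedBending u Λ) {y h : ℝ} (hy : |y - y₀| ≤ h / 32) (hh : h ≤ 1)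
    (hΛ : h * Λ ≤ 2) : ‖deriv u y - deriv u y₀‖ ≤ 1 / 4 := by
  refine (hu.c2Periodic.norm_deriv_sub_le_sqrt (by linarith)).trans ?_
  rw [Real.sqrt_le_left (by norm_num)]
  calc |y - y₀| * bendEnergy u ≤ h / 32 * Λ :=
        mul_le_mul hy hu.bendEnergy_le (bendEnergy_nonneg u) ((abs_nonneg _).trans hy)
    _ ≤ (1 / 4) ^ 2 := by linarith

lemma le_norm_tpQuotient (hu : BoundedBending u Λ) (hne : u x₀ ≠ u y₀)
    (hle : ‖u x₀ - u y₀‖ ≤ 1) (hΛ : ‖u x₀ - u y₀‖ * Λ ≤ 2)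
    (horth : ⟪deriv u y₀, u x₀ - u y₀⟫ = 0) {x y : ℝ} (hx : |x - x₀| ≤ ‖u x₀ - u y₀‖ / 32)
    (hy : |y - y₀| ≤ ‖u x₀ - u y₀‖ / 32) : (4 * ‖u x₀ - u y₀‖)⁻¹ ≤ ‖tpQuotient u (x, y)‖ := by
  have hpos : 0 < ‖u x₀ - u y₀‖ := norm_pos_iff.2 (sub_ne_zero.2 hne)
  have hchord : ‖(u x - u y) - (u x₀ - u y₀)‖ ≤ ‖u x₀ - u y₀‖ / 8 :=
    (hu.norm_chord_sub_le hx hy).trans (by linarith)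
  have hwedge : ‖u x₀ - u y₀‖ / 2 ≤ ‖wedge (deriv u y) (u x - u y)‖ :=
    half_le_norm_wedge (hu.speed_le y) (hu.one_le_speed y₀) horth
      (hu.norm_deriv_sub_le hy hle hΛ) hchord
  have hupper := norm_le_insert' (u x - u y) (u x₀ - u y₀)
  have hlower := norm_le_insert (u x - u y) (u x₀ - u y₀)
  have hchord_pos : 0 < ‖u x - u y‖ := by linarith
  have hsq : ‖u x - u y‖ ^ 2 ≤ (9 / 8 * ‖u x₀ - u y₀‖) ^ 2 := by gcongr; linarith
  rw [tpQuotient, norm_smul, Real.norm_of_nonneg (by positivity), inv_mul_eq_div,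
    le_div_iff₀ (by positivity), inv_mul_le_iff₀ (by positivity)]
  nlinarith

lemma chordEnergy_le_TPe (hu : BoundedBending u Λ) (hq : 0 < q) (hne : u x₀ ≠ u y₀)
    (hle : ‖u x₀ - u y₀‖ ≤ 1) (hΛ : ‖u x₀ - u y₀‖ * Λ ≤ 2)
    (horth : ⟪deriv u y₀, u x₀ - u y₀⟫ = 0) :
    ENNReal.ofReal (chordEnergy q ‖u x₀ - u y₀‖) ≤ TPe q u := by
  set h := ‖u x₀ - u y₀‖
  have hper := hu.c2Periodic.periodic
  have hper' := hu.c2Periodic.periodic_deriv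
  have hr0 : 0 ≤ h / 32 := by positivity
  rw [show TPe q u = ENNReal.ofReal (1 / q) *
    ∫⁻ p in unitSq, ENNReal.ofReal (tpDensity q u p) from rfl, chordEnergy,
    ENNReal.ofReal_mul (by positivity)]
  gcongr
  rw [setLIntegral_unitSq hu.c2Periodic.measurable_tpDensity.ennreal_ofReal
    (fun x y => by simp only [tpDensity, hper x])
    (fun x y => by simp only [tpDensity, hper y, hper' y]) y₀ (x₀ - y₀ - h / 32)]
  calc ENNReal.ofReal ((4 * h)⁻¹ ^ q * (h / 32) ^ 2) = ∫⁻ _ in Ioc y₀ (y₀ + h / 32),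
        ∫⁻ _ in Ioc (x₀ - y₀ - h / 32) (x₀ - y₀), ENNReal.ofReal ((4 * h)⁻¹ ^ q) := by
        simp only [lintegral_const, Measure.restrict_apply, MeasurableSet.univ, univ_inter,
          Real.volume_Ioc, add_sub_cancel_left, sub_sub_cancel]
        rw [← ENNReal.ofReal_mul (by positivity), ← ENNReal.ofReal_mul (by positivity), sq,
          mul_assoc]
    _ ≤ ∫⁻ y in Ioc y₀ (y₀ + h / 32), ∫⁻ k in Ioc (x₀ - y₀ - h / 32) (x₀ - y₀),
        ENNReal.ofReal (tpDensity q u (y + k, y)) := by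
        refine setLIntegral_mono' measurableSet_Ioc fun y hy =>
          setLIntegral_mono' measurableSet_Ioc fun k hk => ENNReal.ofReal_le_ofReal ?_
        rw [tpDensity_eq]
        refine Real.rpow_le_rpow (by positivity)
          (hu.le_norm_tpQuotient hne hle hΛ horth (abs_le.2 ⟨?_, ?_⟩) (abs_le.2 ⟨?_, ?_⟩)) hq.le
        all_goals linarith [hy.1, hy.2, hk.1, hk.2]
    _ ≤ ∫⁻ y in Ioc y₀ (y₀ + 1), ∫⁻ k in Ioc (x₀ - y₀ - h / 32) (x₀ - y₀ - h / 32 + 1),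
        ENNReal.ofReal (tpDensity q u (y + k, y)) :=
        (lintegral_mono fun y => lintegral_mono_set (Ioc_subset_Ioc_right (by linarith))).trans
          (lintegral_mono_set (Ioc_subset_Ioc_right (by linarith)))

lemma eq_or_le_norm_sub (hu : BoundedBending u Λ) {B h : ℝ} (hq : 0 < q)
    (hs : ChordScale q Λ B h) (hB : TPe q u ≤ ENNReal.ofReal B)
    (horth : ⟪deriv u y₀, u x₀ - u y₀⟫ = 0) : u x₀ = u y₀ ∨ h ≤ ‖u x₀ - u y₀‖ := by
  by_contra! hc
  obtain ⟨hne, hlt⟩ := hc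
  have hpos : 0 < ‖u x₀ - u y₀‖ := norm_pos_iff.2 (sub_ne_zero.2 hne)
  have hle := hu.chordEnergy_le_TPe hq hne (hlt.le.trans hs.le_one)
    ((mul_le_mul_of_nonneg_right hlt.le hu.nonneg).trans hs.mul_le) horth
  exact ((ENNReal.ofReal_lt_ofReal_iff (chordEnergy_pos hq hpos)).2
    (hs.lt_chordEnergy _ hpos hlt)).not_ge (hle.trans hB)

end BoundedBending

end OrthogonalChord

section Separation

/-- The bi-Lipschitz constant of embedded curves of bending energy at most `Λ` whose orthogonal
chords have length at least `h`. -/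
def bilConst (Λ h : ℝ) : ℝ := min (locScale Λ / 2) h

lemma bilConst_pos {Λ h : ℝ} (hΛ : 0 ≤ Λ) (hh : 0 < h) : 0 < bilConst Λ h :=
  lt_min (half_pos (locScale_pos hΛ)) hh

lemma bilConst_le {Λ : ℝ} (hΛ : 0 ≤ Λ) (h : ℝ) : bilConst Λ h ≤ 1 / 8 :=
  (min_le_left _ _).trans (by linarith [locScale_le hΛ])

namespace BoundedBending

variable {u : ℝ → E3} {Λ q B h : ℝ}

lemma bilConst_le_shortest_chord (hu : BoundedBending u Λ) (hq : 0 < q)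
    (hs : ChordScale q Λ B h) (hB : TPe q u ≤ ENNReal.ofReal B) {y₀ s₀ : ℝ}
    (hs₀ : s₀ ∈ Icc (locScale Λ) (1 - locScale Λ)) (hne : u (y₀ + s₀) ≠ u y₀)
    (hmin : ∀ y, ∀ s ∈ Icc (locScale Λ) (1 - locScale Λ),
      ‖u (y₀ + s₀) - u y₀‖ ≤ ‖u (y + s) - u y‖) :
    bilConst Λ h ≤ ‖u (y₀ + s₀) - u y₀‖ := by
  have hδ := locScale_pos hu.nonneg
  rcases hs₀.1.eq_or_lt with hleft | hleft
  · refine (min_le_left _ _).trans ?_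
    simpa [← hleft, abs_of_pos hδ] using hu.half_le_norm_sub (x := y₀ + s₀) (y := y₀)
      (by rw [add_sub_cancel_left, ← hleft, abs_of_pos hδ])
  rcases hs₀.2.eq_or_lt with hright | hright
  · refine (min_le_left _ _).trans ?_
    have hshift : u (y₀ + s₀) = u (y₀ - locScale Λ) := by
      rw [← hu.c2Periodic.periodic (y₀ - locScale Λ), hright]; congr 1; ring
    simpa [hshift, abs_of_pos hδ] using hu.half_le_norm_sub (x := y₀ - locScale Λ) (y := y₀)
      (by rw [sub_sub_cancel_left, abs_neg, abs_of_pos hδ])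
  -- An interior shortest chord is orthogonal to the curve.
  refine (min_le_right _ _).trans ((hu.eq_or_le_norm_sub hq hs hB
    (inner_deriv_eq_zero_of_isLocalMin (hu.c2Periodic.hasDerivAt y₀).differentiableAt
      ?_)).resolve_left hne)
  have hcont : ContinuousAt (fun y => y₀ + s₀ - y) y₀ := by fun_prop
  filter_upwards [hcont.eventually (isOpen_Ioo.mem_nhds
    (show y₀ + s₀ - y₀ ∈ Ioo (locScale Λ) (1 - locScale Λ) by
      rw [add_sub_cancel_left]; exact ⟨hleft, hright⟩))] with y hy
  simpa using hmin y (y₀ + s₀ - y) ⟨hy.1.le, hy.2.le⟩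

lemma tame (hu : BoundedBending u Λ) (hq : 0 < q) (hs : ChordScale q Λ B h)
    (hB : TPe q u ≤ ENNReal.ofReal B)
    (hinj : ∀ y, ∀ s ∈ Icc (locScale Λ) (1 - locScale Λ), u (y + s) ≠ u y) :
    Tame u Λ (bilConst Λ h) := by
  have hℓ := bilConst_pos hu.nonneg hs.pos
  have hℓ8 := bilConst_le hu.nonneg h
  refine ⟨hu.c2Periodic, hu.speed_le, hu.bendEnergy_le, hℓ, by linarith, fun x y => ?_⟩
  obtain ⟨y₀, s₀, hs₀, hmin⟩ := exists_shortest_chord hu.c2Periodic.continuous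
    hu.c2Periodic.periodic (show locScale Λ ≤ 1 / 2 by linarith [locScale_le hu.nonneg])
  have hchord := hu.bilConst_le_shortest_chord hq hs hB hs₀ (hinj y₀ s₀ hs₀) hmin
  rw [hu.c2Periodic.sub_eq_wrap x y]
  have hw := abs_wrap_le (x - y)
  set w := wrap (x - y)
  rcases le_or_gt |w| (locScale Λ) with hnear | hfar
  · have hle := hu.half_le_norm_sub (x := y + w) (y := y) (by rwa [add_sub_cancel_left])
    rw [add_sub_cancel_left] at hle
    nlinarith [abs_nonneg w]
  · refine (show bilConst Λ h * |w| ≤ bilConst Λ h by nlinarith [abs_nonneg w]).trans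
      (hchord.trans ?_)
    rcases le_total 0 w with hw0 | hw0
    · rw [abs_of_nonneg hw0] at hfar hw
      exact hmin y w ⟨hfar.le, by linarith [locScale_le hu.nonneg]⟩
    · rw [abs_of_nonpos hw0] at hfar hw
      simpa [← add_assoc, hu.c2Periodic.periodic (y + w)] using
        hmin y (w + 1) ⟨by linarith [locScale_le hu.nonneg], by linarith⟩

end BoundedBending

end Separation

end Geometry

section Classification

lemma eq_of_abs_sub_le_mul_sqrt {f : ℝ → ℝ} {s : Set ℝ} (hs : Convex ℝ s) {C : ℝ}
    (h : ∀ x ∈ s, ∀ y ∈ s, |f y - f x| ≤ C * |y - x| * √|y - x|) {x y : ℝ} (hx : x ∈ s)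
    (hy : y ∈ s) : f x = f y := by
  have hderiv : ∀ z ∈ s, HasDerivWithinAt f 0 s z := by
    intro z hz
    rw [hasDerivWithinAt_iff_isLittleO, Asymptotics.isLittleO_iff]
    intro ε hε
    have hlim : Tendsto (fun t => C * √|t - z|) (𝓝[s] z) (𝓝 0) := by
      have hcont : Continuous fun t => C * √|t - z| := by fun_prop
      simpa using (hcont.tendsto z).mono_left nhdsWithin_le_nhds
    filter_upwards [hlim.eventually (gt_mem_nhds hε), self_mem_nhdsWithin] with t ht hts
    rw [smul_zero, sub_zero, Real.norm_eq_abs, Real.norm_eq_abs]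
    refine (h z hz t hts).trans ?_
    nlinarith [abs_nonneg (t - z)]
  have hle := hs.norm_image_sub_le_of_norm_hasDerivWithin_le (C := 0) hderiv (by simp) hx hy
  rw [zero_mul, norm_le_zero_iff, sub_eq_zero] at hle
  exact hle.symm

lemma abs_sub_sub_sub_eq_of_monotoneOn {X : ℝ → ℝ} {s : Set ℝ} (hX : MonotoneOn X s) {x y : ℝ}
    (hx : x ∈ s) (hy : y ∈ s) : |(X y - y) - (X x - x)| = |(|X y - X x| - |y - x|)| := by
  rcases le_total x y with h | h
  · rw [abs_of_nonneg (sub_nonneg.2 (hX hx hy h)), abs_of_nonneg (sub_nonneg.2 h), sub_sub_sub_comm]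
  · rw [abs_of_nonpos (sub_nonpos.2 (hX hy hx h)), abs_of_nonpos (sub_nonpos.2 h), ← abs_neg]
    congr 1; ring

/-- A parametrization, by the parameters within `η` of `y₀`, of the strand of `u` near the parameter
`x₀` that traces the strand near `y₀`. -/
structure StrandMap {F : Type*} (u : ℝ → F) (Λ x₀ y₀ η : ℝ) (X : ℝ → ℝ) : Prop where
  abs_sub_le : ∀ y ∈ Icc (y₀ - η) (y₀ + η), |X y - x₀| ≤ locScale Λ / 2
  apply_eq : ∀ y ∈ Icc (y₀ - η) (y₀ + η), u (X y) = u y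

namespace BoundedBending

section Strand

variable {F : Type*} [NormedAddCommGroup F] [NormedSpace ℝ F] [CompleteSpace F] {u : ℝ → F}
  {Λ x y x' y' : ℝ}

lemma abs_sub_le_two_mul (hu : BoundedBending u Λ) (hunit : ∀ x, ‖deriv u x‖ ≤ 1)
    (h : u x = u y) (h' : u x' = u y') (hnear : |x - x'| ≤ locScale Λ) :
    |x - x'| ≤ 2 * |y - y'| := by
  have hle := hu.half_le_norm_sub hnear
  rw [h, h'] at hle
  linarith [hu.c2Periodic.norm_sub_le hunit y y']

lemma abs_abs_sub_sub_abs_sub_le (hu : BoundedBending u Λ) (hunit : ∀ x, ‖deriv u x‖ ≤ 1)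
    (h : u x = u y) (h' : u x' = u y') (hle : |x - x'| ≤ 2 * |y - y'|)
    (hnear : |y - y'| ≤ 1 / 2) :
    |(|x - x'| - |y - y'|)| ≤ 2 * √(2 * Λ) * |y - y'| * √|y - y'| := by
  have hchord : ‖u x - u x'‖ = ‖u y - u y'‖ := by rw [h, h']
  have hx := hu.mul_one_sub_sqrt_le (x := x) (y := x') (by linarith)
  have hy := hu.mul_one_sub_sqrt_le (x := y) (y := y') (by linarith)
  have hx' := hu.c2Periodic.norm_sub_le hunit x x'
  have hy' := hu.c2Periodic.norm_sub_le hunit y y'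
  have hΛ := hu.nonneg
  have hsqrt : ∀ t, t ≤ 2 * |y - y'| → √(t * Λ) ≤ √(2 * Λ) * √|y - y'| := fun t ht => by
    rw [← Real.sqrt_mul (by positivity)]
    exact Real.sqrt_le_sqrt (by nlinarith)
  have hsqrt_x := hsqrt _ hle
  have hsqrt_y := hsqrt |y - y'| (by linarith [abs_nonneg (y - y')])
  rw [show 2 * √(2 * Λ) * |y - y'| * √|y - y'| = 2 * |y - y'| * (√(2 * Λ) * √|y - y'|) by ring]
  have hr : 0 ≤ √(2 * Λ) * √|y - y'| := by positivity
  rw [abs_le]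
  constructor <;> nlinarith [abs_nonneg (x - x'), abs_nonneg (y - y')]

end Strand

end BoundedBending

namespace StrandMap

variable {F : Type*} [NormedAddCommGroup F] [NormedSpace ℝ F] [CompleteSpace F] {u : ℝ → F}
  {Λ x₀ y₀ η : ℝ} {X : ℝ → ℝ}

lemma apply_center (hX : StrandMap u Λ x₀ y₀ η X) (hu : BoundedBending u Λ) (hη : 0 ≤ η)
    (h : u x₀ = u y₀) : X y₀ = x₀ := by
  have hy₀ : y₀ ∈ Icc (y₀ - η) (y₀ + η) := ⟨by linarith, by linarith⟩
  exact hu.eq_of_apply_eq ((hX.abs_sub_le y₀ hy₀).trans (by linarith [locScale_pos hu.nonneg]))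
    (by rw [hX.apply_eq y₀ hy₀, h])

lemma injOn (hX : StrandMap u Λ x₀ y₀ η X) (hu : BoundedBending u Λ) (hη : 2 * η ≤ locScale Λ) :
    InjOn X (Icc (y₀ - η) (y₀ + η)) := fun y hy y' hy' he => by
  refine hu.eq_of_apply_eq (abs_le.2 ⟨?_, ?_⟩)
    (by rw [← hX.apply_eq y hy, ← hX.apply_eq y' hy', he])
  all_goals linarith [hy.1, hy.2, hy'.1, hy'.2]

lemma abs_sub_le_two_mul (hX : StrandMap u Λ x₀ y₀ η X) (hu : BoundedBending u Λ)
    (hunit : ∀ x, ‖deriv u x‖ ≤ 1) {y y' : ℝ} (hy : y ∈ Icc (y₀ - η) (y₀ + η))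
    (hy' : y' ∈ Icc (y₀ - η) (y₀ + η)) : |X y - X y'| ≤ 2 * |y - y'| := by
  refine hu.abs_sub_le_two_mul hunit (hX.apply_eq y hy) (hX.apply_eq y' hy') ?_
  have htri := _root_.abs_sub_le (X y) x₀ (X y')
  rw [abs_sub_comm x₀] at htri
  linarith [hX.abs_sub_le y hy, hX.abs_sub_le y' hy']

lemma continuousOn (hX : StrandMap u Λ x₀ y₀ η X) (hu : BoundedBending u Λ)
    (hunit : ∀ x, ‖deriv u x‖ ≤ 1) : ContinuousOn X (Icc (y₀ - η) (y₀ + η)) :=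
  (LipschitzOnWith.of_dist_le_mul (K := 2) fun _ hx _ hy =>
    hX.abs_sub_le_two_mul hu hunit hx hy).continuousOn

-- Both strands are parametrized by arclength up to an error of order `3 / 2`, so an increasing
-- strand map differs from the identity by a Hölder function with exponent `3 / 2`.
lemma sub_eq_of_monotoneOn (hX : StrandMap u Λ x₀ y₀ η X) (hu : BoundedBending u Λ)
    (hunit : ∀ x, ‖deriv u x‖ ≤ 1) (hη : η ≤ 1 / 4)
    (hmono : MonotoneOn X (Icc (y₀ - η) (y₀ + η))) {y : ℝ} (hy : y ∈ Icc (y₀ - η) (y₀ + η)) :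
    X y₀ - y₀ = X y - y := by
  refine eq_of_abs_sub_le_mul_sqrt (f := fun t => X t - t) (C := 2 * √(2 * Λ))
    (convex_Icc _ _) (fun x hx y hy => ?_) ⟨by linarith [hy.1, hy.2], by linarith [hy.1, hy.2]⟩ hy
  rw [abs_sub_sub_sub_eq_of_monotoneOn hmono hx hy]
  refine hu.abs_abs_sub_sub_abs_sub_le hunit (hX.apply_eq y hy) (hX.apply_eq x hx)
    (hX.abs_sub_le_two_mul hu hunit hy hx) (abs_le.2 ⟨?_, ?_⟩)
  all_goals linarith [hy.1, hy.2, hx.1, hx.2]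

-- A decreasing strand map would return `y₀ + η` to itself before the minimal time `a`.
lemma apply_add_eq_of_minimal_return {a : ℝ} (hX : StrandMap u Λ (y₀ + a) y₀ η X)
    (hu : BoundedBending u Λ) (hunit : ∀ x, ‖deriv u x‖ ≤ 1) (hη0 : 0 < η)
    (hη : η ≤ locScale Λ / 32) (ha : locScale Λ ≤ a) (h : u (y₀ + a) = u y₀)
    (hmin : ∀ y s, 0 < s → s < a → u (y + s) ≠ u y) {y : ℝ}
    (hy : y ∈ Icc (y₀ - η) (y₀ + η)) : u (y + a) = u y := by
  have hδ := locScale_le hu.nonneg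
  have hcenter := hX.apply_center hu hη0.le h
  have hy₀ : y₀ ∈ Icc (y₀ - η) (y₀ + η) := ⟨by linarith, by linarith⟩
  have hend : y₀ + η ∈ Icc (y₀ - η) (y₀ + η) := ⟨by linarith, le_rfl⟩
  rcases (hX.continuousOn hu hunit).strictMonoOn_of_injOn_Icc' (by linarith)
    (hX.injOn hu (by linarith)) with hmono | hanti
  · have hshift := hX.sub_eq_of_monotoneOn hu hunit (by linarith) hmono.monotoneOn hy
    rw [show y + a = X y by linarith, hX.apply_eq y hy]
  · have hlt := hanti hy₀ hend (by linarith)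
    have hnear := (abs_le.1 (hX.abs_sub_le _ hend)).1
    refine absurd ?_ (hmin (y₀ + η) (X (y₀ + η) - (y₀ + η)) (by linarith) (by linarith))
    rw [add_sub_cancel, hX.apply_eq _ hend]

end StrandMap

/-- The radius around a self-intersection within which its two strands trace each other. -/
def strandRadius (Λ h : ℝ) : ℝ := min (locScale Λ / 32) (h / 4)

lemma strandRadius_pos {Λ h : ℝ} (hΛ : 0 ≤ Λ) (hh : 0 < h) : 0 < strandRadius Λ h :=
  lt_min (div_pos (locScale_pos hΛ) (by norm_num)) (by positivity)

namespace BoundedBending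

variable {u : ℝ → E3} {Λ q B h : ℝ}

lemma exists_near_apply_eq (hu : BoundedBending u Λ) (hq : 0 < q) (hs : ChordScale q Λ B h)
    (hB : TPe q u ≤ ENNReal.ofReal B) {x₀ y₀ y : ℝ} (h0 : u x₀ = u y₀)
    (hy : |y - y₀| ≤ strandRadius Λ h) : ∃ x, |x - x₀| ≤ locScale Λ / 2 ∧ u x = u y := by
  have hδ := locScale_pos hu.nonneg
  obtain ⟨hyδ, hyh⟩ := le_min_iff.1 hy
  have hclose := hu.norm_sub_le y y₀
  obtain ⟨x, hx, hmin⟩ := isCompact_Icc.exists_isMinOn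
    (s := Icc (x₀ - locScale Λ / 2) (x₀ + locScale Λ / 2))
    ⟨x₀, by constructor <;> linarith⟩ (f := fun x => ‖u y - u x‖)
    (by have := hu.c2Periodic.continuous; fun_prop)
  have hdist : ‖u y - u x‖ ≤ ‖u y - u y₀‖ := h0 ▸ hmin ⟨by linarith, by linarith⟩
  have hinterior : |x - x₀| < locScale Λ / 2 := by
    have hlower := hu.half_le_norm_sub (x := x) (y := x₀)
      (abs_le.2 ⟨by linarith [hx.1], by linarith [hx.2]⟩)
    have htri := norm_sub_le_norm_sub_add_norm_sub (u x) (u y) (u x₀)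
    rw [norm_sub_rev (u x) (u y), h0] at htri
    rw [h0] at hlower
    linarith
  have hlocal : IsLocalMin (fun x => ‖u y - u x‖) x := by
    rw [abs_lt] at hinterior
    exact hmin.isLocalMin (Icc_mem_nhds (by linarith) (by linarith))
  refine ⟨x, hinterior.le, ((hu.eq_or_le_norm_sub hq hs hB (inner_deriv_eq_zero_of_isLocalMin
    (hu.c2Periodic.hasDerivAt x).differentiableAt hlocal)).resolve_right ?_).symm⟩
  linarith [hs.pos]

lemma exists_strandMap (hu : BoundedBending u Λ) (hq : 0 < q) (hs : ChordScale q Λ B h)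
    (hB : TPe q u ≤ ENNReal.ofReal B) {x₀ y₀ : ℝ} (h0 : u x₀ = u y₀) :
    ∃ X, StrandMap u Λ x₀ y₀ (strandRadius Λ h) X := by
  have hex : ∀ y ∈ Icc (y₀ - strandRadius Λ h) (y₀ + strandRadius Λ h),
      ∃ x, |x - x₀| ≤ locScale Λ / 2 ∧ u x = u y := fun y hy =>
    hu.exists_near_apply_eq hq hs hB h0 (abs_le.2 ⟨by linarith [hy.1], by linarith [hy.2]⟩)
  choose! X hX using hex
  exact ⟨X, fun y hy => (hX y hy).1, fun y hy => (hX y hy).2⟩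

lemma exists_minimal_return (hu : BoundedBending u Λ)
    (hret : ∃ y, ∃ s ∈ Icc (locScale Λ) (1 - locScale Λ), u (y + s) = u y) :
    ∃ y₀, ∃ a ∈ Icc (locScale Λ) (1 - locScale Λ), u (y₀ + a) = u y₀ ∧
      ∀ y s, 0 < s → s < a → u (y + s) ≠ u y := by
  have hcont := hu.c2Periodic.continuous
  have hfract := periodic_fract_add hu.c2Periodic.periodic
  set R : Set (ℝ × ℝ) := (Icc (0 : ℝ) 1 ×ˢ Icc (locScale Λ) (1 - locScale Λ)) ∩
    {p | u (p.1 + p.2) = u p.1}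
  have hR : IsCompact R := (isCompact_Icc.prod isCompact_Icc).inter_right
    (isClosed_eq (by fun_prop) (by fun_prop))
  have mem_R : ∀ y, ∀ s ∈ Icc (locScale Λ) (1 - locScale Λ), u (y + s) = u y →
      (Int.fract y, s) ∈ R := fun y s hs he =>
    ⟨⟨⟨Int.fract_nonneg y, (Int.fract_lt_one y).le⟩, hs⟩, by
      simpa [hfract y s, he] using (hfract y 0).symm⟩
  obtain ⟨y, s, hs, he⟩ := hret
  obtain ⟨⟨y₀, a⟩, ⟨⟨-, ha⟩, he₀⟩, hmin⟩ :=
    hR.exists_isMinOn ⟨_, mem_R y s hs he⟩ (f := Prod.snd) continuous_snd.continuousOn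
  refine ⟨y₀, a, ha, he₀, fun y s hs hsa he => ?_⟩
  rcases le_or_gt s (locScale Λ) with hle | hlt
  · have hy := hu.eq_of_apply_eq (x := y + s) (y := y)
      (by rwa [add_sub_cancel_left, abs_of_pos hs]) he
    linarith
  · exact hsa.not_ge (hmin (mem_R y s ⟨hlt.le, hsa.le.trans ha.2⟩ he))

lemma exists_periodic (hu : BoundedBending u Λ) (hq : 0 < q) (hs : ChordScale q Λ B h)
    (hB : TPe q u ≤ ENNReal.ofReal B) (hunit : ∀ x, ‖deriv u x‖ ≤ 1)
    (hret : ∃ y, ∃ s ∈ Icc (locScale Λ) (1 - locScale Λ), u (y + s) = u y) :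
    ∃ a, 0 < a ∧ a < 1 ∧ Function.Periodic u a := by
  have hδ := locScale_pos hu.nonneg
  have hcont := hu.c2Periodic.continuous
  have hη := strandRadius_pos hu.nonneg hs.pos
  obtain ⟨y₀, a, ha, he, hmin⟩ := hu.exists_minimal_return hret
  refine ⟨a, by linarith [ha.1], by linarith [ha.2], fun y => ?_⟩
  have hclopen : IsClopen {y | u (y + a) = u y} := by
    refine ⟨isClosed_eq (by fun_prop) hcont,
      Metric.isOpen_iff.2 fun z hz => ⟨_, hη, fun y hy => ?_⟩⟩
    obtain ⟨X, hX⟩ := hu.exists_strandMap hq hs hB hz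
    rw [Real.ball_eq_Ioo] at hy
    exact hX.apply_add_eq_of_minimal_return hu hunit hη (min_le_left _ _) ha.1 hz hmin
      (Ioo_subset_Icc_self hy)
  exact (hclopen.eq_univ ⟨y₀, he⟩ ▸ mem_univ y : y ∈ {y | u (y + a) = u y})

end BoundedBending

end Classification

section SimplePole

variable {a y₀ c ε : ℝ}

lemma lintegral_Ioo_mul_sub_inv_eq_top (hc : 0 < c) (hε : 0 < ε) :
    ∫⁻ h in Ioo (a - ε) a, ENNReal.ofReal (c * (a - h)⁻¹) = ⊤ := by
  by_contra hfin
  have hint : IntegrableOn (fun h => c * (a - h)⁻¹) (Ioo (a - ε) a) := by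
    refine ⟨by fun_prop, ?_⟩
    rw [hasFiniteIntegral_iff_ofReal]
    · exact lt_top_iff_ne_top.2 hfin
    · filter_upwards [ae_restrict_mem measurableSet_Ioo] with h hh
      exact mul_nonneg hc.le (inv_nonneg.2 (sub_nonneg.2 hh.2.le))
  have hinv : IntervalIntegrable (fun h => (h - a)⁻¹) volume (a - ε) a := by
    rw [intervalIntegrable_iff_integrableOn_Ioo_of_le (by linarith)]
    refine IntegrableOn.congr_fun (Integrable.const_mul hint (-c⁻¹)) (fun h _ => ?_)
      measurableSet_Ioo
    rw [neg_mul, inv_mul_cancel_left₀ hc.ne', ← inv_neg, neg_sub]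
  rcases intervalIntegrable_sub_inv_iff.1 hinv with h | h
  · linarith
  · exact h right_mem_uIcc

lemma lintegral_enorm_eq_top_of_le_abs_mul {f : ℝ → ℝ} (hc : 0 < c) (hε : 0 < ε) (hε1 : ε ≤ 1)
    (hle : ∀ d, -ε < d → d < 0 → c ≤ |d| * |f (a + d)|) :
    ∫⁻ h in Ioc (a - ε) (a - ε + 1), ‖f h‖ₑ = ⊤ := by
  rw [← top_le_iff, ← lintegral_Ioo_mul_sub_inv_eq_top hc hε (a := a)]
  refine (setLIntegral_mono' measurableSet_Ioo fun h hh => ?_).trans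
    (lintegral_mono_set fun h hh => ⟨hh.1, by linarith [hh.2]⟩)
  have hpos : 0 < a - h := sub_pos.2 hh.2
  have hd := hle (h - a) (by linarith [hh.1]) (by linarith)
  rw [add_sub_cancel, abs_sub_comm, abs_of_pos hpos] at hd
  rw [← ofReal_norm, Real.norm_eq_abs]
  refine ENNReal.ofReal_le_ofReal ?_
  rwa [mul_inv_le_iff₀ hpos, mul_comm]

variable {G : ℝ × ℝ → ℝ}

lemma not_integrableOn_of_le_abs_mul (hG : Measurable G)
    (h1 : ∀ x y, G (x + 1, y) = G (x, y)) (h2 : ∀ x y, G (x, y + 1) = G (x, y))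
    (hc : 0 < c) (hε : 0 < ε) (hε1 : ε ≤ 1)
    (hle : ∀ y d, y₀ < y → y ≤ y₀ + ε → -ε < d → d < 0 → c ≤ |d| * |G (y + (a + d), y)|) :
    ¬ IntegrableOn G unitSq := by
  intro hint
  have hfin : ∫⁻ p in unitSq, ‖G p‖ₑ < ⊤ := hint.2
  rw [setLIntegral_unitSq (G := fun p => ‖G p‖ₑ) hG.enorm (by simp [h1]) (by simp [h2]) y₀ (a - ε)]
    at hfin
  refine hfin.ne (top_le_iff.1 ?_)
  calc (⊤ : ℝ≥0∞) = ∫⁻ _ in Ioc y₀ (y₀ + ε), ⊤ := by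
        rw [setLIntegral_const, Real.volume_Ioc, ENNReal.top_mul]
        simpa using hε
    _ ≤ ∫⁻ y in Ioc y₀ (y₀ + ε), ∫⁻ h in Ioc (a - ε) (a - ε + 1), ‖G (y + h, y)‖ₑ :=
        setLIntegral_mono' measurableSet_Ioc fun _ hy =>
          (lintegral_enorm_eq_top_of_le_abs_mul hc hε hε1
            fun d => hle _ d hy.1 hy.2).ge
    _ ≤ _ := lintegral_mono_set (Ioc_subset_Ioc_right (by linarith))

lemma not_integrableOn_of_continuousAt {F : ℝ × ℝ → ℝ} (hG : Measurable G)
    (h1 : ∀ x y, G (x + 1, y) = G (x, y)) (h2 : ∀ x y, G (x, y + 1) = G (x, y))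
    (hF : ContinuousAt F (y₀, 0)) (hF0 : F (y₀, 0) ≠ 0)
    (hle : ∀ᶠ p in 𝓝 (y₀, (0 : ℝ)), p.2 < 0 → |F p| ≤ |p.2| * |G (p.1 + (a + p.2), p.1)|) :
    ¬ IntegrableOn G unitSq := by
  have hnear := (hF.abs.eventually (lt_mem_nhds (half_lt_self (abs_pos.2 hF0)))).and hle
  obtain ⟨ε, hε, hball⟩ := Metric.eventually_nhds_iff.1 hnear
  have hmin := min_le_left (ε / 2) 1
  refine not_integrableOn_of_le_abs_mul (a := a) (y₀ := y₀) hG h1 h2 (half_pos (abs_pos.2 hF0))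
    (lt_min (half_pos hε) one_pos) (min_le_right _ _) fun y d hy hy' hd hd' => ?_
  have hmem : dist (y, d) (y₀, (0 : ℝ)) < ε := by
    rw [Prod.dist_eq, Real.dist_eq, Real.dist_eq, sub_zero, abs_of_pos (sub_pos.2 hy),
      abs_of_neg hd']
    exact max_lt (by linarith) (by linarith)
  obtain ⟨hlow, hup⟩ := hball hmem
  exact hlow.le.trans (hup hd')

end SimplePole

section TaylorMean

variable {F : Type*} [NormedAddCommGroup F] [NormedSpace ℝ F] {u : ℝ → F}

/-- The weighted mean `∫₀¹ (1 - s) u''(y + s d) ds` at `p = (y, d)`, which is the coefficient of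
`d²` in the first-order Taylor formula. -/
def taylorMean (u : ℝ → F) (p : ℝ × ℝ) : F :=
  ∫ s in (0 : ℝ)..1, (1 - s) • deriv (deriv u) (p.1 + s * p.2)

lemma C2Periodic.continuous_taylorMean (hu : C2Periodic u) : Continuous (taylorMean u) := by
  have := hu.continuous_deriv_deriv
  unfold taylorMean
  refine intervalIntegral.continuous_parametric_intervalIntegral_of_continuous' ?_ 0 1
  fun_prop

lemma taylorMean_zero [CompleteSpace F] (u : ℝ → F) (y : ℝ) :
    taylorMean u (y, 0) = (1 / 2 : ℝ) • deriv (deriv u) y := by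
  simp only [taylorMean, mul_zero, add_zero]
  rw [intervalIntegral.integral_smul_const, intervalIntegral.integral_sub (by simp) (by simp)]
  norm_num

lemma C2Periodic.taylor [CompleteSpace F] (hu : C2Periodic u) (y d : ℝ) :
    u (y + d) - u y = d • (deriv u y + d • taylorMean u (y, d)) := by
  have hderiv (s : ℝ) : HasDerivAt
      (fun s => ((1 - s) * d) • deriv u (y + s * d) + u (y + s * d))
      ((d ^ 2) • (1 - s) • deriv (deriv u) (y + s * d)) s := by
    have hline : HasDerivAt (fun s : ℝ => y + s * d) d s := by
      simpa using ((hasDerivAt_id s).mul_const d).const_add y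
    have hweight : HasDerivAt (fun s : ℝ => (1 - s) * d) (-d) s := by
      simpa using ((hasDerivAt_id s).const_sub 1).mul_const d
    refine ((hweight.smul ((hu.hasDerivAt_deriv (y + s * d)).scomp s hline)).add
      ((hu.hasDerivAt (y + s * d)).scomp s hline)).congr_deriv ?_
    simp only [Function.comp_apply]
    module
  have hcont : Continuous fun s : ℝ => (d ^ 2) • (1 - s) • deriv (deriv u) (y + s * d) := by
    have := hu.continuous_deriv_deriv
    fun_prop
  have hftc := intervalIntegral.integral_eq_sub_of_hasDerivAt (fun s _ => hderiv s)
    (hcont.intervalIntegrable 0 1)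
  rw [intervalIntegral.integral_smul] at hftc
  simp only [one_mul, sub_self, zero_mul, zero_smul, zero_add, sub_zero, add_zero] at hftc
  have hsum : u (y + d) - u y = d ^ 2 • taylorMean u (y, d) + d • deriv u y := by
    rw [taylorMean, hftc]; abel
  rw [hsum]; module

/-- The rescaled chord `(u(y + d) - u(y)) / d = u'(y) + d ∫₀¹ (1 - s) u''(y + s d) ds` at
`p = (y, d)`; if `u` has period `a`, it is the rescaled chord from `u(y)` to the point
`u(y + a + d)` on a neighbouring strand. -/
def strandChord (u : ℝ → F) (p : ℝ × ℝ) : F := deriv u p.1 + p.2 • taylorMean u p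

lemma C2Periodic.continuous_strandChord (hu : C2Periodic u) : Continuous (strandChord u) := by
  have := hu.continuous_taylorMean
  have := hu.continuous_deriv
  unfold strandChord
  fun_prop

lemma strandChord_zero (u : ℝ → F) (y : ℝ) : strandChord u (y, 0) = deriv u y := by
  simp [strandChord]

lemma C2Periodic.strand_sub [CompleteSpace F] (hu : C2Periodic u) {a : ℝ}
    (ha : Function.Periodic u a) (y d : ℝ) :
    u (y + (a + d)) - u y = d • strandChord u (y, d) := by
  rw [show y + (a + d) = y + d + a by ring, ha, hu.taylor]; rfl

end TaylorMean

section Multicover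

variable {u v w : ℝ → E3} {q a y : ℝ}

lemma C2Periodic.Mintegrand_add_one_left (hu : C2Periodic u) (hw : C2Periodic w) (x y : ℝ) :
    Mintegrand q u v w (x + 1, y) = Mintegrand q u v w (x, y) := by
  simp only [Mintegrand, hu.periodic x, hw.periodic x, show x + 1 - y = x - y + 1 by ring,
    wrap_add_one]

lemma C2Periodic.Mintegrand_add_one_right (hu : C2Periodic u) (hv : C2Periodic v)
    (hw : C2Periodic w) (x y : ℝ) :
    Mintegrand q u v w (x, y + 1) = Mintegrand q u v w (x, y) := by
  simp only [Mintegrand, hu.periodic y, hw.periodic y, hu.periodic_deriv y, hv.periodic_deriv y,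
    hw.periodic_deriv y, show x - (y + 1) = x - y - 1 by ring, wrap_sub_one]

lemma C2Periodic.Aintegrand_add_one_left (hu : C2Periodic u) (hv : C2Periodic v)
    (hw : C2Periodic w) (x y : ℝ) :
    Aintegrand q u v w (x + 1, y) = Aintegrand q u v w (x, y) := by
  simp only [Aintegrand, hu.periodic x, hv.periodic x, hw.periodic x]

lemma C2Periodic.Aintegrand_add_one_right (hu : C2Periodic u) (hv : C2Periodic v)
    (hw : C2Periodic w) (x y : ℝ) :
    Aintegrand q u v w (x, y + 1) = Aintegrand q u v w (x, y) := by
  simp only [Aintegrand, hu.periodic y, hv.periodic y, hw.periodic y, hu.periodic_deriv y]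

/-- The tangent-point quotient between neighbouring strands of a multiply covered curve, in the
coordinates of `strandChord`, in which it has no singularity. -/
def strandQuotient (u : ℝ → E3) (p : ℝ × ℝ) : E3 :=
  (‖strandChord u p‖ ^ 2)⁻¹ • wedge (deriv u p.1) (taylorMean u p)

lemma continuous_wedge {X : Type*} [TopologicalSpace X] {f g : X → E3} (hf : Continuous f)
    (hg : Continuous g) : Continuous fun x => wedge (f x) (g x) := by
  unfold wedge
  fun_prop

lemma C2Periodic.continuous_wedge_taylorMean (hu : C2Periodic u) :
    Continuous fun p : ℝ × ℝ => wedge (deriv u p.1) (taylorMean u p) :=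
  continuous_wedge (hu.continuous_deriv.comp continuous_fst) hu.continuous_taylorMean

lemma C2Periodic.continuousAt_strandQuotient (hu : C2Periodic u) (hy : deriv u y ≠ 0) :
    ContinuousAt (strandQuotient u) (y, 0) := by
  refine ((hu.continuous_strandChord.norm.pow 2).continuousAt.inv₀ ?_).smul
    hu.continuous_wedge_taylorMean.continuousAt
  simpa [strandChord_zero] using hy

lemma wedge_strandChord (u : ℝ → E3) (y d : ℝ) :
    wedge (deriv u y) (d • strandChord u (y, d)) =
      d ^ 2 • wedge (deriv u y) (taylorMean u (y, d)) := by
  rw [strandChord, wedge_smul_right, wedge_add_right, wedge_self, zero_add, wedge_smul_right,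
    smul_smul, sq]

lemma C2Periodic.tpQuotient_strand (hu : C2Periodic u) (ha : Function.Periodic u a) (y : ℝ)
    {d : ℝ} (hd : d ≠ 0) : tpQuotient u (y + (a + d), y) = strandQuotient u (y, d) := by
  simp only [tpQuotient, strandQuotient]
  rw [hu.strand_sub ha, wedge_strandChord, norm_smul, smul_smul, mul_pow, Real.norm_eq_abs, sq_abs,
    mul_inv, mul_right_comm, inv_mul_cancel₀ (pow_ne_zero 2 hd), one_mul]

lemma strandQuotient_zero (u : ℝ → E3) (y : ℝ) : strandQuotient u (y, 0) =
    ((‖deriv u y‖ ^ 2)⁻¹ * (1 / 2)) • wedge (deriv u y) (deriv (deriv u) y) := by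
  rw [strandQuotient, strandChord_zero, taylorMean_zero, wedge_smul_right, smul_smul]

lemma deriv_ne_zero_of_wedge_ne_zero {b : E3} (h : wedge (deriv u y) b ≠ 0) : deriv u y ≠ 0 := by
  rintro h0
  simp [h0, wedge] at h

/-- The shape of the integrands of `M` and `A` between neighbouring strands, with the factors of
the separation `d` removed. -/
def strandForm (q : ℝ) (u : ℝ → E3) (D : ℝ × ℝ → E3) (p : ℝ × ℝ) : ℝ :=
  ‖strandQuotient u p‖ ^ (q - 2) * ⟪strandQuotient u p, D p⟫

lemma C2Periodic.continuousAt_strandForm {D : ℝ × ℝ → E3} (hu : C2Periodic u) (hq : 2 < q)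
    (hy : deriv u y ≠ 0) (hD : ContinuousAt D (y, 0)) : ContinuousAt (strandForm q u D) (y, 0) :=
  have hZ := hu.continuousAt_strandQuotient hy
  (hZ.norm.rpow_const (Or.inr (by linarith))).mul (hZ.inner hD)

lemma strandForm_zero_ne_zero {D : ℝ × ℝ → E3}
    (hD : ⟪wedge (deriv u y) (deriv (deriv u) y), D (y, 0)⟫ ≠ 0) :
    strandForm q u D (y, 0) ≠ 0 := by
  have hwedge : wedge (deriv u y) (deriv (deriv u) y) ≠ 0 := by
    rintro h0
    simp [h0] at hD
  have hu := norm_pos_iff.2 (deriv_ne_zero_of_wedge_ne_zero hwedge)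
  have hcoeff : (‖deriv u y‖ ^ 2)⁻¹ * (1 / 2) ≠ 0 := by positivity
  rw [strandForm, strandQuotient_zero, real_inner_smul_left]
  exact mul_ne_zero (Real.rpow_pos_of_pos (norm_pos_iff.2 (smul_ne_zero hcoeff hwedge)) _).ne'
    (mul_ne_zero hcoeff hD)

-- Between neighbouring strands the integrand of `M` blows up like `1 / d²`.
lemma C2Periodic.not_integrableOn_Mintegrand (hu : C2Periodic u) (hv : C2Periodic v)
    (hw : C2Periodic w) (hq : 2 < q) (hper : Function.Periodic u a) (ha : 0 < a) (ha' : a ≤ 1 / 2)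
    (hne : ⟪wedge (deriv u y) (deriv (deriv u) y),
      wedge (deriv v y) (w (y + a) - w y - a • deriv w y)⟫ ≠ 0) :
    ¬ IntegrableOn (Mintegrand q u v w) unitSq := by
  have hy : deriv u y ≠ 0 := by
    rintro h0
    simp [h0, wedge] at hne
  set D : ℝ × ℝ → E3 := fun p => (‖strandChord u p‖ ^ 2)⁻¹ •
    wedge (deriv v p.1) (w (p.1 + (a + p.2)) - w p.1 - (a + p.2) • deriv w p.1)
  have hD : ContinuousAt D (y, 0) := by
    have := hv.continuous_deriv
    have := hw.continuous_deriv
    have := hw.continuous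
    refine ((hu.continuous_strandChord.norm.pow 2).continuousAt.inv₀ ?_).smul
      (continuous_wedge (by fun_prop) (by fun_prop)).continuousAt
    simpa [strandChord_zero] using hy
  refine not_integrableOn_of_continuousAt (measurable_Mintegrand hu hv hw)
    (hu.Mintegrand_add_one_left hw) (hu.Mintegrand_add_one_right hv hw) (a := a)
    (hu.continuousAt_strandForm hq hy hD) (strandForm_zero_ne_zero ?_) ?_
  · simp only [D]
    rw [strandChord_zero, add_zero, real_inner_smul_right]
    exact mul_ne_zero (by simpa using hy) hne
  filter_upwards [(continuous_snd.tendsto (y, (0 : ℝ))).eventually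
    (Ioo_mem_nhds (neg_lt_zero.2 (lt_min ha one_pos)) (lt_min ha one_pos))]
  rintro ⟨x, d⟩ hmem (hd : d < 0)
  have hda : -a < d := by linarith [hmem.1, min_le_left a 1]
  have hd1 : |d| ≤ 1 := by
    rw [abs_of_neg hd]; linarith [hmem.1, min_le_right a 1]
  have hM : Mintegrand q u v w (x + (a + d), x) = (d ^ 2)⁻¹ * strandForm q u D (x, d) := by
    rw [Mintegrand_eq _ _ _ _ hq, hu.tpQuotient_strand hper _ hd.ne, strandForm]
    simp only [D]
    rw [add_sub_cancel_left, wrap_of_mem_Ioc ⟨by linarith, by linarith⟩, hu.strand_sub hper,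
      norm_smul, mul_pow, mul_inv, mul_smul, real_inner_smul_right _ _ ((‖d‖ ^ 2)⁻¹),
      mul_left_comm (‖strandQuotient u (x, d)‖ ^ (q - 2)), Real.norm_eq_abs, sq_abs]
  rw [hM, abs_mul, ← mul_assoc, abs_inv, abs_pow, sq, mul_inv, mul_inv_cancel_left₀
    (abs_pos.2 hd.ne).ne']
  exact le_mul_of_one_le_left (abs_nonneg _) ((one_le_inv₀ (abs_pos.2 hd.ne)).2 hd1)

lemma C2Periodic.Aintegrand_strand (hu : C2Periodic u) (hq : 2 < q) (ha : Function.Periodic u a)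
    (x : ℝ) {d : ℝ} (hd : d ≠ 0) : d * Aintegrand q u u w (x + (a + d), x) =
      strandForm q u (fun p => (⟪strandChord u p, w (p.1 + (a + p.2)) - w p.1⟫ /
        ‖strandChord u p‖ ^ 4) • wedge (deriv u p.1) (taylorMean u p)) (x, d) := by
  rw [Aintegrand_eq _ _ _ _ hq, hu.tpQuotient_strand ha _ hd, strandForm]
  simp only
  rw [hu.strand_sub ha, wedge_strandChord, norm_smul, real_inner_smul_left, smul_smul,
    real_inner_smul_right, real_inner_smul_right, mul_left_comm d, ← mul_assoc d, mul_pow,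
    Real.norm_eq_abs, (by decide : Even 4).pow_abs]
  congr 2
  rw [div_mul_eq_mul_div, mul_div_assoc', show
    d * (d * ⟪strandChord u (x, d), w (x + (a + d)) - w x⟫ * d ^ 2) =
      d ^ 4 * ⟪strandChord u (x, d), w (x + (a + d)) - w x⟫ by ring,
    mul_div_mul_left _ _ (pow_ne_zero 4 hd)]

-- Between neighbouring strands the integrand of `A` blows up like `1 / d`.
lemma C2Periodic.not_integrableOn_Aintegrand (hu : C2Periodic u) (hw : C2Periodic w) (hq : 2 < q)
    (hper : Function.Periodic u a) (hwedge : wedge (deriv u y) (deriv (deriv u) y) ≠ 0)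
    (hne : ⟪deriv u y, w (y + a) - w y⟫ ≠ 0) :
    ¬ IntegrableOn (Aintegrand q u u w) unitSq := by
  have hy := deriv_ne_zero_of_wedge_ne_zero hwedge
  set D : ℝ × ℝ → E3 := fun p => (⟪strandChord u p, w (p.1 + (a + p.2)) - w p.1⟫ /
    ‖strandChord u p‖ ^ 4) • wedge (deriv u p.1) (taylorMean u p)
  have hD : ContinuousAt D (y, 0) := by
    have hchord := hu.continuous_strandChord
    have := hw.continuous
    have hinner : Continuous fun p : ℝ × ℝ => ⟪strandChord u p, w (p.1 + (a + p.2)) - w p.1⟫ := by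
      fun_prop
    refine (hinner.continuousAt.div (hchord.norm.pow 4).continuousAt ?_).smul
      hu.continuous_wedge_taylorMean.continuousAt
    simpa [strandChord_zero] using hy
  refine not_integrableOn_of_continuousAt (measurable_Aintegrand hu hu hw)
    (hu.Aintegrand_add_one_left hu hw) (hu.Aintegrand_add_one_right hu hw) (a := a)
    (hu.continuousAt_strandForm hq hy hD) (strandForm_zero_ne_zero ?_)
    (Eventually.of_forall fun p hp => ?_)
  · simp only [D]
    rw [strandChord_zero, add_zero, taylorMean_zero, wedge_smul_right, real_inner_smul_right,
      real_inner_smul_right, real_inner_self_eq_norm_sq]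
    have := norm_pos_iff.2 hy
    have := norm_pos_iff.2 hwedge
    exact mul_ne_zero (div_ne_zero hne (by positivity)) (by positivity)
  · rw [← abs_mul, hu.Aintegrand_strand hq hper _ hp.ne]

-- Non-integrable integrands have Bochner integral `0` by convention.
lemma C2Periodic.deltaTP_eq_zero (hu : C2Periodic u) (hw : C2Periodic w) (hq : 2 < q)
    (hper : Function.Periodic u a) (ha : 0 < a) (ha' : a ≤ 1 / 2)
    (h1 : ⟪wedge (deriv u y) (deriv (deriv u) y),
      wedge (deriv u y) (w (y + a) - w y - a • deriv w y)⟫ ≠ 0)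
    (h2 : ⟪wedge (deriv u y) (deriv (deriv u) y), wedge (deriv u y) (deriv w y)⟫ ≠ 0)
    (h3 : ⟪deriv u y, w (y + a) - w y⟫ ≠ 0) : deltaTP q u w = 0 := by
  have hM : Mfun q u u w = 0 :=
    integral_undef (hu.not_integrableOn_Mintegrand hu hw hq hper ha ha' h1)
  have hM' : Mfun q u w u = 0 := by
    refine integral_undef (hu.not_integrableOn_Mintegrand hw hu hq hper ha ha' (y := y) ?_)
    rw [hper, sub_self, zero_sub, ← neg_smul, wedge_smul_right, real_inner_smul_right]
    refine mul_ne_zero (neg_ne_zero.2 ha.ne') fun h0 => h2 ?_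
    rw [inner_wedge, wedgeInner] at h0 ⊢
    linarith
  have hA : Afun q u u w = 0 := by
    refine integral_undef (hu.not_integrableOn_Aintegrand hw hq hper ?_ h3)
    rintro h0
    simp [h0] at h2
  rw [deltaTP, hM, hM', hA]; norm_num

end Multicover

section PeriodicBump

variable {m δ t : ℝ}

/-- A smooth `1`-periodic bump function which is positive within distance `δ` of `m + ℤ` and
vanishes elsewhere. -/
def periodicBump (m δ t : ℝ) : ℝ :=
  expNegInvGlue (Real.cos (2 * Real.pi * (t - m)) - Real.cos (2 * Real.pi * δ))

lemma contDiff_periodicBump (m δ : ℝ) : ContDiff ℝ 1 (periodicBump m δ) :=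
  expNegInvGlue.contDiff.comp (by fun_prop : ContDiff ℝ 1 fun t : ℝ =>
    Real.cos (2 * Real.pi * (t - m)) - Real.cos (2 * Real.pi * δ))

lemma periodic_periodicBump (m δ : ℝ) : Function.Periodic (periodicBump m δ) 1 := fun t => by
  unfold periodicBump
  rw [show 2 * Real.pi * (t + 1 - m) = 2 * Real.pi * (t - m) + 2 * Real.pi by ring,
    Real.cos_add_two_pi]

lemma cos_two_pi_mul_abs (t : ℝ) : Real.cos (2 * Real.pi * |t|) = Real.cos (2 * Real.pi * t) := by
  rw [← Real.cos_abs (2 * Real.pi * t), abs_mul, abs_of_pos Real.two_pi_pos]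

lemma periodicBump_pos (hδ : δ ≤ 1 / 2) (h : |t - m| < δ) : 0 < periodicBump m δ t := by
  refine expNegInvGlue.pos_of_pos (sub_pos.2 ?_)
  have := Real.pi_pos
  rw [← cos_two_pi_mul_abs (t - m)]
  exact Real.cos_lt_cos_of_nonneg_of_le_pi (by positivity) (by nlinarith) (by gcongr)

lemma periodicBump_eq_zero (hδ : 0 ≤ δ) (h : δ ≤ |t - m|) (h' : |t - m| ≤ 1 - δ) :
    periodicBump m δ t = 0 := by
  refine expNegInvGlue.zero_of_nonpos (sub_nonpos.2 ?_)
  have := Real.pi_pos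
  rw [← cos_two_pi_mul_abs (t - m)]
  rcases le_total |t - m| (1 / 2) with hhalf | hhalf
  · exact Real.cos_le_cos_of_nonneg_of_le_pi (by positivity) (by nlinarith) (by gcongr)
  · rw [← Real.cos_two_pi_sub (2 * Real.pi * |t - m|)]
    exact Real.cos_le_cos_of_nonneg_of_le_pi (by positivity) (by nlinarith) (by nlinarith)

lemma periodicBump_eq_zero_of_notMem_Ioo {y ε s : ℝ} (hε : 0 ≤ ε)
    (hs : s ∈ Icc (y + ε - 1) (y + 1)) (hs' : s ∉ Ioo y (y + ε)) :
    periodicBump (y + ε / 2) (ε / 2) s = 0 := by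
  refine periodicBump_eq_zero (by positivity) (le_abs'.2 ?_)
    (abs_le.2 ⟨by linarith [hs.1], by linarith [hs.2]⟩)
  rcases le_or_gt s y with h | h
  · exact Or.inl (by linarith)
  · exact Or.inr (by linarith [not_lt.1 fun h' => hs' ⟨h, h'⟩])

end PeriodicBump

section SlidingIntegral

variable {F : Type*} [NormedAddCommGroup F] [NormedSpace ℝ F] {ζ : ℝ → F}

/-- The integral of `ζ` over the window `[t - a, t]`, as a function of `t`. -/
def slidingIntegral (a : ℝ) (ζ : ℝ → F) (t : ℝ) : F := ∫ s in (t - a)..t, ζ s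

lemma hasDerivAt_slidingIntegral [CompleteSpace F] (hζ : Continuous ζ) (a t : ℝ) :
    HasDerivAt (slidingIntegral a ζ) (ζ t - ζ (t - a)) t := by
  have hprim (t : ℝ) : HasDerivAt (fun t => ∫ s in (0 : ℝ)..t, ζ s) (ζ t) t :=
    intervalIntegral.integral_hasDerivAt_right (hζ.intervalIntegrable _ _)
      hζ.aestronglyMeasurable.stronglyMeasurableAtFilter hζ.continuousAt
  have hsub : slidingIntegral a ζ =
      fun t => (∫ s in (0 : ℝ)..t, ζ s) - ∫ s in (0 : ℝ)..(t - a), ζ s :=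
    funext fun t => (intervalIntegral.integral_interval_sub_left (hζ.intervalIntegrable _ _)
      (hζ.intervalIntegrable _ _)).symm
  rw [hsub]
  refine ((hprim t).sub ((hprim (t - a)).scomp t
    ((hasDerivAt_id t).sub_const a))).congr_deriv ?_
  rw [one_smul]

lemma deriv_slidingIntegral [CompleteSpace F] (hζ : Continuous ζ) (a : ℝ) :
    deriv (slidingIntegral a ζ) = fun t => ζ t - ζ (t - a) :=
  funext fun t => (hasDerivAt_slidingIntegral hζ a t).deriv

lemma c2Periodic_slidingIntegral [CompleteSpace F] (hζ : ContDiff ℝ 1 ζ)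
    (hper : Function.Periodic ζ 1) (a : ℝ) : C2Periodic (slidingIntegral a ζ) := by
  refine ⟨?_, fun t => ?_⟩
  · rw [show (2 : WithTop ℕ∞) = 1 + 1 by norm_num, contDiff_succ_iff_deriv,
      deriv_slidingIntegral hζ.continuous]
    refine ⟨fun t => (hasDerivAt_slidingIntegral hζ.continuous a t).differentiableAt, by simp,
      hζ.sub (hζ.comp ?_)⟩
    fun_prop
  · have hshift := intervalIntegral.integral_comp_add_right (a := t - a) (b := t) ζ 1
    rw [slidingIntegral, slidingIntegral, show t + 1 - a = t - a + 1 by ring, ← hshift]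
    exact intervalIntegral.integral_congr fun s _ => hper s

end SlidingIntegral

section ScaledProjection

variable {F : Type*} [NormedAddCommGroup F] [InnerProductSpace ℝ F]

/-- The projection of `e` to the orthogonal complement of `b`, multiplied by `|b|²` so as to depend
polynomially on `b`. -/
def scaledProj (b e : F) : F := ‖b‖ ^ 2 • e - ⟪e, b⟫ • b

lemma inner_scaledProj (b e : F) : ⟪scaledProj b e, b⟫ = 0 := by
  rw [scaledProj, inner_sub_left, real_inner_smul_left, real_inner_smul_left,
    real_inner_self_eq_norm_sq]; ring

lemma contDiff_scaledProj {b : ℝ → F} (hb : ContDiff ℝ 1 b) (e : F) :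
    ContDiff ℝ 1 fun t => scaledProj (b t) e :=
  ((hb.norm_sq ℝ).smul contDiff_const).sub ((contDiff_const.inner ℝ hb).smul hb)

lemma inner_scaledProj_self (b e : E3) : ⟪e, scaledProj b e⟫ = ‖wedge b e‖ ^ 2 := by
  rw [norm_wedge_sq, wedgeSq, scaledProj, inner_sub_right, real_inner_smul_right,
    real_inner_smul_right, real_inner_self_eq_norm_sq, real_inner_comm]; ring

lemma inner_wedge_scaledProj (b e : E3) :
    ⟪wedge b e, wedge b (scaledProj b e)⟫ = ‖b‖ ^ 2 * ‖wedge b e‖ ^ 2 := by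
  rw [scaledProj, wedge_sub_right, wedge_smul_right, wedge_smul_right, wedge_self, smul_zero,
    sub_zero, real_inner_smul_right, real_inner_self_eq_norm_sq]

lemma norm_scaledProj_sq (b e : E3) : ‖scaledProj b e‖ ^ 2 = ‖b‖ ^ 2 * ‖wedge b e‖ ^ 2 := by
  rw [← real_inner_self_eq_norm_sq]
  nth_rw 1 [scaledProj]
  rw [inner_sub_left, real_inner_smul_left, real_inner_smul_left, real_inner_comm _ b,
    inner_scaledProj, inner_scaledProj_self, mul_zero, sub_zero]

lemma inner_wedge_right (n b x : E3) : ⟪n, wedge b x⟫ = ⟪wedge n b, x⟫ := by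
  simp only [wedge, EuclideanSpace.inner_eq_star_dotProduct, star_trivial]
  rw [dotProduct_comm, triple_product_permutation, triple_product_permutation]

lemma neg_wedge_comm (a b : E3) : -wedge a b = wedge b a := by
  rw [wedge, wedge, ← WithLp.toLp_neg, cross_anticomm]

end ScaledProjection

section Admissible

/-- The test fields of the scheme at `u`: they preserve the speed of `u` to first order. -/
structure Admissible (u w : ℝ → E3) : Prop where
  c2Periodic : C2Periodic w
  orth : ∀ x, ⟪deriv w x, deriv u x⟫ = 0

variable {u v w : ℝ → E3} {a y : ℝ}

lemma Admissible.add_smul (hv : Admissible u v) (hw : Admissible u w) (c : ℝ) :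
    Admissible u (fun t => v t + c • w t) :=
  ⟨hv.c2Periodic.add (hw.c2Periodic.smul c), fun x => by
    rw [hv.c2Periodic.deriv_add_smul hw.c2Periodic, inner_add_left, real_inner_smul_left,
      hv.orth, hw.orth, mul_zero, add_zero]⟩

lemma admissible_slidingIntegral (hper : Function.Periodic u a) {ζ : ℝ → E3}
    (hζ : ContDiff ℝ 1 ζ) (hζper : Function.Periodic ζ 1) (horth : ∀ x, ⟪ζ x, deriv u x⟫ = 0) :
    Admissible u (slidingIntegral a ζ) := by
  refine ⟨c2Periodic_slidingIntegral hζ hζper a, fun x => ?_⟩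
  have hback := horth (x - a)
  rw [(periodic_deriv hper).sub_eq] at hback
  rw [deriv_slidingIntegral hζ.continuous, inner_sub_left, horth, hback, sub_zero]

/-- The normal field along `u` in direction `e`, localised near `m + ℤ`. -/
def bumpNormal (u : ℝ → E3) (m δ : ℝ) (e : E3) (s : ℝ) : E3 :=
  periodicBump m δ s • scaledProj (deriv u s) e

lemma C2Periodic.contDiff_bumpNormal (hu : C2Periodic u) (m δ : ℝ) (e : E3) :
    ContDiff ℝ 1 (bumpNormal u m δ e) :=
  (contDiff_periodicBump m δ).smul (contDiff_scaledProj hu.contDiff_deriv e)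

lemma C2Periodic.admissible_bumpNormal (hu : C2Periodic u) (hper : Function.Periodic u a)
    (m δ : ℝ) (e : E3) : Admissible u (slidingIntegral a (bumpNormal u m δ e)) := by
  refine admissible_slidingIntegral hper (hu.contDiff_bumpNormal m δ e) (fun s => ?_) fun s => ?_
  · simp only [bumpNormal, periodic_periodicBump m δ s, hu.periodic_deriv s]
  · rw [bumpNormal, real_inner_smul_left, inner_scaledProj, mul_zero]

-- The field is built from a bump supported in `(y, y + ε)`, so only the window ending at `y + a`
-- sees it.
lemma C2Periodic.exists_admissible_jump (hu : C2Periodic u) (hper : Function.Periodic u a)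
    (ha' : a ≤ 1 / 2) {ε : ℝ} {ν e : E3} (hε : 0 < ε) (hεa : ε ≤ a)
    (hpos : ∀ t, y < t → t < y + ε → 0 < ⟪ν, scaledProj (deriv u t) e⟫) :
    ∃ w, Admissible u w ∧ deriv w y = 0 ∧ ⟪ν, w (y + a) - w y⟫ ≠ 0 := by
  set ζ := bumpNormal u (y + ε / 2) (ε / 2) e
  have hζ : Continuous ζ := (hu.contDiff_bumpNormal _ _ _).continuous
  have hzero : ∀ s ∈ Icc (y - a) (y + a), s ∉ Ioo y (y + ε) → ζ s = 0 := fun s hs hs' => by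
    simp only [ζ, bumpNormal]
    rw [periodicBump_eq_zero_of_notMem_Ioo hε.le ⟨by linarith [hs.1], by linarith [hs.2]⟩ hs',
      zero_smul]
  have hpos' : ∀ s ∈ Ioo y (y + ε), 0 < ⟪ν, ζ s⟫ := fun s hs => by
    simp only [ζ, bumpNormal]
    rw [real_inner_smul_right]
    refine mul_pos (periodicBump_pos (by linarith) ?_) (hpos s hs.1 hs.2)
    rw [abs_lt]; constructor <;> linarith [hs.1, hs.2]
  refine ⟨_, hu.admissible_bumpNormal hper (y + ε / 2) (ε / 2) e, ?_, ?_⟩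
  · rw [deriv_slidingIntegral hζ]
    simp only
    rw [hzero y ⟨by linarith, by linarith⟩ (by simp), hzero (y - a) ⟨le_rfl, by linarith⟩
      fun h => by linarith [h.1], sub_zero]
  · have hwindow : slidingIntegral a ζ y = 0 :=
      intervalIntegral.integral_zero_ae (ae_of_all _ fun s hs => by
        rw [uIoc_of_le (by linarith)] at hs
        exact hzero s ⟨hs.1.le, by linarith [hs.2]⟩ fun h => h.1.not_ge hs.2)
    rw [hwindow, sub_zero, slidingIntegral, add_sub_cancel_right, ← innerSL_apply_apply ℝ,
      ← ContinuousLinearMap.intervalIntegral_comp_comm _ (hζ.intervalIntegrable _ _)]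
    refine (intervalIntegral.integral_pos (by linarith)
      ((innerSL ℝ ν).continuous.comp hζ).continuousOn (fun s hs => ?_)
      ⟨y + ε / 2, ⟨by linarith, by linarith⟩, hpos' _ ⟨by linarith, by linarith⟩⟩).ne'
    rw [Function.comp_apply, innerSL_apply_apply]
    by_cases h : s ∈ Ioo y (y + ε)
    · exact (hpos' s h).le
    · rw [hzero s ⟨by linarith [hs.1], hs.2⟩ h, inner_zero_right]

lemma C2Periodic.exists_admissible_jump_of_eventually (hu : C2Periodic u)
    (hper : Function.Periodic u a) (ha : 0 < a) (ha' : a ≤ 1 / 2) {ν e : E3}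
    (hpos : ∀ᶠ t in 𝓝[>] y, 0 < ⟪ν, scaledProj (deriv u t) e⟫) :
    ∃ w, Admissible u w ∧ deriv w y = 0 ∧ ⟪ν, w (y + a) - w y⟫ ≠ 0 := by
  obtain ⟨b, hyb : y < b, hsub⟩ := mem_nhdsGT_iff_exists_Ioo_subset.1 hpos
  refine hu.exists_admissible_jump hper ha' (lt_min (sub_pos.2 hyb) ha) (min_le_right _ _)
    fun t ht ht' => hsub ⟨ht, ?_⟩
  linarith [min_le_left (b - y) a]

end Admissible

section SingularCoefficients

variable {u v w : ℝ → E3} {q a y : ℝ}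

/-- The leading coefficients, at the neighbouring strand through `u(y)`, of the singular integrands
of `M(u; u, w)`, `M(u; w, u)` and `A(u; u, w)`, for a curve `u` of period `a`. -/
def singCoeff (u : ℝ → E3) (a y : ℝ) (w : ℝ → E3) : Fin 3 → ℝ :=
  ![⟪wedge (deriv u y) (deriv (deriv u) y), wedge (deriv u y) (w (y + a) - w y - a • deriv w y)⟫,
    ⟪wedge (deriv u y) (deriv (deriv u) y), wedge (deriv u y) (deriv w y)⟫,
    ⟪deriv u y, w (y + a) - w y⟫]

lemma singCoeff_add_smul (hv : C2Periodic v) (hw : C2Periodic w) (u : ℝ → E3) (a y c : ℝ) :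
    singCoeff u a y (fun t => v t + c • w t) =
      fun i => singCoeff u a y v i + c * singCoeff u a y w i := by
  have hjump : v (y + a) + c • w (y + a) - (v y + c • w y) =
      (v (y + a) - v y) + c • (w (y + a) - w y) := by module
  have hremainder :
      (v (y + a) - v y) + c • (w (y + a) - w y) - a • (deriv v y + c • deriv w y) =
        (v (y + a) - v y - a • deriv v y) + c • (w (y + a) - w y - a • deriv w y) := by module
  funext i
  fin_cases i <;>
  · simp only [singCoeff, hv.deriv_add_smul hw, hjump, hremainder]
    simp [wedge_add_right, wedge_smul_right, inner_add_right, real_inner_smul_right]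

lemma C2Periodic.exists_inner_wedge_jump_ne_zero (hu : C2Periodic u) (hper : Function.Periodic u a)
    (ha : 0 < a) (ha' : a ≤ 1 / 2) (hwedge : wedge (deriv u y) (deriv (deriv u) y) ≠ 0) :
    ∃ w, Admissible u w ∧ ⟪wedge (deriv u y) (deriv (deriv u) y),
      wedge (deriv u y) (w (y + a) - w y - a • deriv w y)⟫ ≠ 0 := by
  set n := wedge (deriv u y) (deriv (deriv u) y)
  have hpos : 0 < ⟪wedge n (deriv u y), scaledProj (deriv u y) (deriv (deriv u) y)⟫ := by
    have := norm_pos_iff.2 hwedge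
    have := norm_pos_iff.2 (deriv_ne_zero_of_wedge_ne_zero hwedge)
    rw [← inner_wedge_right, inner_wedge_scaledProj]; positivity
  have hcont : Continuous fun t =>
      ⟪wedge n (deriv u y), scaledProj (deriv u t) (deriv (deriv u) y)⟫ :=
    continuous_const.inner (contDiff_scaledProj hu.contDiff_deriv _).continuous
  obtain ⟨w, hw, hderiv, hjump⟩ := hu.exists_admissible_jump_of_eventually hper ha ha'
    (nhdsWithin_le_nhds (hcont.continuousAt.eventually (lt_mem_nhds hpos)))
  refine ⟨w, hw, ?_⟩
  rwa [hderiv, smul_zero, sub_zero, inner_wedge_right]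

lemma C2Periodic.exists_inner_wedge_deriv_ne_zero (hu : C2Periodic u)
    (hper : Function.Periodic u a) (ha : 0 < a) (ha' : a ≤ 1 / 2)
    (hwedge : wedge (deriv u y) (deriv (deriv u) y) ≠ 0) :
    ∃ w, Admissible u w ∧
      ⟪wedge (deriv u y) (deriv (deriv u) y), wedge (deriv u y) (deriv w y)⟫ ≠ 0 := by
  refine ⟨_, hu.admissible_bumpNormal hper y (a / 2) (deriv (deriv u) y), ?_⟩
  have hzero : periodicBump y (a / 2) (y - a) = 0 := by
    have habs : |y - a - y| = a := by rw [sub_sub_cancel_left, abs_neg, abs_of_pos ha]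
    exact periodicBump_eq_zero (by positivity) (by linarith) (by linarith)
  have hbump : 0 < periodicBump y (a / 2) y := periodicBump_pos (by linarith) (by simpa using ha)
  have := norm_pos_iff.2 hwedge
  have := norm_pos_iff.2 (deriv_ne_zero_of_wedge_ne_zero hwedge)
  rw [deriv_slidingIntegral (hu.contDiff_bumpNormal _ _ _).continuous]
  simp only [bumpNormal]
  rw [hzero, zero_smul, sub_zero, wedge_smul_right, real_inner_smul_right, inner_wedge_scaledProj]
  positivity

lemma C2Periodic.eventually_wedge_deriv_ne_zero (hu : C2Periodic u)
    (hwedge : wedge (deriv u y) (deriv (deriv u) y) ≠ 0) :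
    ∀ᶠ t in 𝓝[≠] y, wedge (deriv u t) (deriv u y) ≠ 0 := by
  set n := wedge (deriv u y) (deriv (deriv u) y)
  have hderiv : HasDerivAt (fun t => ⟪wedge n (deriv u y), deriv u t⟫) (‖n‖ ^ 2) y := by
    have := (hasDerivAt_const y (wedge n (deriv u y))).inner ℝ (hu.hasDerivAt_deriv y)
    rwa [inner_zero_left, add_zero, ← inner_wedge_right, real_inner_self_eq_norm_sq] at this
  filter_upwards [hderiv.eventually_ne (c := 0) (pow_ne_zero 2 (norm_ne_zero_iff.2 hwedge))]
    with t ht hzero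
  rw [← inner_wedge_right, ← neg_wedge_comm, hzero, neg_zero, inner_zero_right] at ht
  exact ht rfl

lemma C2Periodic.exists_inner_deriv_jump_ne_zero (hu : C2Periodic u) (hper : Function.Periodic u a)
    (ha : 0 < a) (ha' : a ≤ 1 / 2) (hwedge : wedge (deriv u y) (deriv (deriv u) y) ≠ 0) :
    ∃ w, Admissible u w ∧ ⟪deriv u y, w (y + a) - w y⟫ ≠ 0 := by
  obtain ⟨w, hw, -, hjump⟩ := hu.exists_admissible_jump_of_eventually hper ha ha' (y := y)
    (ν := deriv u y) (e := deriv u y) (by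
      filter_upwards [(hu.eventually_wedge_deriv_ne_zero hwedge).filter_mono
        (nhdsWithin_mono y fun t (ht : y < t) => ht.ne')] with t ht
      rw [inner_scaledProj_self]
      exact pow_pos (norm_pos_iff.2 ht) 2)
  exact ⟨w, hw, hjump⟩

lemma C2Periodic.exists_singCoeff_ne_zero (hu : C2Periodic u) (hper : Function.Periodic u a)
    (ha : 0 < a) (ha' : a ≤ 1 / 2) (hwedge : wedge (deriv u y) (deriv (deriv u) y) ≠ 0)
    (i : Fin 3) : ∃ w, Admissible u w ∧ singCoeff u a y w i ≠ 0 := by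
  fin_cases i
  · exact hu.exists_inner_wedge_jump_ne_zero hper ha ha' hwedge
  · exact hu.exists_inner_wedge_deriv_ne_zero hper ha ha' hwedge
  · exact hu.exists_inner_deriv_jump_ne_zero hper ha ha' hwedge

lemma exists_add_mul_ne_zero {ι K : Type*} [Finite ι] [Field K] [Infinite K] (x y : ι → K) :
    ∃ c : K, ∀ i, x i ≠ 0 ∨ y i ≠ 0 → x i + c * y i ≠ 0 := by
  obtain ⟨c, hc⟩ := (Set.finite_range fun i => -x i / y i).exists_notMem
  refine ⟨c, fun i hi h0 => ?_⟩
  by_cases hy : y i = 0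
  · rw [hy, mul_zero, add_zero] at h0
    simp [h0, hy] at hi
  · exact hc ⟨i, (div_eq_iff hy).2 (eq_neg_of_add_eq_zero_right h0).symm⟩

lemma Admissible.exists_singCoeff_add_smul_ne_zero (hv : Admissible u v) (hw : Admissible u w)
    (a y : ℝ) : ∃ c : ℝ, Admissible u (fun t => v t + c • w t) ∧
      ∀ i, singCoeff u a y v i ≠ 0 ∨ singCoeff u a y w i ≠ 0 →
        singCoeff u a y (fun t => v t + c • w t) i ≠ 0 := by
  obtain ⟨c, hc⟩ := exists_add_mul_ne_zero (singCoeff u a y v) (singCoeff u a y w)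
  exact ⟨c, hv.add_smul hw c, by rwa [singCoeff_add_smul hv.c2Periodic hw.c2Periodic]⟩

lemma C2Periodic.exists_forall_singCoeff_ne_zero (hu : C2Periodic u) (hper : Function.Periodic u a)
    (ha : 0 < a) (ha' : a ≤ 1 / 2) (hwedge : wedge (deriv u y) (deriv (deriv u) y) ≠ 0) :
    ∃ w, Admissible u w ∧ ∀ i, singCoeff u a y w i ≠ 0 := by
  choose W hW hWne using hu.exists_singCoeff_ne_zero hper ha ha' hwedge
  obtain ⟨c, hadm, hne⟩ := (hW 0).exists_singCoeff_add_smul_ne_zero (hW 1) a y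
  obtain ⟨c', hadm', hne'⟩ := hadm.exists_singCoeff_add_smul_ne_zero (hW 2) a y
  refine ⟨_, hadm', fun i => hne' i ?_⟩
  fin_cases i
  · exact Or.inl (hne 0 (Or.inl (hWne 0)))
  · exact Or.inl (hne 1 (Or.inr (hWne 1)))
  · exact Or.inr (hWne 2)

lemma C2Periodic.inner_deriv_deriv_add_nonpos {F : Type*} [NormedAddCommGroup F]
    [InnerProductSpace ℝ F] {u : ℝ → F} (hu : C2Periodic u) (hmax : ∀ x, ‖u x‖ ≤ ‖u y‖) :
    ⟪u y, deriv (deriv u) y⟫ + ‖deriv u y‖ ^ 2 ≤ 0 := by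
  have hmax_sq (x : ℝ) : ‖u x‖ ^ 2 ≤ ‖u y‖ ^ 2 := by gcongr; exact hmax x
  have hloc : IsLocalMax (fun x => ‖u x‖ ^ 2) y := Eventually.of_forall hmax_sq
  have hderiv : deriv (fun x => ‖u x‖ ^ 2) = fun x => 2 * ⟪u x, deriv u x⟫ :=
    funext fun x => (hu.hasDerivAt x).norm_sq.deriv
  have hderiv2 : deriv (deriv fun x => ‖u x‖ ^ 2) y =
      2 * (⟪u y, deriv (deriv u) y⟫ + ‖deriv u y‖ ^ 2) := by
    rw [hderiv, (((hu.hasDerivAt y).inner ℝ (hu.hasDerivAt_deriv y)).const_mul 2).deriv,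
      real_inner_self_eq_norm_sq]
  by_contra! hpos
  have hpos2 : 0 < deriv (deriv fun x => ‖u x‖ ^ 2) y := by linarith
  have hmin := isLocalMin_of_deriv_deriv_pos hpos2 hloc.deriv_eq_zero
    (hu.continuous.norm.pow 2).continuousAt
  have hconst : (fun x => ‖u x‖ ^ 2) =ᶠ[𝓝 y] fun _ => ‖u y‖ ^ 2 := by
    filter_upwards [hmin] with x hx
    exact le_antisymm (hmax_sq x) hx
  rw [hconst.deriv.deriv_eq] at hpos2
  simp at hpos2

-- A curve without curvature would move outwards at a point farthest from the origin.
lemma C2Periodic.exists_wedge_deriv_ne_zero (hu : C2Periodic u) (hreg : ∀ x, deriv u x ≠ 0) :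
    ∃ y, wedge (deriv u y) (deriv (deriv u) y) ≠ 0 := by
  by_contra! hflat
  obtain ⟨y, -, hy⟩ := (isCompact_Icc (a := (0 : ℝ)) (b := 1)).exists_isMaxOn ⟨0, by simp⟩
    hu.continuous.norm.continuousOn
  have hmax (x : ℝ) : ‖u x‖ ≤ ‖u y‖ := by
    obtain ⟨z, hz, hzx⟩ := hu.periodic.exists_mem_Ico₀ one_pos x
    rw [hzx]; exact hy ⟨hz.1, hz.2.le⟩
  have hspeed : 0 < ‖deriv u y‖ ^ 2 := pow_pos (norm_pos_iff.2 (hreg y)) 2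
  have hnormal : ⟪u y, deriv u y⟫ = 0 := by
    have hloc : IsLocalMax (fun x => ‖u x‖ ^ 2) y :=
      Eventually.of_forall fun x => pow_le_pow_left₀ (norm_nonneg _) (hmax x) 2
    linarith [hloc.hasDerivAt_eq_zero (hu.hasDerivAt y).norm_sq]
  have hparallel : ‖deriv u y‖ ^ 2 • deriv (deriv u) y =
      ⟪deriv (deriv u) y, deriv u y⟫ • deriv u y := by
    have := norm_scaledProj_sq (deriv u y) (deriv (deriv u) y)
    rwa [hflat y, norm_zero, zero_pow two_ne_zero, mul_zero, sq_eq_zero_iff, norm_eq_zero,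
      scaledProj, sub_eq_zero] at this
  have haccel : ⟪u y, deriv (deriv u) y⟫ = 0 := by
    have := congrArg (inner ℝ (u y)) hparallel
    rw [real_inner_smul_right, real_inner_smul_right, hnormal, mul_zero] at this
    exact (mul_eq_zero.1 this).resolve_left hspeed.ne'
  linarith [hu.inner_deriv_deriv_add_nonpos hmax]

-- Every admissible field differs by a multiple of a generic one from a field at which all three
-- singular coefficients are nonzero.
lemma C2Periodic.eq_zero_of_eq_deltaTP (hu : C2Periodic u) (hreg : ∀ x, deriv u x ≠ 0) (hq : 2 < q)
    (hper : Function.Periodic u a) (ha : 0 < a) (ha1 : a < 1) {L : (ℝ → E3) → ℝ} {ρ : ℝ}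
    (hadd : ∀ v w c, Admissible u v → Admissible u w →
      L (fun t => v t + c • w t) = L v + c * L w)
    (hL : ∀ w, Admissible u w → L w = -(ρ * deltaTP q u w)) (hv : Admissible u v) : L v = 0 := by
  obtain ⟨b, hper, hb, hb'⟩ : ∃ b, Function.Periodic u b ∧ 0 < b ∧ b ≤ 1 / 2 := by
    rcases le_total a (1 / 2) with h | h
    · exact ⟨a, hper, ha, h⟩
    · exact ⟨1 - a, hu.periodic.sub_period hper, by linarith, by linarith⟩
  obtain ⟨y, hwedge⟩ := hu.exists_wedge_deriv_ne_zero hreg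
  have hgeneric (w) (hw : Admissible u w) (hne : ∀ i, singCoeff u b y w i ≠ 0) : L w = 0 := by
    rw [hL w hw, hu.deltaTP_eq_zero hw.c2Periodic hq hper hb hb' (hne 0) (hne 1) (hne 2), mul_zero,
      neg_zero]
  obtain ⟨w, hw, hne⟩ := hu.exists_forall_singCoeff_ne_zero hper hb hb' hwedge
  obtain ⟨c, hadm, hne'⟩ := hv.exists_singCoeff_add_smul_ne_zero hw b y
  have hsum := hgeneric _ hadm fun i => hne' i (Or.inr (hne i))
  rwa [hadd v w c hv hw, hgeneric w hw hne, mul_zero, add_zero] at hsum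

end SingularCoefficients

section FlowForm

variable {u v w u' v' w' : ℝ → E3} {κ : ℝ}

/-- The bilinear form `(v,w)_{H²} + κ ∫ u''·w''` on the left-hand side of the scheme. -/
def flowForm (κ : ℝ) (v u w : ℝ → E3) : ℝ :=
  H2inner v w + κ * ∫ x in Ioc (0 : ℝ) 1, ⟪deriv (deriv u) x, deriv (deriv w) x⟫

/-- The integrand of `flowForm`. -/
def flowDensity (κ : ℝ) (v u w : ℝ → E3) (x : ℝ) : ℝ :=
  ⟪v x, w x⟫ + ⟪deriv v x, deriv w x⟫ + ⟪deriv (deriv v) x, deriv (deriv w) x⟫ +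
    κ * ⟪deriv (deriv u) x, deriv (deriv w) x⟫

lemma continuous_flowDensity (hv : C2Periodic v) (hu : C2Periodic u) (hw : C2Periodic w) :
    Continuous (flowDensity κ v u w) := by
  have := hv.continuous; have := hv.continuous_deriv; have := hv.continuous_deriv_deriv
  have := hw.continuous; have := hw.continuous_deriv; have := hw.continuous_deriv_deriv
  have := hu.continuous_deriv_deriv
  unfold flowDensity; fun_prop

lemma flowForm_eq (hv : C2Periodic v) (hu : C2Periodic u) (hw : C2Periodic w) :
    flowForm κ v u w = ∫ x in Ioc (0 : ℝ) 1, flowDensity κ v u w x := by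
  have := hv.continuous; have := hv.continuous_deriv; have := hv.continuous_deriv_deriv
  have := hw.continuous; have := hw.continuous_deriv; have := hw.continuous_deriv_deriv
  have := hu.continuous_deriv_deriv
  unfold flowForm H2inner flowDensity
  rw [← integral_const_mul, ← integral_add]
  all_goals exact Continuous.integrableOn_Ioc (by fun_prop)

lemma flowForm_add_smul (hv : C2Periodic v) (hu : C2Periodic u) (hw : C2Periodic w)
    (hw' : C2Periodic w') (c : ℝ) :
    flowForm κ v u (fun t => w t + c • w' t) = flowForm κ v u w + c * flowForm κ v u w' := by
  rw [flowForm_eq hv hu (hw.add (hw'.smul c)), flowForm_eq hv hu hw, flowForm_eq hv hu hw',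
    ← integral_const_mul, ← integral_add (continuous_flowDensity hv hu hw).integrableOn_Ioc
      ((continuous_flowDensity hv hu hw').const_mul c).integrableOn_Ioc]
  congr 1
  ext x
  unfold flowDensity
  rw [hw.deriv_deriv_add (hw'.smul c), hw'.deriv_deriv_smul c, hw.deriv_add (hw'.smul c),
    hw'.deriv_smul c]
  simp only [inner_add_right, real_inner_smul_right]
  ring

lemma flowForm_sub_left (hv : C2Periodic v) (hv' : C2Periodic v') (hu : C2Periodic u)
    (hu' : C2Periodic u') (hw : C2Periodic w) :
    flowForm κ (fun t => v t - v' t) (fun t => u t - u' t) w =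
      flowForm κ v u w - flowForm κ v' u' w := by
  rw [flowForm_eq (hv.sub hv') (hu.sub hu') hw, flowForm_eq hv hu hw, flowForm_eq hv' hu' hw,
    ← integral_sub (continuous_flowDensity hv hu hw).integrableOn_Ioc
      (continuous_flowDensity hv' hu' hw).integrableOn_Ioc]
  congr 1
  ext x
  unfold flowDensity
  rw [hv.deriv_deriv_sub hv', hu.deriv_deriv_sub hu', hv.deriv_sub hv']
  simp only [inner_sub_left]
  ring

lemma flowForm_comp_add_neg (hv : C2Periodic v) (hu : C2Periodic u) (hw : C2Periodic w) (a : ℝ) :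
    flowForm κ v u (fun t => w (t + -a)) =
      flowForm κ (fun t => v (t + a)) (fun t => u (t + a)) w := by
  have hw_shift := hw.shift (-a)
  have hper : Function.Periodic (flowDensity κ v u fun t => w (t + -a)) 1 := fun x => by
    simp only [flowDensity, hv.periodic x, hv.periodic_deriv x, hv.periodic_deriv_deriv x,
      hu.periodic_deriv_deriv x, hw_shift.periodic_deriv x, hw_shift.periodic_deriv_deriv x]
    rw [add_right_comm x, hw.periodic]
  have hderiv (f : ℝ → E3) (b : ℝ) : deriv (fun t => f (t + b)) = fun t => deriv f (t + b) :=
    funext (deriv_comp_add_const f b)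
  rw [flowForm_eq hv hu hw_shift, flowForm_eq (hv.shift a) (hu.shift a) hw,
    ← setIntegral_Ioc_comp_add_right hper a]
  simp only [flowDensity, hderiv, add_neg_cancel_right]

lemma flowForm_smul_self (hv : C2Periodic v) (c : ℝ) :
    flowForm κ v (fun t => c • v t) v = H2inner v v + κ * (c * bendEnergy v) := by
  rw [flowForm, hv.deriv_deriv_smul c]
  simp only [real_inner_smul_left, real_inner_self_eq_norm_sq, integral_const_mul, bendEnergy]

lemma H2inner_self_nonneg (v : ℝ → E3) : 0 ≤ H2inner v v := by
  unfold H2inner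
  simp only [real_inner_self_eq_norm_sq]
  positivity

lemma bendEnergy_smul (hv : C2Periodic v) (c : ℝ) :
    bendEnergy (fun t => c • v t) = c ^ 2 * bendEnergy v := by
  unfold bendEnergy
  rw [hv.deriv_deriv_smul, ← integral_const_mul]
  simp only [norm_smul, mul_pow, Real.norm_eq_abs, sq_abs]

lemma bendEnergy_eq_add_smul (hu : C2Periodic u) (hv : C2Periodic v) (c : ℝ) :
    bendEnergy u = bendEnergy (fun t => u t + c • v t) + c ^ 2 * bendEnergy v - 2 * c *
      ∫ x in Ioc (0 : ℝ) 1, ⟪deriv (deriv fun t => u t + c • v t) x, deriv (deriv v) x⟫ := by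
  have hu'' := hu.continuous_deriv_deriv
  have hv'' := hv.continuous_deriv_deriv
  unfold bendEnergy
  rw [hu.deriv_deriv_add (hv.smul c), hv.deriv_deriv_smul c, ← integral_const_mul,
    ← integral_const_mul, ← integral_add, ← integral_sub]
  · congr 1
    ext x
    rw [norm_add_sq_real, norm_smul, inner_add_left, real_inner_smul_left,
      real_inner_smul_right, real_inner_self_eq_norm_sq, mul_pow, Real.norm_eq_abs, sq_abs]
    ring
  all_goals exact Continuous.integrableOn_Ioc (by fun_prop)

namespace C2Periodic

lemma bendEnergy_le_H2inner (hv : C2Periodic v) : bendEnergy v ≤ H2inner v v := by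
  have := hv.continuous; have := hv.continuous_deriv; have := hv.continuous_deriv_deriv
  refine integral_mono (Continuous.integrableOn_Ioc (by fun_prop))
    (Continuous.integrableOn_Ioc (by fun_prop)) fun x => ?_
  simp only [real_inner_self_eq_norm_sq]
  nlinarith [sq_nonneg ‖v x‖, sq_nonneg ‖deriv v x‖]

lemma norm_deriv_le_sqrt_H2inner (hv : C2Periodic v) (x : ℝ) :
    ‖deriv v x‖ ≤ √(H2inner v v) :=
  Real.le_sqrt_of_sq_le ((hv.norm_deriv_sq_le x).trans hv.bendEnergy_le_H2inner)

lemma eq_zero_of_H2inner_self (hv : C2Periodic v) (h : H2inner v v ≤ 0) (x : ℝ) : v x = 0 := by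
  have hderiv : deriv v = fun _ => 0 := funext fun y => norm_le_zero_iff.1 <|
    (hv.norm_deriv_le_sqrt_H2inner y).trans (Real.sqrt_eq_zero_of_nonpos h).le
  have hconst : ∀ y, v y = v x := fun y =>
    is_const_of_deriv_eq_zero (hv.smooth.differentiable two_ne_zero) (congrFun hderiv) y x
  have hnorm : H2inner v v = ‖v x‖ ^ 2 := by
    unfold H2inner
    simp [hderiv, hconst]
  rw [hnorm] at h
  exact norm_eq_zero.1 (pow_eq_zero_iff two_ne_zero |>.1 (le_antisymm h (sq_nonneg _)))

lemma exists_eq_sqrt_H2inner_smul (hv : C2Periodic v) :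
    ∃ ψ, C2Periodic ψ ∧ bendEnergy ψ ≤ 1 ∧ v = fun t => √(H2inner v v) • ψ t := by
  refine ⟨fun t => (√(H2inner v v))⁻¹ • v t, hv.smul _, ?_, funext fun t => ?_⟩
  · rw [bendEnergy_smul hv, inv_pow, Real.sq_sqrt (H2inner_self_nonneg v)]
    exact inv_mul_le_one_of_le₀ hv.bendEnergy_le_H2inner (H2inner_self_nonneg v)
  · rcases (Real.sqrt_nonneg (H2inner v v)).eq_or_lt with h | h
    · rw [← h, zero_smul, hv.eq_zero_of_H2inner_self (Real.sqrt_eq_zero'.1 h.symm)]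
    · exact (smul_inv_smul₀ h.ne' _).symm

end C2Periodic

end FlowForm

section FirstVariation

variable {u v w : ℝ → E3} {q Λ ℓ τ : ℝ}

lemma Mfun_smul_middle (hw : C2Periodic w) (c : ℝ) :
    Mfun q u (fun t => c • w t) v = c * Mfun q u w v := by
  unfold Mfun
  rw [← integral_const_mul]
  congr 1; ext p
  simp only [Mintegrand, hw.deriv_smul c, wedgeInner, real_inner_smul_right]
  ring

lemma Mfun_smul_right (hw : C2Periodic w) (c : ℝ) :
    Mfun q u v (fun t => c • w t) = c * Mfun q u v w := by
  unfold Mfun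
  rw [← integral_const_mul]
  congr 1; ext p
  simp only [Mintegrand, hw.deriv_smul c]
  rw [show c • w p.1 - c • w p.2 - wrap (p.1 - p.2) • c • deriv w p.2 =
    c • (w p.1 - w p.2 - wrap (p.1 - p.2) • deriv w p.2) by module]
  simp only [wedgeInner, real_inner_smul_right]
  ring

lemma Afun_smul_right (c : ℝ) : Afun q u v (fun t => c • w t) = c * Afun q u v w := by
  unfold Afun
  rw [← integral_const_mul]
  congr 1; ext p
  simp only [Aintegrand, ← smul_sub, real_inner_smul_right]
  ring

lemma deltaTP_smul (hw : C2Periodic w) (c : ℝ) :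
    deltaTP q u (fun t => c • w t) = c * deltaTP q u w := by
  rw [deltaTP, deltaTP, Mfun_smul_right hw, Mfun_smul_middle hw, Afun_smul_right]
  ring

lemma TPr_nonneg (q : ℝ) (u : ℝ → E3) : 0 ≤ TPr q u := ENNReal.toReal_nonneg

/-- The Lipschitz constant of the tangent-point energy on a class of tame curves. -/
def varConst (Λ ℓ : ℝ) : ℝ := 96 / ℓ ^ 10 * remainderMoment Λ

/-- The second-order constant of the tangent-point energy on a class of tame curves. -/
def remConst (Λ ℓ : ℝ) : ℝ := 10 ^ 8 / ℓ ^ 12 * remainderMoment Λ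

lemma varConst_nonneg (hℓ : 0 < ℓ) : 0 ≤ varConst Λ ℓ := by
  have := remainderMoment_pos Λ
  unfold varConst; positivity

lemma remConst_nonneg (hℓ : 0 < ℓ) : 0 ≤ remConst Λ ℓ := by
  have := remainderMoment_pos Λ
  unfold remConst; positivity

namespace Tame

lemma abs_deltaTP_le_mul_sqrt (hu : Tame u Λ ℓ) (hq : 2 < q) (hq4 : q ≤ 4) (hv : C2Periodic v) :
    |deltaTP q u v| ≤ varConst Λ ℓ * √(H2inner v v) := by
  obtain ⟨ψ, hψ, hψ1, hvψ⟩ := hv.exists_eq_sqrt_H2inner_smul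
  set n := √(H2inner v v)
  have hn : 0 ≤ n := Real.sqrt_nonneg _
  rw [hvψ, deltaTP_smul hψ, abs_mul, abs_of_nonneg hn, mul_comm]
  exact mul_le_mul_of_nonneg_right (hu.abs_deltaTP_le hq hq4 hψ hψ1) hn

lemma TPe_add_smul_ne_top (hu : Tame u Λ ℓ) (hq : 2 < q) (hq4 : q ≤ 4) (hv : C2Periodic v)
    (hτ : 0 ≤ τ) (hshort : τ * √(H2inner v v) ≤ ℓ / 2) :
    TPe q (fun t => u t + τ • v t) ≠ ⊤ := by
  obtain ⟨ψ, hψ, hψ1, hvψ⟩ := hv.exists_eq_sqrt_H2inner_smul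
  set n := √(H2inner v v)
  simp only [hvψ, smul_smul]
  exact hu.TPe_add_ne_top hψ hψ1 (by positivity) hshort hq hq4

lemma TPr_add_smul_le (hu : Tame u Λ ℓ) (hq : 2 < q) (hq4 : q ≤ 4) (hv : C2Periodic v)
    (hτ : 0 ≤ τ) (hshort : τ * √(H2inner v v) ≤ ℓ / 2) :
    TPr q (fun t => u t + τ • v t) ≤
      TPr q u + τ * deltaTP q u v + remConst Λ ℓ * (τ ^ 2 * H2inner v v) := by
  rw [← Real.sq_sqrt (H2inner_self_nonneg v)]
  obtain ⟨ψ, hψ, hψ1, hvψ⟩ := hv.exists_eq_sqrt_H2inner_smul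
  set n := √(H2inner v v)
  have key := hu.TPr_add_le hψ hψ1 (by positivity) hshort hq hq4
  simp only [hvψ, smul_smul, deltaTP_smul hψ]
  rwa [← mul_assoc, ← mul_pow]

lemma add_smul_ne (hu : Tame u Λ ℓ) (hv : C2Periodic v) (hτ : 0 ≤ τ)
    (hshort : τ * √(H2inner v v) ≤ ℓ / 2) (y : ℝ) {s : ℝ} (hs : wrap s ≠ 0) :
    u (y + s) + τ • v (y + s) ≠ u y + τ • v y := by
  intro heq
  have hsep : ℓ * |wrap s| ≤ τ * ‖v (y + s) - v y‖ := by
    have hdiff : u (y + s) - u y = -(τ • (v (y + s) - v y)) := by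
      rw [smul_sub, neg_sub, sub_eq_sub_iff_add_eq_add, heq, add_comm]
    have := hu.sep (y + s) y
    rwa [add_sub_cancel_left, hdiff, norm_neg, norm_smul, Real.norm_of_nonneg hτ] at this
  have hv_le : ‖v (y + s) - v y‖ ≤ √(H2inner v v) * |wrap s| := by
    have := hv.norm_sub_le hv.norm_deriv_le_sqrt_H2inner (y + wrap s) y
    rwa [add_sub_cancel_left, ← add_sub_cancel_left y s, ← hv.sub_eq_wrap (y + s) y,
      add_sub_cancel_left] at this
  have hw : 0 < |wrap s| := abs_pos.2 hs
  nlinarith [mul_le_mul_of_nonneg_left hv_le hτ, mul_le_mul_of_nonneg_right hshort hw.le,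
    mul_pos hu.sep_pos hw]

end Tame

end FirstVariation

section Step

variable {u v w : ℝ → E3} {q a b κ ρ τ e₀ Λ ℓ : ℝ}

lemma Admissible.comp_add_right (hw : Admissible u w) (hper : Function.Periodic (deriv u) b) :
    Admissible u (fun t => w (t + b)) :=
  ⟨hw.c2Periodic.shift b, fun x => by rw [deriv_comp_add_const, ← hper x, hw.orth]⟩

lemma Admissible.norm_deriv_add_smul_sq (hv : Admissible u v) (hu : C2Periodic u) (x : ℝ) :
    ‖deriv (fun t => u t + τ • v t) x‖ ^ 2 = ‖deriv u x‖ ^ 2 + τ ^ 2 * ‖deriv v x‖ ^ 2 := by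
  rw [hu.deriv_add_smul hv.c2Periodic, norm_add_sq_real, real_inner_smul_right, real_inner_comm,
    hv.orth, norm_smul, Real.norm_eq_abs, mul_pow, sq_abs]
  ring

/-- One step `u ↦ u + τ v` of the semi-implicit scheme, `v` being the difference quotient. -/
structure Step (κ ρ q τ : ℝ) (u v : ℝ → E3) : Prop where
  pos : 0 < τ
  c2Periodic : C2Periodic u
  admissible : Admissible u v
  flowForm_eq : ∀ w, Admissible u w →
    flowForm κ v (fun t => u t + τ • v t) w = -(ρ * deltaTP q u w)

/-- Curves on which the tangent-point force does not act: either the tangent-point energy is absent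
or the curve is multiply covered. -/
def Forceless (ρ : ℝ) (u : ℝ → E3) : Prop :=
  ρ = 0 ∨ ∃ a, 0 < a ∧ a < 1 ∧ Function.Periodic u a

namespace Step

lemma c2Periodic_next (h : Step κ ρ q τ u v) : C2Periodic (fun t => u t + τ • v t) :=
  h.c2Periodic.add (h.admissible.c2Periodic.smul τ)

lemma bending_balance (h : Step κ ρ q τ u v) :
    τ * H2inner v v + κ / 2 * bendEnergy (fun t => u t + τ • v t) + κ / 2 * τ ^ 2 * bendEnergy v =
      κ / 2 * bendEnergy u - τ * (ρ * deltaTP q u v) := by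
  have htest := h.flowForm_eq v h.admissible
  rw [flowForm] at htest
  rw [bendEnergy_eq_add_smul h.c2Periodic h.admissible.c2Periodic τ]
  linear_combination τ * htest

lemma bending_le (h : Step κ ρ q τ u v) (hκ : 0 ≤ κ) :
    τ * H2inner v v + κ / 2 * bendEnergy (fun t => u t + τ • v t) ≤
      κ / 2 * bendEnergy u - τ * (ρ * deltaTP q u v) := by
  have hbend := bendEnergy_nonneg v
  have : 0 ≤ κ / 2 * τ ^ 2 * bendEnergy v := by positivity
  linarith [h.bending_balance]

lemma rho_mul_deltaTP_eq_zero (h : Step κ ρ q τ u v) (hq : 2 < q) (hreg : ∀ x, deriv u x ≠ 0)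
    (hf : Forceless ρ u) (hw : Admissible u w) : ρ * deltaTP q u w = 0 := by
  rcases hf with rfl | ⟨a, ha, ha1, hper⟩
  · rw [zero_mul]
  · rw [← neg_eq_zero, ← h.flowForm_eq w hw]
    exact h.c2Periodic.eq_zero_of_eq_deltaTP hreg hq hper ha ha1
      (fun _ _ c hw hw' => flowForm_add_smul h.admissible.c2Periodic h.c2Periodic_next
        hw.c2Periodic hw'.c2Periodic c) h.flowForm_eq hw

-- Testing with `D = v - v(· + a)` and with its translate by `-a` shows that the coercive form
-- `flowForm κ D (τ • D)` vanishes at `D`.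
lemma periodic_next (h : Step κ ρ q τ u v) (hκ : 0 ≤ κ) (hper : Function.Periodic u a)
    (hzero : ∀ w, Admissible u w → flowForm κ v (fun t => u t + τ • v t) w = 0) :
    Function.Periodic (fun t => u t + τ • v t) a := by
  have hv := h.admissible.c2Periodic
  have hu := h.c2Periodic_next
  have hper' := periodic_deriv hper
  have hτ := h.pos
  set D : ℝ → E3 := fun t => v t - v (t + a) with hD
  have hDper : C2Periodic D := hv.sub (hv.shift a)
  have hDadm : Admissible u D := by
    convert h.admissible.add_smul (h.admissible.comp_add_right hper') (-1) using 2 with t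
    module
  have hstep : (fun t => u t + τ • v t - (u (t + a) + τ • v (t + a))) = fun t => τ • D t := by
    ext1 t; rw [hper, hD]; module
  have hD0 : H2inner D D + κ * (τ * bendEnergy D) = 0 := by
    rw [← flowForm_smul_self hDper, ← hstep,
      flowForm_sub_left hv (hv.shift a) hu (hu.shift a) hDper,
      ← flowForm_comp_add_neg hv hu hDper, hzero _ hDadm,
      hzero _ (hDadm.comp_add_right hper'.neg), sub_zero]
  have hbend := bendEnergy_nonneg D
  have : 0 ≤ κ * (τ * bendEnergy D) := by positivity
  intro t
  have hvt : v t = v (t + a) :=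
    sub_eq_zero.1 (hDper.eq_zero_of_H2inner_self (by linarith) t)
  simp only [hper t, hvt]

lemma forceless_next (h : Step κ ρ q τ u v) (hκ : 0 ≤ κ) (hq : 2 < q)
    (hreg : ∀ x, deriv u x ≠ 0) (hf : Forceless ρ u) :
    Forceless ρ (fun t => u t + τ • v t) := by
  refine hf.imp_right ?_
  rintro ⟨a, ha, ha1, hper⟩
  refine ⟨a, ha, ha1, h.periodic_next hκ hper fun w hw => ?_⟩
  rw [h.flowForm_eq w hw, h.rho_mul_deltaTP_eq_zero hq hreg hf hw, neg_zero]

end Step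

/-- The step-size conditions under which the scheme stays in the class `Tame · Λ ℓ`. -/
structure SmallTimeStep (ρ e₀ Λ ℓ τ : ℝ) : Prop where
  energy_le_sq : τ * (16 * e₀) ≤ ℓ ^ 2
  varConst_le : τ * (8 * (ρ * varConst Λ ℓ)) ≤ ℓ
  remConst_le : τ * (2 * (ρ * remConst Λ ℓ)) ≤ 1
  energy_le : τ * (2 * e₀) ≤ 3

/-- The stability constant `c'` of the scheme on the class `Tame · Λ ℓ`. -/
def stabilityConst (ρ e₀ Λ ℓ : ℝ) : ℝ :=
  8 * e₀ / ℓ ^ 2 + 4 * (ρ * varConst Λ ℓ) / ℓ + ρ * remConst Λ ℓ + e₀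

lemma stabilityConst_pos (hρ : 0 ≤ ρ) (he₀ : 0 < e₀) (hℓ : 0 < ℓ) :
    0 < stabilityConst ρ e₀ Λ ℓ := by
  have := varConst_nonneg (Λ := Λ) hℓ
  have := remConst_nonneg (Λ := Λ) hℓ
  unfold stabilityConst; positivity

lemma smallTimeStep_of_mul_stabilityConst_le (hρ : 0 ≤ ρ) (he₀ : 0 ≤ e₀) (hℓ : 0 < ℓ) (hτ : 0 ≤ τ)
    (h : τ * stabilityConst ρ e₀ Λ ℓ ≤ 1 / 2) : SmallTimeStep ρ e₀ Λ ℓ τ := by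
  have := varConst_nonneg (Λ := Λ) hℓ
  have := remConst_nonneg (Λ := Λ) hℓ
  have h₁ : 0 ≤ τ * (8 * e₀ / ℓ ^ 2) := by positivity
  have h₂ : 0 ≤ τ * (4 * (ρ * varConst Λ ℓ) / ℓ) := by positivity
  have h₃ : 0 ≤ τ * (ρ * remConst Λ ℓ) := by positivity
  have h₄ : 0 ≤ τ * e₀ := by positivity
  rw [stabilityConst, mul_add, mul_add, mul_add] at h
  have h₁' : τ * (8 * e₀ / ℓ ^ 2) ≤ 1 / 2 := by linarith
  have h₂' : τ * (4 * (ρ * varConst Λ ℓ) / ℓ) ≤ 1 / 2 := by linarith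
  rw [← mul_div_assoc, div_le_iff₀ (by positivity)] at h₁' h₂'
  constructor <;> linarith

namespace Step

-- The bending balance gives `(τ‖v‖)² ≤ τ e₀ + τ ρ C (τ‖v‖)`, a quadratic inequality for `τ‖v‖`.
lemma mul_sqrt_H2inner_le (h : Step κ ρ q τ u v) (hκ : 0 ≤ κ) (hρ : 0 ≤ ρ) (hq : 2 < q)
    (hq4 : q ≤ 4) (hu : Tame u Λ ℓ) (hτ : SmallTimeStep ρ e₀ Λ ℓ τ)
    (hbend : κ / 2 * bendEnergy u ≤ e₀) : τ * √(H2inner v v) ≤ ℓ / 2 := by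
  have hτ0 := h.pos
  have hℓ := hu.sep_pos
  have hbend_next := bendEnergy_nonneg (fun t => u t + τ • v t)
  have hbend_next' : 0 ≤ κ / 2 * bendEnergy (fun t => u t + τ • v t) := by positivity
  have hvar := abs_le.1 (hu.abs_deltaTP_le_mul_sqrt hq hq4 h.admissible.c2Periodic)
  have hn0 : 0 ≤ √(H2inner v v) := Real.sqrt_nonneg _
  have hbalance := h.bending_le hκ
  nth_rw 1 [← Real.sq_sqrt (H2inner_self_nonneg v)] at hbalance
  set n := √(H2inner v v)
  by_contra! hlarge
  have hforce : -(ρ * deltaTP q u v) ≤ ρ * varConst Λ ℓ * n := by nlinarith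
  have hquad : τ * n ^ 2 ≤ e₀ + τ * n * (ρ * varConst Λ ℓ) := by
    nlinarith [mul_le_mul_of_nonneg_left hforce hτ0.le]
  have hquad' : (τ * n) ^ 2 ≤ ℓ ^ 2 / 16 + τ * n * (ℓ / 8) := by
    nlinarith [mul_le_mul_of_nonneg_left hquad hτ0.le, hτ.energy_le_sq,
      mul_le_mul_of_nonneg_left hτ.varConst_le (show 0 ≤ τ * n by positivity)]
  nlinarith

lemma energyE_le (h : Step κ ρ q τ u v) (hκ : 0 ≤ κ) (hρ : 0 ≤ ρ) (hq : 2 < q) (hq4 : q ≤ 4)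
    (hu : Tame u Λ ℓ) (hτ : SmallTimeStep ρ e₀ Λ ℓ τ) (hshort : τ * √(H2inner v v) ≤ ℓ / 2) :
    τ / 2 * H2inner v v + energyE κ ρ q (fun t => u t + τ • v t) ≤ energyE κ ρ q u := by
  have hbalance := h.bending_le hκ
  have htaylor := mul_le_mul_of_nonneg_left
    (hu.TPr_add_smul_le hq hq4 h.admissible.c2Periodic h.pos.le hshort) hρ
  have hrem := mul_le_mul_of_nonneg_left hτ.remConst_le
    (mul_nonneg h.pos.le (H2inner_self_nonneg v))
  unfold energyE
  simp only [bendEnergy] at hbalance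
  linarith

end Step

end Step

section Induction

variable {κ ρ q e₀ τ Λ h S : ℝ} {u v : ℝ → E3}

lemma wrap_ne_zero {s : ℝ} (hs₀ : 0 < s) (hs₁ : s < 1) : wrap s ≠ 0 := by
  obtain ⟨n, hn⟩ := exists_wrap_eq_add s
  intro hs
  have hn_gt : -1 < n := by exact_mod_cast (show (-1 : ℝ) < n by linarith)
  have hn_lt : n < 0 := by exact_mod_cast (show (n : ℝ) < 0 by linarith)
  omega

/-- `c` is an admissible constant in the Sobolev inequality `‖w'‖_{L^∞} ≤ c ‖w''‖_{L²}`, stated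
with squares. -/
def IsSobolevConst (c : ℝ) : Prop :=
  ∀ w : ℝ → E3, C2Periodic w → ∀ x, ‖deriv w x‖ ^ 2 ≤ c ^ 2 * bendEnergy w

lemma isSobolevConst_one : IsSobolevConst 1 := fun w hw x => by
  rw [one_pow, one_mul]; exact hw.norm_deriv_sq_le x

lemma TPe_le_of_energyE_le (hκ : 0 ≤ κ) (hρ : 0 < ρ) (hfin : TPe q u ≠ ⊤)
    (hE : energyE κ ρ q u ≤ e₀) : TPe q u ≤ ENNReal.ofReal (e₀ / ρ) := by
  have hbend : 0 ≤ κ / 2 * bendEnergy u := mul_nonneg (by positivity) (bendEnergy_nonneg u)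
  have hTP : TPr q u ≤ e₀ / ρ := by
    rw [le_div_iff₀ hρ]
    linarith [show κ / 2 * bendEnergy u + ρ * TPr q u ≤ e₀ from hE]
  rw [← ENNReal.ofReal_toReal hfin]
  exact ENNReal.ofReal_le_ofReal hTP

lemma mul_bendEnergy_le_energyE (hρ : 0 ≤ ρ) : κ / 2 * bendEnergy u ≤ energyE κ ρ q u :=
  le_add_of_nonneg_right (mul_nonneg hρ (TPr_nonneg q u))

/-- The properties propagated by the scheme, where `S` is the accumulated squared `H²`-norm of the
difference quotients. The dissipation inequality lacks the tangent-point energy for multiply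
covered curves. -/
structure Iterate (κ ρ q e₀ τ Λ h : ℝ) (u : ℝ → E3) (S : ℝ) : Prop where
  nonneg : 0 ≤ S
  one_le : ∀ x, 1 ≤ ‖deriv u x‖
  speed_le : ∀ c, IsSobolevConst c → ∀ x, ‖deriv u x‖ ^ 2 ≤ 1 + c ^ 2 * τ ^ 2 * S
  dissipation : (Forceless ρ u ∧ τ / 2 * S + κ / 2 * bendEnergy u ≤ e₀) ∨
    (0 < ρ ∧ Tame u Λ (bilConst Λ h) ∧
      τ / 2 * S + energyE κ ρ q u ≤ e₀)

lemma BoundedBending.tame_or_periodic (hu : BoundedBending u Λ) (hq : 0 < q)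
    (hs : ChordScale q Λ (e₀ / ρ) h) (hTP : TPe q u ≤ ENNReal.ofReal (e₀ / ρ))
    (hunit : ∀ x, ‖deriv u x‖ ≤ 1) :
    Tame u Λ (bilConst Λ h) ∨ ∃ a, 0 < a ∧ a < 1 ∧ Function.Periodic u a := by
  by_cases hret : ∃ y, ∃ s ∈ Icc (locScale Λ) (1 - locScale Λ),
      u (y + s) = u y
  · exact .inr (hu.exists_periodic hq hs hTP hunit hret)
  · push Not at hret
    exact .inl (hu.tame hq hs hTP hret)

namespace Iterate

lemma initial (hκ : 0 < κ) (hρ : 0 ≤ ρ) (hq : 0 < q) (hΛ : e₀ ≤ κ / 2 * Λ)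
    (hs : ChordScale q Λ (e₀ / ρ) h) (hu : C2Periodic u)
    (hunit : ∀ x, ‖deriv u x‖ = 1) (hfin : TPe q u ≠ ⊤) (hE : energyE κ ρ q u ≤ e₀) :
    Iterate κ ρ q e₀ τ Λ h u 0 := by
  have hbend : κ / 2 * bendEnergy u ≤ e₀ := (mul_bendEnergy_le_energyE hρ).trans hE
  refine ⟨le_rfl, fun x => (hunit x).ge, fun c _ x => by simp [hunit], ?_⟩
  simp only [mul_zero, zero_add]
  rcases hρ.eq_or_lt with rfl | hρ'
  · exact .inl ⟨.inl rfl, hbend⟩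
  have hbounded : BoundedBending u Λ := ⟨hu, fun x => (hunit x).ge,
    fun x => by rw [hunit]; exact one_le_two,
    le_of_mul_le_mul_left (hbend.trans hΛ) (by positivity)⟩
  rcases hbounded.tame_or_periodic hq hs (TPe_le_of_energyE_le hκ.le hρ' hfin hE)
    (fun x => (hunit x).le) with htame | hper
  · exact .inr ⟨hρ', htame, hE⟩
  · exact .inl ⟨.inr hper, hbend⟩

lemma half_mul_add_le (hu : Iterate κ ρ q e₀ τ Λ h u S) :
    τ / 2 * S + κ / 2 * bendEnergy u ≤ e₀ := by
  rcases hu.dissipation with ⟨-, hle⟩ | ⟨hρ, -, hle⟩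
  · exact hle
  · linarith [mul_bendEnergy_le_energyE (κ := κ) (q := q) (u := u) hρ.le]

lemma deriv_ne_zero (hu : Iterate κ ρ q e₀ τ Λ h u S) (x : ℝ) : deriv u x ≠ 0 := fun hx => by
  have := hu.one_le x
  rw [hx, norm_zero] at this
  linarith

lemma one_le_next (hu : Iterate κ ρ q e₀ τ Λ h u S) (hstep : Step κ ρ q τ u v) (x : ℝ) :
    1 ≤ ‖deriv (fun t => u t + τ • v t) x‖ := by
  refine (one_le_sq_iff₀ (norm_nonneg _)).1 ?_
  rw [hstep.admissible.norm_deriv_add_smul_sq hstep.c2Periodic]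
  exact le_add_of_le_of_nonneg (one_le_pow₀ (hu.one_le x)) (by positivity)

lemma speed_le_next (hu : Iterate κ ρ q e₀ τ Λ h u S) (hstep : Step κ ρ q τ u v) {c : ℝ}
    (hc : IsSobolevConst c) (x : ℝ) :
    ‖deriv (fun t => u t + τ • v t) x‖ ^ 2 ≤ 1 + c ^ 2 * τ ^ 2 * (S + H2inner v v) := by
  have hv := hstep.admissible.c2Periodic
  have hspeed : ‖deriv v x‖ ^ 2 ≤ c ^ 2 * H2inner v v :=
    (hc v hv x).trans (mul_le_mul_of_nonneg_left hv.bendEnergy_le_H2inner (sq_nonneg c))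
  rw [hstep.admissible.norm_deriv_add_smul_sq hstep.c2Periodic]
  linarith [hu.speed_le c hc x, mul_le_mul_of_nonneg_left hspeed (sq_nonneg τ)]

lemma boundedBending_next (hu : Iterate κ ρ q e₀ τ Λ h u S) (hstep : Step κ ρ q τ u v) (hκ : 0 < κ)
    (hΛ : e₀ ≤ κ / 2 * Λ) (hτe : τ * (2 * e₀) ≤ 3)
    (hle : τ / 2 * (S + H2inner v v) + κ / 2 * bendEnergy (fun t => u t + τ • v t) ≤ e₀) :
    BoundedBending (fun t => u t + τ • v t) Λ := by
  have hτ := hstep.pos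
  have hN := H2inner_self_nonneg v
  have hS := hu.nonneg
  have hbend := bendEnergy_nonneg (fun t => u t + τ • v t)
  have hS_le : 0 ≤ τ / 2 * (S + H2inner v v) := by positivity
  have hbend' : 0 ≤ κ / 2 * bendEnergy (fun t => u t + τ • v t) := by positivity
  refine ⟨hstep.c2Periodic_next, hu.one_le_next hstep, fun x => ?_,
    le_of_mul_le_mul_left (by linarith : κ / 2 * _ ≤ κ / 2 * Λ) (by positivity)⟩
  have hspeed := hu.speed_le_next hstep isSobolevConst_one x
  have : τ * (τ * (S + H2inner v v)) ≤ τ * (2 * e₀) :=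
    mul_le_mul_of_nonneg_left (by linarith) hτ.le
  exact (abs_le_of_sq_le_sq' (by linarith) two_pos.le).2

lemma dissipation_next (hu : Iterate κ ρ q e₀ τ Λ h u S) (hstep : Step κ ρ q τ u v) (hκ : 0 < κ)
    (hq : 2 < q) (hq4 : q ≤ 4) (hΛ : e₀ ≤ κ / 2 * Λ)
    (hs : ChordScale q Λ (e₀ / ρ) h)
    (hτ : SmallTimeStep ρ e₀ Λ (bilConst Λ h) τ) :
    (Forceless ρ (fun t => u t + τ • v t) ∧
      τ / 2 * (S + H2inner v v) + κ / 2 * bendEnergy (fun t => u t + τ • v t) ≤ e₀) ∨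
    (0 < ρ ∧ Tame (fun t => u t + τ • v t) Λ (bilConst Λ h) ∧
      τ / 2 * (S + H2inner v v) + energyE κ ρ q (fun t => u t + τ • v t) ≤ e₀) := by
  have hv := hstep.admissible.c2Periodic
  have hN : 0 ≤ τ * H2inner v v := mul_nonneg hstep.pos.le (H2inner_self_nonneg v)
  have hS : 0 ≤ τ * S := mul_nonneg hstep.pos.le hu.nonneg
  rcases hu.dissipation with ⟨hf, hle⟩ | ⟨hρ, htame, hle⟩
  · have hbend := hstep.bending_le hκ.le
    rw [hstep.rho_mul_deltaTP_eq_zero hq hu.deriv_ne_zero hf hstep.admissible] at hbend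
    exact .inl ⟨hstep.forceless_next hκ.le hq hu.deriv_ne_zero hf, by linarith⟩
  · have hshort := hstep.mul_sqrt_H2inner_le hκ.le hρ.le hq hq4 htame hτ
      (by linarith [hu.half_mul_add_le])
    have hfin' := htame.TPe_add_smul_ne_top hq hq4 hv hstep.pos.le hshort
    have hle' : τ / 2 * (S + H2inner v v) + energyE κ ρ q (fun t => u t + τ • v t) ≤ e₀ := by
      linarith [hstep.energyE_le hκ.le hρ.le hq hq4 htame hτ hshort]
    have hbounded := hu.boundedBending_next hstep hκ hΛ hτ.energy_le
      (hle'.trans' (add_le_add_right (mul_bendEnergy_le_energyE hρ.le) _))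
    refine .inr ⟨hρ, ?_, hle'⟩
    refine hbounded.tame (by linarith) hs (TPe_le_of_energyE_le hκ.le hρ hfin' (by linarith))
      fun y s hs => htame.add_smul_ne hv hstep.pos.le hshort y (wrap_ne_zero ?_ ?_)
    · exact (locScale_pos hbounded.nonneg).trans_le hs.1
    · linarith [hs.2, locScale_pos hbounded.nonneg]

lemma next (hu : Iterate κ ρ q e₀ τ Λ h u S) (hstep : Step κ ρ q τ u v) (hκ : 0 < κ) (hq : 2 < q)
    (hq4 : q ≤ 4) (hΛ : e₀ ≤ κ / 2 * Λ) (hs : ChordScale q Λ (e₀ / ρ) h)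
    (hτ : SmallTimeStep ρ e₀ Λ (bilConst Λ h) τ) :
    Iterate κ ρ q e₀ τ Λ h (fun t => u t + τ • v t) (S + H2inner v v) :=
  ⟨add_nonneg hu.nonneg (H2inner_self_nonneg v), hu.one_le_next hstep,
    fun _ hc => hu.speed_le_next hstep hc, hu.dissipation_next hstep hκ hq hq4 hΛ hs hτ⟩

lemma abs_sub_one_le (hu : Iterate κ ρ q e₀ τ Λ h u S) (hκ : 0 ≤ κ) (hτ : 0 ≤ τ) {c : ℝ}
    (hc : IsSobolevConst c) (x : ℝ) : |‖deriv u x‖ ^ 2 - 1| ≤ 2 * τ * c ^ 2 * e₀ := by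
  have hbend : 0 ≤ κ / 2 * bendEnergy u := mul_nonneg (by positivity) (bendEnergy_nonneg u)
  have hS : τ * c ^ 2 * (τ * S) ≤ τ * c ^ 2 * (2 * e₀) :=
    mul_le_mul_of_nonneg_left (by linarith [hu.half_mul_add_le]) (by positivity)
  rw [abs_of_nonneg (sub_nonneg.2 (one_le_pow₀ (hu.one_le x)))]
  linarith [hu.speed_le c hc x]

end Iterate

lemma isSobolevConst_of_norm_deriv_le {c : ℝ}
    (h : ∀ w : ℝ → E3, C2Periodic w → ∀ x, ‖deriv w x‖ ≤ c * bendEnergy w ^ ((1 : ℝ) / 2)) :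
    IsSobolevConst c := fun w hw x => by
  have := pow_le_pow_left₀ (norm_nonneg _) (h w hw x) 2
  rwa [← Real.sqrt_eq_rpow, mul_pow, Real.sq_sqrt (bendEnergy_nonneg w)] at this

lemma add_smul_inv_smul_sub (hτ : τ ≠ 0) (u u' : ℝ → E3) :
    (fun t => u t + τ • τ⁻¹ • (u' t - u t)) = u' := by
  simp only [smul_inv_smul₀ hτ, add_sub_cancel]

lemma step_diffQuotient {u' : ℝ → E3} (hτ : 0 < τ) (hu : C2Periodic u) (hu' : C2Periodic u')
    (horth : ∀ x, ⟪deriv (fun t => τ⁻¹ • (u' t - u t)) x, deriv u x⟫ = 0)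
    (heq : ∀ w, Admissible u w →
      flowForm κ (fun t => τ⁻¹ • (u' t - u t)) u' w = -(ρ * deltaTP q u w)) :
    Step κ ρ q τ u (fun t => τ⁻¹ • (u' t - u t)) :=
  ⟨hτ, hu, ⟨(hu'.sub hu).smul τ⁻¹, horth⟩, by rwa [add_smul_inv_smul_sub hτ.ne']⟩

lemma exists_iterate {u : ℕ → ℝ → E3} {K : ℕ} (hκ : 0 < κ) (hq : 2 < q) (hq4 : q ≤ 4)
    (hΛ : e₀ ≤ κ / 2 * Λ) (hs : ChordScale q Λ (e₀ / ρ) h)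
    (hτ : SmallTimeStep ρ e₀ Λ (bilConst Λ h) τ) (hinit : Iterate κ ρ q e₀ τ Λ h (u 0) 0)
    (hstep : ∀ k < K, Step κ ρ q τ (u k) (fun t => τ⁻¹ • (u (k + 1) t - u k t))) :
    ∀ k ≤ K, ∃ S, Iterate κ ρ q e₀ τ Λ h (u k) S
  | 0, _ => ⟨0, hinit⟩
  | k + 1, hk => by
    obtain ⟨S, hS⟩ := exists_iterate hκ hq hq4 hΛ hs hτ hinit hstep k (by omega)
    have hnext := hS.next (hstep k hk) hκ hq hq4 hΛ hs hτ
    rw [add_smul_inv_smul_sub (hstep k hk).pos.ne'] at hnext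
    exact ⟨_, hnext⟩

end Induction

/-- Proposition 2.3, maintenance of the arclength
parametrization: with the stability constant `c'` of the energy-stable scheme
and `τ c' ≤ 1/2`, the iterates satisfy
`max_k ‖ |(u^k)'|² - 1 ‖_{L^∞} ≤ 4 τ c_∞² e₀`, where `c_∞` is the constant in the
Sobolev inequality `‖w'‖_{L^∞} ≤ c_∞ ‖w''‖_{L²}` for `C²` periodic `w`. -/
theorem arclength_maintenance (κ ρ q e₀ : ℝ)
    (hκ : 0 < κ) (hρ : 0 ≤ ρ) (hq : 2 < q) (hq4 : q ≤ 4) (he₀ : 0 < e₀) :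
    ∃ c' : ℝ, 0 < c' ∧ ∀ (τ : ℝ) (K : ℕ) (u : ℕ → ℝ → EuclideanSpace ℝ (Fin 3)),
      0 < τ → τ * c' ≤ 1 / 2 →
      (∀ k ≤ K, ContDiff ℝ 2 (u k) ∧ Function.Periodic (u k) 1) →
      (∀ x : ℝ, ‖deriv (u 0) x‖ = 1) →
      TPe q (u 0) ≠ ⊤ →
      energyE κ ρ q (u 0) ≤ e₀ →
      (∀ k, 1 ≤ k → k ≤ K →
        (∀ x : ℝ,
          ⟪deriv (fun t => τ⁻¹ • (u k t - u (k - 1) t)) x, deriv (u (k - 1)) x⟫ = 0) ∧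
        (∀ w : ℝ → EuclideanSpace ℝ (Fin 3), ContDiff ℝ 2 w → Function.Periodic w 1 →
          (∀ x : ℝ, ⟪deriv w x, deriv (u (k - 1)) x⟫ = 0) →
          H2inner (fun t => τ⁻¹ • (u k t - u (k - 1) t)) w +
              κ * (∫ x in Ioc (0 : ℝ) 1, ⟪deriv (deriv (u k)) x, deriv (deriv w) x⟫) =
            -(ρ * deltaTP q (u (k - 1)) w))) →
      ∀ cinf : ℝ, 0 < cinf →
        (∀ w : ℝ → EuclideanSpace ℝ (Fin 3), ContDiff ℝ 2 w → Function.Periodic w 1 →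
          ∀ x : ℝ, ‖deriv w x‖ ≤
            cinf * (∫ t in Ioc (0 : ℝ) 1, ‖deriv (deriv w) t‖ ^ 2) ^ ((1 : ℝ) / 2)) →
        ∀ k ≤ K, ∀ x : ℝ, |‖deriv (u k) x‖ ^ 2 - 1| ≤ 4 * τ * cinf ^ 2 * e₀ := by
  have hΛ : e₀ ≤ κ / 2 * (2 * e₀ / κ) := by field_simp; rfl
  obtain ⟨h, hs⟩ := exists_chordScale hq (show 0 ≤ 2 * e₀ / κ by positivity) (e₀ / ρ)
  have hℓ := bilConst_pos (show 0 ≤ 2 * e₀ / κ by positivity) hs.pos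
  refine ⟨stabilityConst ρ e₀ (2 * e₀ / κ) (bilConst (2 * e₀ / κ) h),
    stabilityConst_pos hρ he₀ hℓ, ?_⟩
  intro τ K u hτ hτc hC2 hunit hfin hE hscheme cinf _ hsob k hk x
  have hper (k : ℕ) (hk : k ≤ K) : C2Periodic (u k) := ⟨(hC2 k hk).1, (hC2 k hk).2⟩
  have hsmall := smallTimeStep_of_mul_stabilityConst_le hρ he₀.le hℓ hτ.le hτc
  have hinit := Iterate.initial (τ := τ) hκ hρ (by linarith) hΛ hs (hper 0 K.zero_le) hunit hfin hE
  have hstep (k : ℕ) (hk : k < K) :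
      Step κ ρ q τ (u k) (fun t => τ⁻¹ • (u (k + 1) t - u k t)) := by
    obtain ⟨horth, heq⟩ := hscheme (k + 1) (by omega) hk
    exact step_diffQuotient hτ (hper k hk.le) (hper (k + 1) hk) horth fun w hw =>
      heq w hw.c2Periodic.smooth hw.c2Periodic.periodic hw.orth
  obtain ⟨S, hS⟩ := exists_iterate hκ hq hq4 hΛ hs hsmall hinit hstep k hk
  have hsob' : IsSobolevConst cinf :=
    isSobolevConst_of_norm_deriv_le fun w hw => hsob w hw.smooth hw.periodic
  refine (hS.abs_sub_one_le hκ.le hτ.le hsob' x).trans ?_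
  gcongr
  norm_num
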